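/- The number α₆ = √13 · ln((√13 − 1)/(√13 + 1)) has non-quadraticity measure at most 12.4085; that is, for every real κ > 12.4085, there exist only finitely many real numbers β that are roots of irreducible integer polynomials of degree at most 2 and satisfy |α₆ − β| < H(β)^(−κ), where H(β) denotes the largest absolute value of the coefficients of the irreducible integer polynomial having β as a root. -/

import Mathlib

/-- The height of an integer polynomial: the largest absolute value of its coefficients. -/
def polyHeight (P : Polynomial ℤ) : ℕ :=
  P.support.sup fun i => (P.coeff i).natAbs

/-!
Let `C ξ = 1/2 + ∑_{k ≥ 1} exp (k ξ)`, continued to a rational function of `exp ξ`, and let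
`λ = log ((√13 - 1) / (√13 + 1))`. For `F` the `n`-th normalised product of four central factorial
polynomials, the values at `λ` of `F(d/dξ) C`, `F'(d/dξ) C`, `F''(d/dξ) C` lie in `√13 ℚ`, `ℚ`,
`√13 ℚ`, and by Leibniz's rule `F(d/dξ) (ξ C)` and `F(d/dξ) (ξ² C)` are linear forms in them with
coefficients in `ℤ[λ]`. After scaling these become integer linear forms `α a + b` and
`α² a + 2 α b + 13 c` in the powers of `α = √13 λ`.

The forms are exponentially small because `ξ C` has no pole at `0`: central factorials of `d/dξ` are
contour integrals against powers of `2 sinh (η / 2)`, and the contour may now go around the origin.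
Their common denominator is estimated by counting, for each prime `p`, the multiples of `p` among
the factors of the translated central factorials; the prime number theorem, obtained here from the
Wiener-Ikehara theorem, turns the count into an exponential rate.

If `A α² + B α + D` is tiny, then `a (A α² + B α + D)` is close to an integer, so for each large `n`
it is either very small or at least `1/2`. The first alternative cannot hold for every large `n`,
since the series `F(d/dξ) C` at `λ` decays at most at the rate `10`, more slowly than the forms. At
the first `n` where the second holds, the size of `a` bounds `|A α² + B α + D|` below by a constant
times the height to the power `-(53.2 + 5.33) / (10.5 - 5.33)`, where `53.2`, `5.33` and `10.5` are
exponential rates for the growth of the series, for the growth of the denominator after scaling, and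
for the decay of the forms.
-/

section FejerKernel

open MeasureTheory Set intervalIntegral

/-- The Fejér kernel `(sin (x / 2) / (x / 2)) ^ 2 = 2 * (1 - cos x) / x ^ 2`, the Fourier transform
of the tent function `1 - |t|` on `[-1, 1]`; `Real.sinc` supplies the value `1` at `0`. -/
noncomputable def fejerKernel (x : ℝ) : ℝ := Real.sinc (x / 2) ^ 2

lemma fejerKernel_nonneg (x : ℝ) : 0 ≤ fejerKernel x := sq_nonneg _

lemma continuous_fejerKernel : Continuous fejerKernel :=
  (Real.continuous_sinc.comp (continuous_id.div_const 2)).pow 2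

lemma fejerKernel_eq_cos {x : ℝ} (hx : x ≠ 0) :
    fejerKernel x = 2 * (1 - Real.cos x) / x ^ 2 := by
  have hcos : Real.cos x = 1 - 2 * Real.sin (x / 2) ^ 2 := by
    rw [← Real.cos_two_mul_eq_one_sub, mul_div_cancel₀ x two_ne_zero]
  rw [fejerKernel, Real.sinc_of_ne_zero (by positivity), hcos]
  field_simp
  ring

lemma fejerKernel_le (x : ℝ) : fejerKernel x ≤ 5 * (1 + x ^ 2)⁻¹ := by
  rcases eq_or_ne x 0 with rfl | hx
  · simp [fejerKernel]
  · have h2 := Real.one_sub_sq_div_two_le_cos (x := x)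
    have h3 := Real.neg_one_le_cos x
    rw [fejerKernel_eq_cos hx, ← div_eq_mul_inv, div_le_div_iff₀ (by positivity) (by positivity)]
    nlinarith

lemma integrable_fejerKernel : Integrable fejerKernel := by
  refine (integrable_inv_one_add_sq.const_mul 5).mono'
    continuous_fejerKernel.aestronglyMeasurable (ae_of_all _ fun x ↦ ?_)
  rw [Real.norm_of_nonneg (fejerKernel_nonneg x)]
  exact fejerKernel_le x

lemma integral_fejerKernel_pos : 0 < ∫ x, fejerKernel x :=
  integral_pos_of_integrable_nonneg_nonzero (x := 0) continuous_fejerKernel integrable_fejerKernel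
    fejerKernel_nonneg (by simp [fejerKernel])

lemma integral_one_sub_mul_cexp {y : ℂ} (hy : y ≠ 0) :
    ∫ t in (0 : ℝ)..1, (1 - (t : ℂ)) * Complex.exp (t * y) =
      (Complex.exp y - 1 - y) / y ^ 2 := by
  have hexp (t : ℝ) :
      HasDerivAt (fun t : ℝ ↦ Complex.exp (t * y)) (Complex.exp (t * y) * (1 * y)) t :=
    ((hasDerivAt_id t).ofReal_comp.mul_const y).cexp
  have hprim (t : ℝ) : HasDerivAt
      (fun t : ℝ ↦ (1 - (t : ℂ)) * Complex.exp (t * y) / y + Complex.exp (t * y) / y ^ 2)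
      ((1 - (t : ℂ)) * Complex.exp (t * y)) t := by
    refine (((((hasDerivAt_id t).ofReal_comp.const_sub 1).mul (hexp t)).div_const y).add
      ((hexp t).div_const (y ^ 2))).congr_deriv ?_
    simp only [id_eq, Complex.ofReal_one]
    field_simp
    ring
  rw [integral_eq_sub_of_hasDerivAt (fun t _ ↦ hprim t)
    (Continuous.intervalIntegrable (by fun_prop) _ _)]
  simp only [Complex.ofReal_one, Complex.ofReal_zero, sub_self, zero_mul, zero_div, one_mul,
    sub_zero, Complex.exp_zero]
  field_simp
  ring

lemma integral_tent_mul_cexp {x : ℝ} (hx : x ≠ 0) :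
    ∫ t in (-1 : ℝ)..1, ((1 - |t| : ℝ) : ℂ) * Complex.exp (Complex.I * t * x) = fejerKernel x := by
  have hcont : Continuous fun t : ℝ ↦ ((1 - |t| : ℝ) : ℂ) * Complex.exp (Complex.I * t * x) := by
    fun_prop
  have hI : Complex.I * x ≠ 0 := mul_ne_zero Complex.I_ne_zero (by exact_mod_cast hx)
  have hhalf {y : ℂ} (hy : y ≠ 0) :
      ∫ t in (0 : ℝ)..1, ((1 - |t| : ℝ) : ℂ) * Complex.exp (t * y) =
        (Complex.exp y - 1 - y) / y ^ 2 := by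
    rw [← integral_one_sub_mul_cexp hy]
    refine integral_congr fun t ht ↦ ?_
    rw [uIcc_of_le zero_le_one] at ht
    simp only [abs_of_nonneg ht.1, Complex.ofReal_sub, Complex.ofReal_one]
  have hright : ∫ t in (0 : ℝ)..1, ((1 - |t| : ℝ) : ℂ) * Complex.exp (Complex.I * t * x) =
      (Complex.exp (Complex.I * x) - 1 - Complex.I * x) / (Complex.I * x) ^ 2 := by
    simpa only [mul_left_comm, mul_assoc] using hhalf hI
  have hleft : ∫ t in (-1 : ℝ)..0, ((1 - |t| : ℝ) : ℂ) * Complex.exp (Complex.I * t * x) =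
      (Complex.exp (-(Complex.I * x)) - 1 - -(Complex.I * x)) / (-(Complex.I * x)) ^ 2 := by
    rw [← hhalf (neg_ne_zero.2 hI), ← neg_zero, ← integral_comp_neg, neg_zero]
    refine integral_congr fun t _ ↦ ?_
    simp only [abs_neg, Complex.ofReal_neg]
    congr 2
    ring
  have hcos : (Real.cos x : ℂ) =
      (Complex.exp (Complex.I * x) + Complex.exp (-(Complex.I * x))) / 2 := by
    rw [Complex.ofReal_cos, Complex.cos, mul_comm (x : ℂ), neg_mul, mul_comm (x : ℂ)]
  rw [← integral_add_adjacent_intervals (b := 0) (hcont.intervalIntegrable _ _)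
    (hcont.intervalIntegrable _ _), hleft, hright, fejerKernel_eq_cos hx]
  push_cast
  rw [← Complex.ofReal_cos, hcos, neg_sq, mul_pow, Complex.I_sq]
  have hx' : (x : ℂ) ≠ 0 := by exact_mod_cast hx
  field_simp
  ring

lemma norm_tent_mul_cexp_le {t : ℝ} (ht : t ∈ Ioc (-1 : ℝ) 1) (x : ℝ) :
    ‖((1 - |t| : ℝ) : ℂ) * Complex.exp (Complex.I * t * x)‖ ≤ 1 := by
  have hexp : ‖Complex.exp (Complex.I * t * x)‖ = 1 := by simp [Complex.norm_exp]
  rw [norm_mul, hexp, mul_one, Complex.norm_real, Real.norm_eq_abs, abs_le]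
  have ht1 : |t| ≤ 1 := abs_le.2 ⟨ht.1.le, ht.2⟩
  constructor <;> linarith [abs_nonneg t]

end FejerKernel

section WienerIkehara

open MeasureTheory Filter Topology Set

variable {g : ℝ → ℝ} {B l : ℝ} {H : ℂ → ℂ}

lemma integrable_fejerKernel_comp_mul_sub (hl : 0 < l) (v : ℝ) :
    Integrable fun u ↦ fejerKernel (l * (v - u)) :=
  ((integrable_comp_mul_left_iff fejerKernel hl.ne').2 integrable_fejerKernel).comp_sub_left v

lemma integrable_tent_mul_laplace (hg : Measurable g) (hB : ∀ u, |g u| ≤ B) {ε : ℝ} (hε : 0 < ε)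
    (l v : ℝ) :
    Integrable (Function.uncurry fun t u : ℝ ↦
        ((1 - |t| : ℝ) : ℂ) * Complex.exp (Complex.I * t * (l * v : ℝ)) *
          ((g u : ℂ) * Complex.exp (-(ε + Complex.I * (l * t : ℝ)) * u)))
      ((volume.restrict (Ioc (-1 : ℝ) 1)).prod (volume.restrict (Ioi (0 : ℝ)))) := by
  have hdom : Integrable (fun z : ℝ × ℝ ↦ B * Real.exp (-ε * z.2))
      ((volume.restrict (Ioc (-1 : ℝ) 1)).prod (volume.restrict (Ioi (0 : ℝ)))) :=
    Integrable.mul_prod (f := fun _ : ℝ ↦ B) (g := fun u : ℝ ↦ Real.exp (-ε * u))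
      (integrable_const _) (integrableOn_exp_mul_Ioi (by linarith) 0)
  refine hdom.mono' (Measurable.aestronglyMeasurable ?_) ?_
  · simp only [Function.uncurry_def]
    fun_prop
  · rw [Measure.prod_restrict]
    refine (ae_restrict_mem (measurableSet_Ioc.prod measurableSet_Ioi)).mono ?_
    rintro ⟨t, u⟩ ⟨ht, -⟩
    have hre : (-(ε + Complex.I * (l * t : ℝ)) * u).re = -ε * u := by simp
    simp only [Function.uncurry]
    rw [norm_mul, norm_mul (g u : ℂ), Complex.norm_exp, hre, Complex.norm_real, Real.norm_eq_abs]
    calc _ ≤ 1 * (B * Real.exp (-ε * u)) := by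
          gcongr
          exacts [norm_tent_mul_cexp_le ht _, hB u]
      _ = B * Real.exp (-ε * u) := one_mul _

lemma integral_tent_mul_laplace (hg : Measurable g) (hB : ∀ u, |g u| ≤ B)
    (hH : ∀ w : ℂ, 0 < w.re → ∫ u in Ioi (0 : ℝ), (g u : ℂ) * Complex.exp (-w * u) = H w)
    (hl : 0 < l) (v : ℝ) {ε : ℝ} (hε : 0 < ε) :
    ∫ t in (-1 : ℝ)..1, ((1 - |t| : ℝ) : ℂ) * Complex.exp (Complex.I * t * (l * v : ℝ)) *
      H (ε + Complex.I * (l * t : ℝ)) =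
    ∫ u in Ioi (0 : ℝ), ((g u * Real.exp (-ε * u) * fejerKernel (l * (v - u)) : ℝ) : ℂ) := by
  have hHε (t : ℝ) : H (ε + Complex.I * (l * t : ℝ)) = ∫ u in Ioi (0 : ℝ),
      (g u : ℂ) * Complex.exp (-(ε + Complex.I * (l * t : ℝ)) * u) :=
    (hH _ (by simpa using hε)).symm
  rw [intervalIntegral.integral_of_le (by norm_num)]
  simp_rw [hHε, ← integral_const_mul]
  rw [integral_integral_swap (integrable_tent_mul_laplace hg hB hε l v)]
  refine integral_congr_ae ?_
  filter_upwards [ae_restrict_of_ae (Measure.ae_ne volume v)] with u hu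
  push_cast
  rw [← integral_tent_mul_cexp (mul_ne_zero hl.ne' (sub_ne_zero.2 hu.symm)),
    intervalIntegral.integral_of_le (by norm_num), ← integral_const_mul]
  refine integral_congr_ae (ae_of_all _ fun t ↦ ?_)
  have hexp : Complex.exp (Complex.I * t * (l * v : ℝ)) *
        Complex.exp (-(ε + Complex.I * (l * t : ℝ)) * u) =
      Complex.exp (-ε * u) * Complex.exp (Complex.I * t * (l * (v - u) : ℝ)) := by
    rw [← Complex.exp_add, ← Complex.exp_add]
    congr 1
    push_cast
    ring
  push_cast at hexp ⊢
  linear_combination (1 - ((|t| : ℝ) : ℂ)) * (g u : ℂ) * hexp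

lemma tendsto_integral_tent_mul (hH : ContinuousOn H {w | 0 ≤ w.re}) (l v : ℝ) :
    Tendsto (fun ε : ℝ ↦ ∫ t in (-1 : ℝ)..1, ((1 - |t| : ℝ) : ℂ) *
        Complex.exp (Complex.I * t * (l * v : ℝ)) * H (ε + Complex.I * (l * t : ℝ))) (𝓝[>] 0)
      (𝓝 (∫ t in (-1 : ℝ)..1, ((1 - |t| : ℝ) : ℂ) * Complex.exp (Complex.I * t * (l * v : ℝ)) *
        H (Complex.I * (l * t : ℝ)))) := by
  have hcont : ContinuousOn (fun z : ℝ × ℝ ↦ H (z.1 + Complex.I * (l * z.2 : ℝ)))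
      (Icc 0 1 ×ˢ Icc (-1) 1) :=
    hH.comp (by fun_prop) fun z hz ↦ by simpa using hz.1.1
  obtain ⟨C, hC⟩ := (isCompact_Icc.prod isCompact_Icc).exists_bound_of_continuousOn hcont
  have hmem : ∀ᶠ ε : ℝ in 𝓝[>] 0, ε ∈ Ioo (0 : ℝ) 1 := Ioo_mem_nhdsGT one_pos
  refine intervalIntegral.tendsto_integral_filter_of_dominated_convergence (fun _ ↦ C) ?_ ?_
    intervalIntegrable_const ?_
  · filter_upwards [hmem] with ε hε
    refine ContinuousOn.aestronglyMeasurable (ContinuousOn.mul (by fun_prop) ?_) measurableSet_uIoc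
    exact hH.comp (by fun_prop) fun t _ ↦ by simpa using hε.1.le
  · filter_upwards [hmem] with ε hε
    refine ae_of_all _ fun t ht ↦ ?_
    rw [uIoc_of_le (by norm_num)] at ht
    calc _ = ‖((1 - |t| : ℝ) : ℂ) * Complex.exp (Complex.I * t * (l * v : ℝ))‖ *
          ‖H (ε + Complex.I * (l * t : ℝ))‖ := norm_mul _ _
      _ ≤ 1 * C := by
          gcongr
          exacts [norm_tent_mul_cexp_le ht _, hC (ε, t) ⟨⟨hε.1.le, hε.2.le⟩, ht.1.le, ht.2⟩]
      _ = C := one_mul C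
  · refine ae_of_all _ fun t _ ↦ Tendsto.const_mul _ ?_
    have hlim : ContinuousWithinAt H {w | 0 ≤ w.re} (Complex.I * (l * t : ℝ)) := hH _ (by simp)
    refine hlim.tendsto.comp (tendsto_nhdsWithin_of_tendsto_nhds_of_eventually_within _ ?_ ?_)
    · have hadd : Continuous fun ε : ℝ ↦ (ε : ℂ) + Complex.I * (l * t : ℝ) := by fun_prop
      simpa using (hadd.tendsto 0).mono_left nhdsWithin_le_nhds
    · filter_upwards [hmem] with ε hε
      simpa using hε.1.le

lemma tendsto_integral_mul_exp_mul_fejerKernel (hg : Measurable g) (hB : ∀ u, |g u| ≤ B)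
    (hl : 0 < l) (v : ℝ) :
    Tendsto (fun ε : ℝ ↦ ∫ u in Ioi (0 : ℝ),
        ((g u * Real.exp (-ε * u) * fejerKernel (l * (v - u)) : ℝ) : ℂ)) (𝓝[>] 0)
      (𝓝 (∫ u in Ioi (0 : ℝ), ((g u * fejerKernel (l * (v - u)) : ℝ) : ℂ))) := by
  have hK : Measurable fejerKernel := continuous_fejerKernel.measurable
  refine tendsto_integral_filter_of_dominated_convergence
    (fun u ↦ B * fejerKernel (l * (v - u)))
    (.of_forall fun ε ↦ Measurable.aestronglyMeasurable (by fun_prop)) ?_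
    ((integrable_fejerKernel_comp_mul_sub hl v).const_mul _).integrableOn (ae_of_all _ fun u ↦ ?_)
  · filter_upwards [self_mem_nhdsWithin] with ε hε
    filter_upwards [ae_restrict_mem measurableSet_Ioi] with u hu
    have hexp : Real.exp (-ε * u) ≤ 1 :=
      Real.exp_le_one_iff.2 (by nlinarith [mem_Ioi.1 hε, mem_Ioi.1 hu])
    rw [Complex.norm_real, Real.norm_eq_abs, abs_mul, abs_mul, abs_of_nonneg (fejerKernel_nonneg _),
      Real.abs_exp]
    have hB0 : 0 ≤ B := (abs_nonneg _).trans (hB u)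
    calc _ ≤ B * 1 * fejerKernel (l * (v - u)) := by
          gcongr
          exacts [fejerKernel_nonneg _, hB u]
      _ = B * fejerKernel (l * (v - u)) := by rw [mul_one]
  · have hcont : Continuous fun ε : ℝ ↦
        ((g u * Real.exp (-ε * u) * fejerKernel (l * (v - u)) : ℝ) : ℂ) := by fun_prop
    simpa using (hcont.tendsto 0).mono_left nhdsWithin_le_nhds

lemma integral_tent_mul_boundary (hg : Measurable g) (hB : ∀ u, |g u| ≤ B)
    (hH : ContinuousOn H {w | 0 ≤ w.re})
    (hlap : ∀ w : ℂ, 0 < w.re → ∫ u in Ioi (0 : ℝ), (g u : ℂ) * Complex.exp (-w * u) = H w)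
    (hl : 0 < l) (v : ℝ) :
    ∫ t in (-1 : ℝ)..1, ((1 - |t| : ℝ) : ℂ) * Complex.exp (Complex.I * t * (l * v : ℝ)) *
      H (Complex.I * (l * t : ℝ)) =
    ((∫ u in Ioi (0 : ℝ), g u * fejerKernel (l * (v - u)) : ℝ) : ℂ) := by
  rw [← integral_complex_ofReal]
  refine tendsto_nhds_unique (tendsto_integral_tent_mul hH l v)
    ((tendsto_integral_mul_exp_mul_fejerKernel hg hB hl v).congr' ?_)
  filter_upwards [self_mem_nhdsWithin] with ε hε
  exact (integral_tent_mul_laplace hg hB hlap hl v hε).symm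

-- The left side of `integral_tent_mul_boundary` is a Fourier coefficient of a compactly supported
-- continuous function, so the Riemann-Lebesgue lemma applies.
lemma tendsto_integral_mul_fejerKernel (hg : Measurable g) (hB : ∀ u, |g u| ≤ B)
    (hH : ContinuousOn H {w | 0 ≤ w.re})
    (hlap : ∀ w : ℂ, 0 < w.re → ∫ u in Ioi (0 : ℝ), (g u : ℂ) * Complex.exp (-w * u) = H w)
    (hl : 0 < l) :
    Tendsto (fun v ↦ ∫ u in Ioi (0 : ℝ), g u * fejerKernel (l * (v - u))) atTop (𝓝 0) := by
  have hRL := Real.tendsto_integral_exp_smul_cocompact ((Ioc (-1 : ℝ) 1).indicator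
    fun t ↦ ((1 - |t| : ℝ) : ℂ) * H (Complex.I * (l * t : ℝ)))
  have hfreq : Tendsto (fun v : ℝ ↦ -(l / (2 * Real.pi) * v)) atTop (cocompact ℝ) :=
    (tendsto_neg_atTop_atBot.comp (tendsto_id.const_mul_atTop (by positivity))).mono_right
      atBot_le_cocompact
  have hofReal : Tendsto (fun v ↦ ((∫ u in Ioi (0 : ℝ), g u * fejerKernel (l * (v - u)) : ℝ) : ℂ))
      atTop (𝓝 0) := by
    refine (hRL.comp hfreq).congr fun v ↦ ?_
    rw [← integral_tent_mul_boundary hg hB hH hlap hl,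
      intervalIntegral.integral_of_le (by norm_num), ← integral_indicator measurableSet_Ioc]
    refine integral_congr_ae (ae_of_all _ fun t ↦ ?_)
    have hphase : ((2 * Real.pi * -(t * -(l / (2 * Real.pi) * v)) : ℝ) : ℂ) * Complex.I =
        Complex.I * t * (l * v : ℝ) := by
      have hpi : (Real.pi : ℂ) ≠ 0 := by exact_mod_cast Real.pi_ne_zero
      push_cast
      field_simp
    by_cases ht : t ∈ Ioc (-1 : ℝ) 1
    · simp only [indicator_of_mem ht, Circle.smul_def, Real.fourierChar_apply, smul_eq_mul, hphase]
      ring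
    · simp only [indicator_of_notMem ht, smul_zero]
  simpa [Function.comp_def] using (Complex.continuous_re.tendsto 0).comp hofReal

lemma integral_comp_mul_sub (hl : 0 < l) (v : ℝ) (G : ℝ → ℝ) :
    ∫ u, G (l * (v - u)) = l⁻¹ * ∫ w, G w := by
  rw [integral_sub_left_eq_self (fun u ↦ G (l * u)), Measure.integral_comp_mul_left,
    abs_of_pos (inv_pos.2 hl), smul_eq_mul]

end WienerIkehara

section TauberianTheorem

open MeasureTheory Filter Topology Set

variable {f : ℝ → ℝ} {B : ℝ}

lemma tendsto_integral_mul_fejerKernel_comp_sub_div (hf : Measurable f) (hf0 : ∀ u, 0 ≤ f u)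
    (hB : ∀ u, f u ≤ B) (hsupp : ∀ u ≤ 0, f u = 0) {l : ℝ} (hl : 0 < l)
    (hlim : Tendsto (fun v ↦ ∫ u in Ioi (0 : ℝ), (f u - 1) * fejerKernel (l * (v - u)))
      atTop (𝓝 0)) :
    Tendsto (fun v ↦ ∫ w, f (v - w / l) * fejerKernel w) atTop (𝓝 (∫ w, fejerKernel w)) := by
  have hIio : Tendsto (fun v : ℝ ↦ ∫ w in Iio (l * v), fejerKernel w) atTop
      (𝓝 (∫ w, fejerKernel w)) :=
    (aecover_Iio (tendsto_id.const_mul_atTop hl)).integral_tendsto_of_countably_generated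
      integrable_fejerKernel
  have hsum := (hlim.const_mul l).add hIio
  rw [mul_zero, zero_add] at hsum
  refine hsum.congr fun v ↦ ?_
  have hK := integrable_fejerKernel_comp_mul_sub hl v
  have hfK : ∫ u in Ioi (0 : ℝ), f u * fejerKernel (l * (v - u)) =
      l⁻¹ * ∫ w, f (v - w / l) * fejerKernel w := by
    rw [setIntegral_eq_integral_of_forall_compl_eq_zero fun u hu ↦ by
      rw [hsupp u (not_lt.1 hu), zero_mul], ← integral_comp_mul_sub hl v]
    refine integral_congr_ae (ae_of_all _ fun u ↦ ?_)
    have hu : v - l * (v - u) / l = u := by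
      field_simp
      ring
    simp only [hu]
  have h1K : ∫ u in Ioi (0 : ℝ), fejerKernel (l * (v - u)) =
      l⁻¹ * ∫ w in Iio (l * v), fejerKernel w := by
    rw [← integral_indicator measurableSet_Iio, ← integral_comp_mul_sub hl v,
      ← integral_indicator measurableSet_Ioi]
    refine integral_congr_ae (ae_of_all _ fun u ↦ ?_)
    have hiff : l * (v - u) ∈ Iio (l * v) ↔ u ∈ Ioi 0 := by
      rw [mem_Iio, mem_Ioi, mul_lt_mul_iff_right₀ hl, sub_lt_self_iff]
    beta_reduce
    by_cases hu : u ∈ Ioi (0 : ℝ)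
    · rw [indicator_of_mem hu, indicator_of_mem (hiff.2 hu)]
    · rw [indicator_of_notMem hu, indicator_of_notMem (mt hiff.1 hu)]
  have hsub : ∫ u in Ioi (0 : ℝ), (f u - 1) * fejerKernel (l * (v - u)) =
      (∫ u in Ioi (0 : ℝ), f u * fejerKernel (l * (v - u))) -
        ∫ u in Ioi (0 : ℝ), fejerKernel (l * (v - u)) := by
    simp_rw [sub_one_mul]
    refine integral_sub (hK.bdd_mul (c := B) hf.aestronglyMeasurable ?_).integrableOn
      hK.integrableOn
    exact ae_of_all _ fun u ↦ by rw [Real.norm_of_nonneg (hf0 u)]; exact hB u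
  rw [hsub, hfK, h1K]
  field_simp
  ring

variable {K : ℝ → ℝ}

lemma measurable_of_monotone_exp_mul (hmono : Monotone fun u ↦ Real.exp u * f u) :
    Measurable f := by
  have hf : f = fun u ↦ Real.exp (-u) * (Real.exp u * f u) := by
    ext u
    rw [← mul_assoc, ← Real.exp_add, neg_add_cancel, Real.exp_zero, one_mul]
  rw [hf]
  exact (Real.measurable_exp.comp measurable_neg).mul hmono.measurable

lemma le_exp_mul_of_monotone_exp_mul (hf0 : ∀ u, 0 ≤ f u)
    (hmono : Monotone fun u ↦ Real.exp u * f u) {u v d : ℝ} (huv : u ≤ v) (hd : v - u ≤ d) :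
    f u ≤ Real.exp d * f v := by
  refine le_of_mul_le_mul_left ?_ (Real.exp_pos u)
  calc Real.exp u * f u ≤ Real.exp v * f v := hmono huv
    _ ≤ Real.exp (u + d) * f v := by
      gcongr
      exacts [hf0 v, by linarith]
    _ = Real.exp u * (Real.exp d * f v) := by rw [Real.exp_add, mul_assoc]

lemma integrable_comp_sub_div_mul (hf : Measurable f) (hf0 : ∀ u, 0 ≤ f u) (hB : ∀ u, f u ≤ B)
    (hK : Integrable K) (l v : ℝ) : Integrable fun w ↦ f (v - w / l) * K w :=
  hK.bdd_mul (c := B) (Measurable.aestronglyMeasurable (by fun_prop))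
    (ae_of_all _ fun w ↦ by rw [Real.norm_of_nonneg (hf0 _)]; exact hB _)

lemma mul_setIntegral_le_integral_comp_sub_div (hf0 : ∀ u, 0 ≤ f u) (hB : ∀ u, f u ≤ B)
    (hmono : Monotone fun u ↦ Real.exp u * f u) (hK0 : ∀ w, 0 ≤ K w) (hK : Integrable K)
    {l : ℝ} (hl : 0 < l) (d v : ℝ) :
    f v * ∫ w in Icc (-(l * d)) (l * d), K w ≤
      Real.exp (2 * d) * ∫ w, f (v + d - w / l) * K w := by
  have hint := (integrable_comp_sub_div_mul (measurable_of_monotone_exp_mul hmono) hf0 hB hK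
    l (v + d)).const_mul (Real.exp (2 * d))
  rw [← integral_const_mul, ← integral_const_mul]
  calc ∫ w in Icc (-(l * d)) (l * d), f v * K w
      ≤ ∫ w in Icc (-(l * d)) (l * d), Real.exp (2 * d) * (f (v + d - w / l) * K w) := by
        refine setIntegral_mono_on (hK.const_mul _).integrableOn hint.integrableOn
          measurableSet_Icc fun w hw ↦ ?_
        have hw1 : -d ≤ w / l := by rw [le_div_iff₀ hl]; linarith [hw.1]
        have hw2 : w / l ≤ d := by rw [div_le_iff₀ hl]; linarith [hw.2]
        rw [← mul_assoc]
        exact mul_le_mul_of_nonneg_right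
          (le_exp_mul_of_monotone_exp_mul hf0 hmono (by linarith) (by linarith)) (hK0 w)
    _ ≤ ∫ w, Real.exp (2 * d) * (f (v + d - w / l) * K w) :=
        setIntegral_le_integral hint (ae_of_all _ fun w ↦ by
          have := hf0 (v + d - w / l)
          have := hK0 w
          positivity)

lemma integral_comp_sub_div_le_mul_integral (hf0 : ∀ u, 0 ≤ f u) (hB : ∀ u, f u ≤ B)
    (hmono : Monotone fun u ↦ Real.exp u * f u) (hK0 : ∀ w, 0 ≤ K w) (hK : Integrable K)
    {l : ℝ} (hl : 0 < l) (d v : ℝ) :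
    ∫ w, f (v - d - w / l) * K w ≤ Real.exp (2 * d) * f v * (∫ w, K w) +
      B * ((∫ w, K w) - ∫ w in Icc (-(l * d)) (l * d), K w) := by
  have hint := integrable_comp_sub_div_mul (measurable_of_monotone_exp_mul hmono) hf0 hB hK
    l (v - d)
  have hcompl : (∫ w, K w) - ∫ w in Icc (-(l * d)) (l * d), K w =
      ∫ w in (Icc (-(l * d)) (l * d))ᶜ, K w := by
    rw [sub_eq_iff_eq_add', integral_add_compl measurableSet_Icc hK]
  rw [← integral_add_compl (measurableSet_Icc (a := -(l * d)) (b := l * d)) hint, hcompl]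
  refine add_le_add ?_ ?_
  · calc ∫ w in Icc (-(l * d)) (l * d), f (v - d - w / l) * K w
        ≤ ∫ w in Icc (-(l * d)) (l * d), Real.exp (2 * d) * f v * K w := by
          refine setIntegral_mono_on hint.integrableOn (hK.const_mul _).integrableOn
            measurableSet_Icc fun w hw ↦ ?_
          have hw1 : -d ≤ w / l := by rw [le_div_iff₀ hl]; linarith [hw.1]
          have hw2 : w / l ≤ d := by rw [div_le_iff₀ hl]; linarith [hw.2]
          exact mul_le_mul_of_nonneg_right
            (le_exp_mul_of_monotone_exp_mul hf0 hmono (by linarith) (by linarith)) (hK0 w)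
      _ = Real.exp (2 * d) * f v * ∫ w in Icc (-(l * d)) (l * d), K w := integral_const_mul _ _
      _ ≤ Real.exp (2 * d) * f v * ∫ w, K w :=
          mul_le_mul_of_nonneg_left (setIntegral_le_integral hK (ae_of_all _ hK0))
            (mul_nonneg (Real.exp_pos _).le (hf0 v))
  · rw [← integral_const_mul]
    exact setIntegral_mono_on hint.integrableOn (hK.const_mul _).integrableOn
      measurableSet_Icc.compl fun w _ ↦ mul_le_mul_of_nonneg_right (hB _) (hK0 w)

lemma eventually_exp_two_mul_lt {a : ℝ} (ha : 1 < a) :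
    ∀ᶠ d : ℝ in 𝓝[>] 0, Real.exp (2 * d) < a := by
  have hcont : Continuous fun d : ℝ ↦ Real.exp (2 * d) := by fun_prop
  refine (hcont.tendsto 0).mono_left nhdsWithin_le_nhds |>.eventually_lt_const ?_
  simpa using ha

lemma tendsto_one_of_tendsto_integral_comp_sub_div (hf0 : ∀ u, 0 ≤ f u) (hB : ∀ u, f u ≤ B)
    (hmono : Monotone fun u ↦ Real.exp u * f u) (hK0 : ∀ w, 0 ≤ K w) (hK : Integrable K)
    (hKpos : 0 < ∫ w, K w)
    (hlim : ∀ l > 0, Tendsto (fun v ↦ ∫ w, f (v - w / l) * K w) atTop (𝓝 (∫ w, K w))) :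
    Tendsto f atTop (𝓝 1) := by
  set c := ∫ w, K w
  have hIcc {d : ℝ} (hd : 0 < d) :
      Tendsto (fun l : ℝ ↦ ∫ w in Icc (-(l * d)) (l * d), K w) atTop (𝓝 c) := by
    have htop : Tendsto (fun l : ℝ ↦ l * d) atTop atTop := tendsto_id.atTop_mul_const hd
    exact (aecover_Icc (tendsto_neg_atTop_atBot.comp htop)
      htop).integral_tendsto_of_countably_generated hK
  refine tendsto_order.2 ⟨fun a ha ↦ ?_, fun b hb ↦ ?_⟩
  · obtain ⟨d, had, hd⟩ : ∃ d : ℝ, Real.exp (2 * d) * a < 1 ∧ 0 < d := by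
      rcases le_or_gt a 0 with ha0 | ha0
      · exact ⟨1, by nlinarith [Real.exp_pos (2 * 1)], one_pos⟩
      · obtain ⟨d, hd, hd0⟩ := ((eventually_exp_two_mul_lt (one_lt_inv₀ ha0 |>.2 ha)).and
          self_mem_nhdsWithin).exists
        exact ⟨d, by rwa [← lt_inv_mul_iff₀' ha0, mul_one], hd0⟩
    have htail : Tendsto (fun l : ℝ ↦ Real.exp (2 * d) * a * c +
        B * (c - ∫ w in Icc (-(l * d)) (l * d), K w)) atTop
        (𝓝 (Real.exp (2 * d) * a * c + B * (c - c))) :=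
      tendsto_const_nhds.add ((tendsto_const_nhds.sub (hIcc hd)).const_mul B)
    have hlt : Real.exp (2 * d) * a * c + B * (c - c) < c := by nlinarith
    obtain ⟨l, hl, hl0⟩ := ((htail.eventually_lt_const hlt).and
      (eventually_gt_atTop 0)).exists
    filter_upwards [((hlim l hl0).comp (tendsto_atTop_add_const_right _ (-d)
      tendsto_id)).eventually_const_lt hl] with v hv
    have hle := hv.trans_le
      (integral_comp_sub_div_le_mul_integral hf0 hB hmono hK0 hK hl0 d v)
    refine lt_of_mul_lt_mul_left (a := Real.exp (2 * d) * c) ?_ (by positivity)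
    linarith
  · obtain ⟨d, hbd, hd⟩ := ((eventually_exp_two_mul_lt hb).and self_mem_nhdsWithin).exists
    obtain ⟨l, ⟨hl, hpos⟩, hl0⟩ := ((((hIcc hd).const_mul b).eventually_const_lt
      (mul_lt_mul_of_pos_right hbd hKpos)).and ((hIcc hd).eventually_const_lt hKpos)).and
      (eventually_gt_atTop 0) |>.exists
    filter_upwards [(((hlim l hl0).comp (tendsto_atTop_add_const_right _ d
      tendsto_id)).const_mul (Real.exp (2 * d))).eventually_lt_const hl] with v hv
    exact lt_of_mul_lt_mul_right
      ((mul_setIntegral_le_integral_comp_sub_div hf0 hB hmono hK0 hK hl0 d v).trans_lt hv) hpos.le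

theorem tendsto_one_of_continuousOn_laplace {H : ℂ → ℂ} (hf0 : ∀ u, 0 ≤ f u) (hB : ∀ u, f u ≤ B)
    (hsupp : ∀ u ≤ 0, f u = 0) (hmono : Monotone fun u ↦ Real.exp u * f u)
    (hH : ContinuousOn H {w | 0 ≤ w.re})
    (hlap : ∀ w : ℂ, 0 < w.re →
      ∫ u in Ioi (0 : ℝ), ((f u - 1 : ℝ) : ℂ) * Complex.exp (-w * u) = H w) :
    Tendsto f atTop (𝓝 1) := by
  have hf := measurable_of_monotone_exp_mul hmono
  have habs (u : ℝ) : |f u - 1| ≤ B + 1 := by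
    rw [abs_le]
    constructor <;> linarith [hf0 u, hB u]
  exact tendsto_one_of_tendsto_integral_comp_sub_div hf0 hB hmono fejerKernel_nonneg
    integrable_fejerKernel integral_fejerKernel_pos fun l hl ↦
    tendsto_integral_mul_fejerKernel_comp_sub_div hf hf0 hB hsupp hl
      (tendsto_integral_mul_fejerKernel (hf.sub_const 1) habs hH hlap hl)

end TauberianTheorem

section PrimeNumberTheorem

open MeasureTheory Filter Topology Set ArithmeticFunction Chebyshev

/-- Chebyshev's function in logarithmic scale, `ψ (exp u) / exp u`, to which the Wiener-Ikehara
theorem is applied. -/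
noncomputable def psiRatio (u : ℝ) : ℝ := psi (Real.exp u) * Real.exp (-u)

lemma psiRatio_nonneg (u : ℝ) : 0 ≤ psiRatio u :=
  mul_nonneg (psi_nonneg _) (Real.exp_pos _).le

lemma psiRatio_le (u : ℝ) : psiRatio u ≤ Real.log 4 + 4 := by
  rw [psiRatio, Real.exp_neg, ← div_eq_mul_inv, div_le_iff₀ (Real.exp_pos u)]
  exact psi_le_const_mul_self (Real.exp_pos u).le

lemma psiRatio_eq_zero {u : ℝ} (hu : u ≤ 0) : psiRatio u = 0 := by
  rw [psiRatio, psi_eq_zero_of_le_one (Real.exp_le_one_iff.2 hu), zero_mul]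

lemma monotone_exp_mul_psiRatio : Monotone fun u ↦ Real.exp u * psiRatio u := by
  have heq : (fun u ↦ Real.exp u * psiRatio u) = psi ∘ Real.exp := by
    ext u
    rw [psiRatio, mul_left_comm, ← Real.exp_add, add_neg_cancel, Real.exp_zero, mul_one,
      Function.comp_apply]
  exact heq ▸ psi_mono.comp Real.exp_monotone

lemma LSeries_vonMangoldt_eq_mul_integral_psi {s : ℂ} (hs : 1 < s.re) :
    LSeries (fun n ↦ ((Λ n : ℝ) : ℂ)) s =
      s * ∫ t in Ioi (1 : ℝ), ((psi t : ℝ) : ℂ) * (t : ℂ) ^ (-(s + 1)) := by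
  rw [LSeries_eq_mul_integral_of_nonneg (fun n ↦ Λ n) zero_le_one hs ?_
    fun n ↦ vonMangoldt_nonneg]
  · congr 1
    refine integral_congr_ae (ae_of_all _ fun t ↦ ?_)
    simp only [psi, Complex.ofReal_sum]
    rfl
  · refine Asymptotics.IsBigO.of_bound (Real.log 4 + 4) (.of_forall fun n ↦ ?_)
    have hsum : ∑ k ∈ Finset.Icc 1 n, Λ k = psi n := by
      rw [psi, Nat.floor_natCast]
      rfl
    rw [hsum, Real.rpow_one, Real.norm_of_nonneg (psi_nonneg _), Real.norm_natCast]
    exact psi_le_const_mul_self n.cast_nonneg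

lemma LSeries_vonMangoldt_eq_residueClassAux_add {s : ℂ} (hs : 1 < s.re) :
    LSeries (fun n ↦ ((Λ n : ℝ) : ℂ)) s =
      vonMangoldt.LFunctionResidueClassAux (1 : ZMod 1) s + 1 / (s - 1) := by
  rw [vonMangoldt.eqOn_LFunctionResidueClassAux (a := (1 : ZMod 1)) isUnit_one hs]
  simp only [Nat.totient_one, Nat.cast_one, inv_one, sub_add_cancel]
  congr 1
  ext n
  rw [vonMangoldt.residueClass, indicator_of_mem]
  exact Subsingleton.elim _ _

lemma integral_psi_mul_cpow (w : ℂ) :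
    ∫ t in Ioi (1 : ℝ), ((psi t : ℝ) : ℂ) * (t : ℂ) ^ (-(1 + w + 1)) =
      ∫ u in Ioi (0 : ℝ), ((psiRatio u : ℝ) : ℂ) * Complex.exp (-w * u) := by
  rw [← Real.exp_zero, ← Real.image_exp_Ioi, integral_image_eq_integral_abs_deriv_smul
    measurableSet_Ioi (fun x _ ↦ (Real.hasDerivAt_exp x).hasDerivWithinAt) Real.exp_injective.injOn]
  refine setIntegral_congr_fun measurableSet_Ioi fun u _ ↦ ?_
  have hcpow : ((Real.exp u : ℝ) : ℂ) ^ (-(1 + w + 1)) = Complex.exp (u * -(1 + w + 1)) := by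
    rw [Complex.cpow_def_of_ne_zero (by exact_mod_cast (Real.exp_pos u).ne'),
      ← Complex.ofReal_log (Real.exp_pos u).le, Real.log_exp]
  have hexp : Complex.exp u * Complex.exp (u * -(1 + w + 1)) =
      Complex.exp (-u) * Complex.exp (-w * u) := by
    rw [← Complex.exp_add, ← Complex.exp_add]
    congr 1
    ring
  simp only [Real.abs_exp, psiRatio, hcpow, Complex.real_smul]
  push_cast
  linear_combination ((psi (Real.exp u) : ℝ) : ℂ) * hexp

lemma integral_psiRatio_sub_one_mul_exp {w : ℂ} (hw : 0 < w.re) :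
    ∫ u in Ioi (0 : ℝ), ((psiRatio u - 1 : ℝ) : ℂ) * Complex.exp (-w * u) =
      (vonMangoldt.LFunctionResidueClassAux (1 : ZMod 1) (1 + w) - 1) / (1 + w) := by
  have hs : 1 < (1 + w).re := by simpa using hw
  have hs0 : 1 + w ≠ 0 := fun h ↦ by simp [h] at hs; linarith
  have hw0 : w ≠ 0 := fun h ↦ by simp [h] at hw
  have hexp : IntegrableOn (fun u : ℝ ↦ Complex.exp (-w * u)) (Ioi 0) :=
    integrableOn_exp_mul_complex_Ioi (by simpa using hw) 0
  have hpsi : IntegrableOn (fun u : ℝ ↦ ((psiRatio u : ℝ) : ℂ) * Complex.exp (-w * u)) (Ioi 0) := by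
    have hmeas := measurable_of_monotone_exp_mul monotone_exp_mul_psiRatio
    refine Integrable.bdd_mul (c := Real.log 4 + 4) hexp
      (Complex.measurable_ofReal.comp hmeas).aestronglyMeasurable (ae_of_all _ fun u ↦ ?_)
    rw [Complex.norm_real, Real.norm_of_nonneg (psiRatio_nonneg u)]
    exact psiRatio_le u
  have hsum : (1 + w) * (∫ u in Ioi (0 : ℝ), ((psiRatio u : ℝ) : ℂ) * Complex.exp (-w * u)) =
      vonMangoldt.LFunctionResidueClassAux (1 : ZMod 1) (1 + w) + 1 / w := by
    rw [← integral_psi_mul_cpow, ← LSeries_vonMangoldt_eq_mul_integral_psi hs,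
      LSeries_vonMangoldt_eq_residueClassAux_add hs, add_sub_cancel_left]
  simp_rw [Complex.ofReal_sub, Complex.ofReal_one, sub_one_mul]
  rw [integral_sub hpsi hexp, integral_exp_mul_complex_Ioi (by simpa using hw),
    Complex.ofReal_zero, mul_zero, Complex.exp_zero, eq_div_iff hs0]
  field_simp at hsum ⊢
  linear_combination hsum

theorem tendsto_psi_div_self : Tendsto (fun x : ℝ ↦ psi x / x) atTop (𝓝 1) := by
  have hcont : ContinuousOn (fun w : ℂ ↦
      (vonMangoldt.LFunctionResidueClassAux (1 : ZMod 1) (1 + w) - 1) / (1 + w))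
      {w | 0 ≤ w.re} := by
    refine ContinuousOn.div (ContinuousOn.sub ?_ continuousOn_const) (by fun_prop) fun w hw h ↦ ?_
    · exact (vonMangoldt.continuousOn_LFunctionResidueClassAux (1 : ZMod 1)).comp (by fun_prop)
        fun w hw ↦ by simpa using hw
    · have hre := congrArg Complex.re h
      simp only [Complex.add_re, Complex.one_re, Complex.zero_re] at hre
      linarith [mem_ofPred_eq ▸ hw]
  have hlim := tendsto_one_of_continuousOn_laplace psiRatio_nonneg psiRatio_le
    (fun _ ↦ psiRatio_eq_zero) monotone_exp_mul_psiRatio hcont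
    fun _ ↦ integral_psiRatio_sub_one_mul_exp
  refine (hlim.comp Real.tendsto_log_atTop).congr' ?_
  filter_upwards [eventually_gt_atTop 0] with x hx
  rw [Function.comp_apply, psiRatio, Real.exp_neg, Real.exp_log hx, div_eq_mul_inv]

lemma tendsto_psi_sub_theta_div_self : Tendsto (fun x : ℝ ↦ (psi x - theta x) / x) atTop (𝓝 0) := by
  obtain ⟨C, hC⟩ := psi_sub_theta_le_mul_sqrt
  have hsqrt : Tendsto (fun x : ℝ ↦ C / √x) atTop (𝓝 0) :=
    tendsto_const_nhds.div_atTop Real.tendsto_sqrt_atTop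
  refine squeeze_zero' ?_ ?_ hsqrt <;> filter_upwards [eventually_gt_atTop 0] with x hx
  · exact div_nonneg (sub_nonneg.2 (theta_le_psi x)) hx.le
  · rw [div_le_div_iff₀ hx (Real.sqrt_pos.2 hx)]
    calc _ ≤ C * √x * √x := mul_le_mul_of_nonneg_right (hC x) (Real.sqrt_nonneg x)
      _ = C * x := by rw [mul_assoc, Real.mul_self_sqrt hx.le]

theorem tendsto_theta_div_self : Tendsto (fun x : ℝ ↦ theta x / x) atTop (𝓝 1) := by
  refine (sub_zero (1 : ℝ) ▸ tendsto_psi_div_self.sub tendsto_psi_sub_theta_div_self).congr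
    fun x ↦ ?_
  rw [← sub_div, sub_sub_cancel]

end PrimeNumberTheorem

section DifferentialOperator

open Polynomial Topology

/-- The value at `ξ` of `F(d/dξ) g`, that is `∑ i, F.coeff i * g⁽ⁱ⁾(ξ)`, as a linear function of the
polynomial `F`. -/
noncomputable def diffOp (g : ℂ → ℂ) (ξ : ℂ) : ℂ[X] →ₗ[ℂ] ℂ :=
  Polynomial.lsum fun i ↦ LinearMap.toSpanSingleton ℂ ℂ (iteratedDeriv i g ξ)

variable {g h : ℂ → ℂ} {ξ : ℂ}

lemma diffOp_C_mul_X_pow (g : ℂ → ℂ) (ξ a : ℂ) (i : ℕ) :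
    diffOp g ξ (C a * X ^ i) = a * iteratedDeriv i g ξ := by
  simp [C_mul_X_pow_eq_monomial, diffOp, sum_monomial_index]

lemma diffOp_C (g : ℂ → ℂ) (ξ a : ℂ) : diffOp g ξ (C a) = a * g ξ := by
  simpa using diffOp_C_mul_X_pow g ξ a 0

lemma diffOp_C_mul (g : ℂ → ℂ) (ξ a : ℂ) (F : ℂ[X]) :
    diffOp g ξ (C a * F) = a * diffOp g ξ F := by
  rw [← smul_eq_C_mul, map_smul, smul_eq_mul]

lemma diffOp_congr (hgh : g =ᶠ[𝓝 ξ] h) (F : ℂ[X]) : diffOp g ξ F = diffOp h ξ F := by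
  induction F using Polynomial.induction_on' with
  | add p q hp hq => rw [map_add, map_add, hp, hq]
  | monomial n a =>
    rw [← C_mul_X_pow_eq_monomial, diffOp_C_mul_X_pow, diffOp_C_mul_X_pow, hgh.iteratedDeriv_eq]

variable {U : Set ℂ} (hU : IsOpen U) (hg : DifferentiableOn ℂ g U)
include hU hg

lemma hasDerivAt_diffOp (hξ : ξ ∈ U) (F : ℂ[X]) :
    HasDerivAt (fun ζ ↦ diffOp g ζ F) (diffOp g ξ (X * F)) ξ := by
  induction F using Polynomial.induction_on' with
  | add p q hp hq =>
    simp only [map_add, mul_add]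
    exact hp.add hq
  | monomial n a =>
    have hX : X * monomial n a = C a * X ^ (n + 1) := by
      rw [← C_mul_X_pow_eq_monomial]
      ring
    simp_rw [hX, ← C_mul_X_pow_eq_monomial, diffOp_C_mul_X_pow, iteratedDeriv_succ]
    refine HasDerivAt.const_mul _ (DifferentiableAt.hasDerivAt ?_)
    rw [iteratedDeriv_eq_iterate]
    exact ((hg.analyticAt (hU.mem_nhds hξ)).iterated_deriv n).differentiableAt

lemma hasDerivAt_eq_diffOp_X (hξ : ξ ∈ U) : HasDerivAt g (diffOp g ξ X) ξ := by
  have h := hasDerivAt_diffOp hU hg hξ (C 1)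
  simp only [diffOp_C, one_mul] at h
  simpa using h

lemma differentiableOn_diffOp (F : ℂ[X]) : DifferentiableOn ℂ (fun ζ ↦ diffOp g ζ F) U :=
  fun _ hξ ↦ (hasDerivAt_diffOp hU hg hξ F).differentiableAt.differentiableWithinAt

lemma diffOp_eq_of_hasDerivAt {Φ : ℂ[X] → ℂ → ℂ} (hC : ∀ a, ∀ ξ ∈ U, Φ (C a) ξ = a * g ξ)
    (hadd : ∀ p q, ∀ ξ ∈ U, Φ (p + q) ξ = Φ p ξ + Φ q ξ)
    (hX : ∀ p, ∀ ξ ∈ U, HasDerivAt (Φ p) (Φ (X * p) ξ) ξ) (F : ℂ[X]) :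
    ∀ ξ ∈ U, diffOp g ξ F = Φ F ξ := by
  induction F using Polynomial.induction_on with
  | C a => exact fun ξ hξ ↦ by rw [diffOp_C, hC a ξ hξ]
  | add p q hp hq => exact fun ξ hξ ↦ by rw [map_add, hp ξ hξ, hq ξ hξ, hadd p q ξ hξ]
  | monomial n a ih =>
    intro ξ hξ
    have hXn : (C a * X ^ (n + 1) : ℂ[X]) = X * (C a * X ^ n) := by ring
    rw [hXn]
    refine (hasDerivAt_diffOp hU hg hξ _).unique ((hX _ ξ hξ).congr_of_eventuallyEq ?_)
    filter_upwards [hU.mem_nhds hξ] with ζ hζ using ih ζ hζ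

lemma diffOp_mul (F G : ℂ[X]) (hξ : ξ ∈ U) :
    diffOp g ξ (F * G) = diffOp (fun ζ ↦ diffOp g ζ G) ξ F := by
  refine (diffOp_eq_of_hasDerivAt hU (differentiableOn_diffOp hU hg G)
    (Φ := fun F ξ ↦ diffOp g ξ (F * G)) (fun a ξ _ ↦ diffOp_C_mul g ξ a G)
    (fun p q ξ _ ↦ by rw [add_mul, map_add]) (fun p ξ hξ ↦ ?_) F ξ hξ).symm
  rw [mul_assoc]
  exact hasDerivAt_diffOp hU hg hξ _

lemma diffOp_id_mul (F : ℂ[X]) (hξ : ξ ∈ U) :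
    diffOp (fun ζ ↦ ζ * g ζ) ξ F = ξ * diffOp g ξ F + diffOp g ξ (derivative F) := by
  refine diffOp_eq_of_hasDerivAt hU (differentiableOn_id.mul hg)
    (Φ := fun F ξ ↦ ξ * diffOp g ξ F + diffOp g ξ (derivative F)) ?_ ?_ ?_ F ξ hξ
  · intro a ξ _
    simp only [diffOp_C, derivative_C, map_zero, add_zero, Pi.mul_apply, id_eq]
    ring
  · intro p q ξ _
    simp only [map_add]
    ring
  · intro p ξ hξ
    refine (((hasDerivAt_id ξ).mul (hasDerivAt_diffOp hU hg hξ p)).add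
      (hasDerivAt_diffOp hU hg hξ (derivative p))).congr_deriv ?_
    simp only [derivative_mul, derivative_X, one_mul, map_add, id_eq]
    ring

lemma diffOp_exp_mul (c : ℂ) (F : ℂ[X]) (hξ : ξ ∈ U) :
    diffOp (fun ζ ↦ Complex.exp (c * ζ) * g ζ) ξ F =
      Complex.exp (c * ξ) * diffOp g ξ (F.comp (X + C c)) := by
  have hexp (ξ : ℂ) : HasDerivAt (fun ζ ↦ Complex.exp (c * ζ)) (c * Complex.exp (c * ξ)) ξ := by
    simpa [mul_comm] using ((hasDerivAt_id ξ).const_mul c).cexp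
  refine diffOp_eq_of_hasDerivAt hU (DifferentiableOn.mul
    (fun ξ _ ↦ (hexp ξ).differentiableAt.differentiableWithinAt) hg)
    (Φ := fun F ξ ↦ Complex.exp (c * ξ) * diffOp g ξ (F.comp (X + C c))) ?_ ?_ ?_ F ξ hξ
  · intro a ξ _
    simp only [C_comp, diffOp_C, Pi.mul_apply]
    ring
  · intro p q ξ _
    simp only [add_comp, map_add]
    ring
  · intro p ξ hξ
    refine ((hexp ξ).mul (hasDerivAt_diffOp hU hg hξ _)).congr_deriv ?_
    simp only [mul_comp, X_comp, add_mul, map_add, diffOp_C_mul]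
    ring

end DifferentialOperator

section TwoSinhHalf

open Metric

/-- `2 sinh (η / 2) = exp (η / 2) - exp (-η / 2)`, whose even powers are the kernels that represent
central factorial differential operators as contour integrals. -/
noncomputable def twoSinhHalf (η : ℂ) : ℂ := 2 * Complex.sinh (η / 2)

lemma twoSinhHalf_zero : twoSinhHalf 0 = 0 := by simp [twoSinhHalf]

lemma sq_norm_sinh_mul_four (z : ℂ) :
    4 * ‖Complex.sinh z‖ ^ 2 = 2 * Real.cosh (2 * z.re) - 2 * Real.cos (2 * z.im) := by
  rw [← Complex.re_add_im z, Complex.sinh_add, Complex.sinh_mul_I, Complex.cosh_mul_I,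
    ← Complex.ofReal_sinh, ← Complex.ofReal_cosh, ← Complex.ofReal_cos, ← Complex.ofReal_sin,
    ← mul_assoc, ← Complex.ofReal_mul, ← Complex.ofReal_mul, Complex.sq_norm,
    Complex.normSq_add_mul_I]
  simp only [Complex.add_re, Complex.ofReal_re, Complex.mul_re, Complex.I_re, mul_zero,
    Complex.ofReal_im, Complex.I_im, mul_one, sub_self, add_zero, Complex.add_im, Complex.mul_im,
    zero_add]
  rw [Real.cosh_two_mul, Real.cos_two_mul, Real.cosh_sq]
  linear_combination (4 * Real.sinh z.re ^ 2 + 4) * Real.sin_sq_add_cos_sq z.im +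
    4 * Real.sin z.im ^ 2 * Real.cosh_sq z.re

lemma cos_le_cos_add_sub_sq {x y : ℝ} (h : x ^ 2 ≤ y ^ 2) :
    Real.cos x ≤ Real.cos y + (y ^ 2 - x ^ 2) / 2 := by
  have hsin : Real.sin ((x + y) / 2) * Real.sin ((y - x) / 2) ≤ (y ^ 2 - x ^ 2) / 4 := by
    calc _ ≤ |Real.sin ((x + y) / 2)| * |Real.sin ((y - x) / 2)| := by
          rw [← abs_mul]
          exact le_abs_self _
      _ ≤ |(x + y) / 2| * |(y - x) / 2| :=
          mul_le_mul Real.abs_sin_le_abs Real.abs_sin_le_abs (abs_nonneg _) (abs_nonneg _)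
      _ = |(y ^ 2 - x ^ 2) / 4| := by
          rw [← abs_mul]
          ring_nf
      _ = (y ^ 2 - x ^ 2) / 4 := abs_of_nonneg (by linarith)
  have hsub := Real.cos_sub_cos x y
  rw [show (x - y) / 2 = -((y - x) / 2) by ring, Real.sin_neg] at hsub
  linarith

lemma one_add_sq_div_two_le_cosh (x : ℝ) : 1 + x ^ 2 / 2 ≤ Real.cosh x := by
  have hsinh : (x / 2) ^ 2 ≤ Real.sinh (x / 2) ^ 2 := by
    rw [sq_le_sq]
    rcases le_total 0 (x / 2) with h | h
    · rw [abs_of_nonneg h, abs_of_nonneg (Real.sinh_nonneg_iff.2 h)]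
      exact Real.self_le_sinh_iff.2 h
    · rw [abs_of_nonpos h, abs_of_nonpos (Real.sinh_nonpos_iff.2 h)]
      exact neg_le_neg (Real.sinh_le_self_iff.2 h)
  have hcosh := Real.cosh_two_mul (x / 2)
  rw [mul_div_cancel₀ x two_ne_zero, Real.cosh_sq] at hcosh
  linarith

lemma two_sub_two_mul_cos_norm_le (η : ℂ) :
    2 - 2 * Real.cos ‖η‖ ≤ ‖twoSinhHalf η‖ ^ 2 := by
  have hnorm : ‖η‖ ^ 2 = η.re ^ 2 + η.im ^ 2 := by
    rw [Complex.sq_norm, Complex.normSq_apply]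
    ring
  have hsinh : ‖twoSinhHalf η‖ ^ 2 = 2 * Real.cosh η.re - 2 * Real.cos η.im := by
    have := sq_norm_sinh_mul_four (η / 2)
    rw [Complex.div_ofNat_re, Complex.div_ofNat_im, mul_div_cancel₀ _ two_ne_zero,
      mul_div_cancel₀ _ two_ne_zero] at this
    rw [← this, twoSinhHalf, norm_mul, Complex.norm_ofNat]
    ring
  have hcos := cos_le_cos_add_sub_sq (x := η.im) (y := ‖η‖) (by nlinarith)
  linarith [one_add_sq_div_two_le_cosh η.re]

lemma two_sub_two_mul_cos_pos {ρ : ℝ} (hρ : 0 < ρ) (hρ2 : ρ < 2 * Real.pi) :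
    0 < 2 - 2 * Real.cos ρ := by
  have hne : Real.cos ρ ≠ 1 := by
    rw [Ne, Real.cos_eq_one_iff_of_lt_of_lt (by linarith) hρ2]
    exact hρ.ne'
  linarith [(Real.cos_le_one ρ).lt_of_ne hne]

lemma twoSinhHalf_ne_zero {η : ℂ} (hη : η ≠ 0) (hη2 : ‖η‖ < 2 * Real.pi) : twoSinhHalf η ≠ 0 := by
  intro h
  have hle := two_sub_two_mul_cos_norm_le η
  rw [h, norm_zero] at hle
  linarith [two_sub_two_mul_cos_pos (norm_pos_iff.2 hη) hη2]

lemma hasDerivAt_twoSinhHalf (η : ℂ) : HasDerivAt twoSinhHalf (Complex.cosh (η / 2)) η := by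
  refine ((((Complex.hasDerivAt_sinh (η / 2)).comp η
    ((hasDerivAt_id η).div_const 2))).const_mul 2).congr_deriv ?_
  ring

lemma hasDerivAt_cosh_half (η : ℂ) :
    HasDerivAt (fun η ↦ Complex.cosh (η / 2)) (twoSinhHalf η / 4) η := by
  refine ((Complex.hasDerivAt_cosh (η / 2)).comp η ((hasDerivAt_id η).div_const 2)).congr_deriv ?_
  rw [twoSinhHalf]
  ring

lemma cosh_half_sq (η : ℂ) : Complex.cosh (η / 2) ^ 2 = 1 + twoSinhHalf η ^ 2 / 4 := by
  rw [Complex.cosh_sq, twoSinhHalf]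
  ring

lemma hasDerivAt_inv_twoSinhHalf_pow {η : ℂ} (hη : twoSinhHalf η ≠ 0) (m : ℕ) :
    HasDerivAt (fun η ↦ (twoSinhHalf η)⁻¹ ^ m)
      (-m * Complex.cosh (η / 2) * (twoSinhHalf η)⁻¹ ^ (m + 1)) η := by
  refine (((hasDerivAt_twoSinhHalf η).inv hη).pow m).congr_deriv ?_
  rcases m with _ | m
  · simp
  · rw [add_tsub_cancel_right, div_eq_mul_inv, ← inv_pow, Pi.inv_apply]
    ring

lemma hasDerivAt_mul_inv_twoSinhHalf_pow {g g' : ℂ → ℂ} {g'' ζ ξ : ℂ} (m : ℕ)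
    (hg : HasDerivAt g (g' ζ) ζ) (hg' : HasDerivAt g' g'' ζ) (hζ : twoSinhHalf (ζ - ξ) ≠ 0) :
    HasDerivAt (fun ζ ↦ g' ζ * (twoSinhHalf (ζ - ξ))⁻¹ ^ m +
        m * (g ζ * (Complex.cosh ((ζ - ξ) / 2) * (twoSinhHalf (ζ - ξ))⁻¹ ^ (m + 1))))
      ((g'' - (m / 2 : ℂ) ^ 2 * g ζ) * (twoSinhHalf (ζ - ξ))⁻¹ ^ m -
        m * (m + 1) * (g ζ * (twoSinhHalf (ζ - ξ))⁻¹ ^ (m + 2))) ζ := by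
  have hpow (m : ℕ) := (hasDerivAt_inv_twoSinhHalf_pow hζ m).comp_sub_const ζ ξ
  have hcosh := (hasDerivAt_cosh_half (ζ - ξ)).comp_sub_const ζ ξ
  refine ((hg'.mul (hpow m)).add ((hg.mul (hcosh.mul (hpow (m + 1)))).const_mul _)).congr_deriv ?_
  have hsq := cosh_half_sq (ζ - ξ)
  simp only [Pi.mul_apply]
  set s := twoSinhHalf (ζ - ξ)
  set c := Complex.cosh ((ζ - ξ) / 2)
  have hinv : s⁻¹ * s = 1 := inv_mul_cancel₀ hζ
  push_cast
  linear_combination (-(m * (m + 1) * g ζ * s⁻¹ ^ (m + 2)) : ℂ) * hsq +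
    (m * g ζ * s⁻¹ ^ m / 4 - m * (m + 1) * g ζ * s⁻¹ ^ m * (s⁻¹ * s + 1) / 4 : ℂ) * hinv

lemma hasDerivAt_mul_cosh_mul_inv_twoSinhHalf {g : ℂ → ℂ} {g' ζ ξ : ℂ} (hg : HasDerivAt g g' ζ)
    (hζ : twoSinhHalf (ζ - ξ) ≠ 0) :
    HasDerivAt (fun ζ ↦ g ζ * (Complex.cosh ((ζ - ξ) / 2) * (twoSinhHalf (ζ - ξ))⁻¹ ^ 1))
      (g' * Complex.cosh ((ζ - ξ) / 2) * (twoSinhHalf (ζ - ξ))⁻¹ -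
        g ζ * (twoSinhHalf (ζ - ξ))⁻¹ ^ 2) ζ := by
  have hpow := (hasDerivAt_inv_twoSinhHalf_pow hζ 1).comp_sub_const ζ ξ
  have hcosh := (hasDerivAt_cosh_half (ζ - ξ)).comp_sub_const ζ ξ
  refine (hg.mul (hcosh.mul hpow)).congr_deriv ?_
  have hsq := cosh_half_sq (ζ - ξ)
  simp only [Pi.mul_apply, Nat.cast_one]
  set s := twoSinhHalf (ζ - ξ)
  have hinv : s⁻¹ * s = 1 := inv_mul_cancel₀ hζ
  linear_combination (-(g ζ * s⁻¹ ^ 2)) * hsq + (g ζ / 4 - g ζ * (s⁻¹ * s + 1) / 4) * hinv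

lemma circleIntegral_mul_inv_twoSinhHalf {h : ℂ → ℂ} {ξ : ℂ} {ρ : ℝ} (hρ : 0 < ρ)
    (hρ2 : ρ < 2 * Real.pi) (hh : DifferentiableOn ℂ h (closedBall ξ ρ)) :
    ∮ ζ in C(ξ, ρ), h ζ * (twoSinhHalf (ζ - ξ))⁻¹ = 2 * Real.pi * Complex.I * h ξ := by
  have hfactor (η : ℂ) : twoSinhHalf η = η * dslope twoSinhHalf 0 η := by
    simpa [twoSinhHalf_zero] using (sub_smul_dslope twoSinhHalf 0 η).symm
  have hslope_zero : dslope twoSinhHalf 0 0 = 1 := by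
    rw [dslope_same, (hasDerivAt_twoSinhHalf 0).deriv, zero_div, Complex.cosh_zero]
  have hslope : Differentiable ℂ (dslope twoSinhHalf 0) := by
    rw [← differentiableOn_univ]
    exact (Complex.differentiableOn_dslope Filter.univ_mem).2
      fun η _ ↦ (hasDerivAt_twoSinhHalf η).differentiableAt.differentiableWithinAt
  have hne : ∀ ζ ∈ closedBall ξ ρ, dslope twoSinhHalf 0 (ζ - ξ) ≠ 0 := by
    intro ζ hζ h0
    rcases eq_or_ne (ζ - ξ) 0 with h | h
    · rw [h, hslope_zero] at h0
      exact one_ne_zero h0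
    · refine twoSinhHalf_ne_zero h ?_ (by rw [hfactor, h0, mul_zero])
      exact (mem_closedBall_iff_norm.1 hζ).trans_lt hρ2
  have hcauchy := (hh.div (hslope.comp (differentiable_id.sub_const ξ)).differentiableOn
    hne).circleIntegral_sub_inv_smul (mem_ball_self hρ)
  simp only [Pi.div_apply, Function.comp_apply, id_eq, sub_self, hslope_zero, div_one,
    smul_eq_mul] at hcauchy
  rw [← hcauchy]
  refine circleIntegral.integral_congr hρ.le fun ζ _ ↦ ?_
  simp only [hfactor (ζ - ξ), mul_inv]
  ring

end TwoSinhHalf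

section CentralFactorial

open Polynomial Metric Finset

/-- The central factorial polynomial `X (X² - 1²) (X² - 2²) ⋯ (X² - a²)`. -/
noncomputable def centralFactorial (R : Type*) [CommRing R] (a : ℕ) : R[X] :=
  X * ∏ j ∈ range a, (X ^ 2 - C ((j + 1 : R) ^ 2))

lemma centralFactorial_zero (R : Type*) [CommRing R] : centralFactorial R 0 = X := by
  simp [centralFactorial]

lemma centralFactorial_succ (R : Type*) [CommRing R] (a : ℕ) :
    centralFactorial R (a + 1) = centralFactorial R a * (X ^ 2 - C ((a + 1 : R) ^ 2)) := by
  rw [centralFactorial, prod_range_succ, ← mul_assoc, ← centralFactorial]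

variable {U : Set ℂ} {g : ℂ → ℂ} {ξ : ℂ} {ρ : ℝ}

lemma twoSinhHalf_sub_ne_zero_of_mem_sphere (hρ : 0 < ρ) (hρ2 : ρ < 2 * Real.pi) {ζ : ℂ}
    (hζ : ζ ∈ sphere ξ ρ) : twoSinhHalf (ζ - ξ) ≠ 0 := by
  rw [mem_sphere_iff_norm] at hζ
  exact twoSinhHalf_ne_zero (norm_pos_iff.1 (hζ ▸ hρ)) (hζ ▸ hρ2)

lemma circleIntegrable_mul_inv_twoSinhHalf_pow (hρ : 0 < ρ) (hρ2 : ρ < 2 * Real.pi)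
    (hg : ContinuousOn g (sphere ξ ρ)) (m : ℕ) :
    CircleIntegrable (fun ζ ↦ g ζ * (twoSinhHalf (ζ - ξ))⁻¹ ^ m) ξ ρ := by
  have hcont : Continuous twoSinhHalf :=
    continuous_iff_continuousAt.2 fun η ↦ (hasDerivAt_twoSinhHalf η).continuousAt
  exact (hg.mul (((hcont.comp (continuous_id.sub continuous_const)).continuousOn.inv₀
    fun ζ ↦ twoSinhHalf_sub_ne_zero_of_mem_sphere hρ hρ2).pow m)).circleIntegrable hρ.le

lemma circleIntegral_sub_eq_of_hasDerivAt {F f₁ f₂ : ℂ → ℂ} (hρ : 0 < ρ)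
    (hF : ∀ ζ ∈ sphere ξ ρ, HasDerivAt F (f₁ ζ - f₂ ζ) ζ) (h₁ : CircleIntegrable f₁ ξ ρ)
    (h₂ : CircleIntegrable f₂ ξ ρ) : ∮ ζ in C(ξ, ρ), f₁ ζ = ∮ ζ in C(ξ, ρ), f₂ ζ := by
  rw [← sub_eq_zero, ← circleIntegral.integral_sub h₁ h₂]
  exact circleIntegral.integral_eq_zero_of_hasDerivWithinAt hρ.le
    fun ζ hζ ↦ (hF ζ hζ).hasDerivWithinAt

lemma two_pi_I_mul_diffOp_X (hU : IsOpen U) (hg : DifferentiableOn ℂ g U) (hρ : 0 < ρ)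
    (hρ2 : ρ < 2 * Real.pi) (hball : closedBall ξ ρ ⊆ U) :
    2 * Real.pi * Complex.I * diffOp g ξ X =
      ∮ ζ in C(ξ, ρ), g ζ * (twoSinhHalf (ζ - ξ))⁻¹ ^ 2 := by
  have hsphere : sphere ξ ρ ⊆ U := sphere_subset_closedBall.trans hball
  have hcosh : Differentiable ℂ fun ζ ↦ Complex.cosh ((ζ - ξ) / 2) := by fun_prop
  have hdiff := ((differentiableOn_diffOp hU hg X).mono hball).mul hcosh.differentiableOn
  have hres := circleIntegral_mul_inv_twoSinhHalf hρ hρ2 hdiff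
  rw [Pi.mul_apply, sub_self, zero_div, Complex.cosh_zero, mul_one] at hres
  rw [← hres]
  refine circleIntegral_sub_eq_of_hasDerivAt hρ
    (fun ζ hζ ↦ hasDerivAt_mul_cosh_mul_inv_twoSinhHalf
      (hasDerivAt_eq_diffOp_X hU hg (hsphere hζ))
      (twoSinhHalf_sub_ne_zero_of_mem_sphere hρ hρ2 hζ)) ?_
    (circleIntegrable_mul_inv_twoSinhHalf_pow hρ hρ2 (hg.continuousOn.mono hsphere) 2)
  simpa only [pow_one] using circleIntegrable_mul_inv_twoSinhHalf_pow hρ hρ2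
    (hdiff.continuousOn.mono sphere_subset_closedBall) 1

lemma circleIntegral_diffOp_mul_inv_twoSinhHalf_pow (hU : IsOpen U) (hg : DifferentiableOn ℂ g U)
    (hρ : 0 < ρ) (hρ2 : ρ < 2 * Real.pi) (hball : closedBall ξ ρ ⊆ U) (m : ℕ) :
    ∮ ζ in C(ξ, ρ), diffOp g ζ (X ^ 2 - C ((m / 2 : ℂ) ^ 2)) * (twoSinhHalf (ζ - ξ))⁻¹ ^ m =
      m * (m + 1) * ∮ ζ in C(ξ, ρ), g ζ * (twoSinhHalf (ζ - ξ))⁻¹ ^ (m + 2) := by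
  have hsphere : sphere ξ ρ ⊆ U := sphere_subset_closedBall.trans hball
  rw [← circleIntegral.integral_const_mul]
  refine circleIntegral_sub_eq_of_hasDerivAt (F := fun ζ ↦
      diffOp g ζ X * (twoSinhHalf (ζ - ξ))⁻¹ ^ m +
        m * (g ζ * (Complex.cosh ((ζ - ξ) / 2) * (twoSinhHalf (ζ - ξ))⁻¹ ^ (m + 1))))
    hρ (fun ζ hζ ↦ ?_)
    (circleIntegrable_mul_inv_twoSinhHalf_pow hρ hρ2
      ((differentiableOn_diffOp hU hg _).continuousOn.mono hsphere) m)
    ((circleIntegrable_mul_inv_twoSinhHalf_pow hρ hρ2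
      (hg.continuousOn.mono hsphere) (m + 2)).const_fun_smul (a := (m * (m + 1) : ℂ)))
  rw [map_sub, diffOp_C, sq X]
  exact hasDerivAt_mul_inv_twoSinhHalf_pow m (hasDerivAt_eq_diffOp_X hU hg (hsphere hζ))
    (hasDerivAt_diffOp hU hg (hsphere hζ) X) (twoSinhHalf_sub_ne_zero_of_mem_sphere hρ hρ2 hζ)

lemma two_pi_I_mul_diffOp_centralFactorial (hU : IsOpen U) (hg : DifferentiableOn ℂ g U)
    (hρ : 0 < ρ) (hρ2 : ρ < 2 * Real.pi) (hball : closedBall ξ ρ ⊆ U) (a : ℕ) :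
    2 * Real.pi * Complex.I * diffOp g ξ (centralFactorial ℂ a) =
      (2 * a + 1).factorial * ∮ ζ in C(ξ, ρ), g ζ * (twoSinhHalf (ζ - ξ))⁻¹ ^ (2 * a + 2) := by
  induction a generalizing g with
  | zero =>
    rw [centralFactorial_zero, two_pi_I_mul_diffOp_X hU hg hρ hρ2 hball, mul_zero, zero_add,
      Nat.factorial_one, Nat.cast_one, one_mul, zero_add]
  | succ a ih =>
    have hstep := circleIntegral_diffOp_mul_inv_twoSinhHalf_pow hU hg hρ hρ2 hball (2 * a + 2)
    have hhalf : ((2 * a + 2 : ℕ) / 2 : ℂ) = a + 1 := by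
      push_cast
      ring
    rw [hhalf] at hstep
    have hfac : (2 * (a + 1) + 1).factorial =
        (2 * a + 2 + 1) * ((2 * a + 2) * (2 * a + 1).factorial) := by
      rw [← Nat.factorial_succ, ← Nat.factorial_succ, Nat.mul_succ]
    rw [centralFactorial_succ, diffOp_mul hU hg _ _ (hball (mem_closedBall_self hρ.le)),
      ih (differentiableOn_diffOp hU hg _), hstep, hfac, Nat.mul_succ]
    push_cast
    ring

lemma norm_diffOp_centralFactorial_le {B M : ℝ} (hU : IsOpen U) (hg : DifferentiableOn ℂ g U)
    (hρ : 0 < ρ) (hρ2 : ρ < 2 * Real.pi) (hball : closedBall ξ ρ ⊆ U)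
    (hM : 1 ≤ M * (2 - 2 * Real.cos ρ)) (hB : ∀ ζ ∈ closedBall ξ ρ, ‖g ζ‖ ≤ B) (a : ℕ) :
    ‖diffOp g ξ (centralFactorial ℂ a)‖ ≤ (2 * a + 1).factorial * (ρ * (B * M ^ (a + 1))) := by
  have hB0 : 0 ≤ B := (norm_nonneg _).trans (hB ξ (mem_closedBall_self hρ.le))
  have hbound : ‖∮ ζ in C(ξ, ρ), g ζ * (twoSinhHalf (ζ - ξ))⁻¹ ^ (2 * a + 2)‖ ≤
      2 * Real.pi * ρ * (B * M ^ (a + 1)) := by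
    refine circleIntegral.norm_integral_le_of_norm_le_const hρ.le fun ζ hζ ↦ ?_
    have hcos : 2 - 2 * Real.cos ρ ≤ ‖twoSinhHalf (ζ - ξ)‖ ^ 2 :=
      mem_sphere_iff_norm.1 hζ ▸ two_sub_two_mul_cos_norm_le (ζ - ξ)
    have hpos := two_sub_two_mul_cos_pos hρ hρ2
    have hinv : (‖twoSinhHalf (ζ - ξ)‖ ^ 2)⁻¹ ≤ M :=
      (inv_anti₀ hpos hcos).trans ((inv_le_iff_one_le_mul₀ hpos).2 hM)
    rw [norm_mul, norm_pow, ← Nat.mul_succ, pow_mul, norm_inv, inv_pow]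
    gcongr
    exact hB ζ (sphere_subset_closedBall hζ)
  have hnorm := congrArg norm (two_pi_I_mul_diffOp_centralFactorial hU hg hρ hρ2 hball a)
  rw [norm_mul, norm_mul, norm_mul, norm_mul, Complex.norm_I, Complex.norm_real,
    Real.norm_of_nonneg Real.pi_pos.le, Complex.norm_natCast, Complex.norm_ofNat, mul_one] at hnorm
  refine le_of_mul_le_mul_left ?_ (mul_pos two_pos Real.pi_pos)
  calc _ ≤ ((2 * a + 1).factorial : ℝ) * (2 * Real.pi * ρ * (B * M ^ (a + 1))) := by
        rw [hnorm]
        gcongr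
    _ = _ := by ring

end CentralFactorial

section AuxiliaryPolynomial

open Polynomial Metric Finset Filter

lemma norm_diffOp_prod_centralFactorial_le {ι : Type*} {U : Set ℂ} {g : ℂ → ℂ} {ξ : ℂ} {B : ℝ}
    (hU : IsOpen U) (hg : DifferentiableOn ℂ g U) (s : Finset ι) (a : ι → ℕ) {ρ M : ι → ℝ}
    (hρ : ∀ i, 0 < ρ i) (hρ2 : ∀ i, ρ i < 2 * Real.pi)
    (hM : ∀ i, 1 ≤ M i * (2 - 2 * Real.cos (ρ i))) (hball : closedBall ξ (∑ i ∈ s, ρ i) ⊆ U)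
    (hB : ∀ ζ ∈ closedBall ξ (∑ i ∈ s, ρ i), ‖g ζ‖ ≤ B) :
    ‖diffOp g ξ (∏ i ∈ s, centralFactorial ℂ (a i))‖ ≤
      B * ∏ i ∈ s, ((2 * a i + 1).factorial * (ρ i * M i ^ (a i + 1))) := by
  classical
  induction s using Finset.induction_on generalizing ξ with
  | empty =>
    have hg0 := hB ξ (mem_closedBall_self sum_empty.ge)
    rwa [prod_empty, prod_empty, mul_one, ← C_1, diffOp_C, one_mul]
  | insert j s hj ih =>
    rw [sum_insert hj] at hball hB
    have hsum : 0 ≤ ∑ i ∈ s, ρ i := sum_nonneg fun i _ ↦ (hρ i).le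
    have hmem : ξ ∈ U := hball (mem_closedBall_self (add_nonneg (hρ j).le hsum))
    have hsub : closedBall ξ (ρ j) ⊆ closedBall ξ (ρ j + ∑ i ∈ s, ρ i) :=
      closedBall_subset_closedBall (le_add_of_nonneg_right hsum)
    have hih : ∀ ζ ∈ closedBall ξ (ρ j), ‖diffOp g ζ (∏ i ∈ s, centralFactorial ℂ (a i))‖ ≤
        B * ∏ i ∈ s, ((2 * a i + 1).factorial * (ρ i * M i ^ (a i + 1))) := by
      intro ζ hζ
      have hζ : closedBall ζ (∑ i ∈ s, ρ i) ⊆ closedBall ξ (ρ j + ∑ i ∈ s, ρ i) :=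
        closedBall_subset_closedBall' (by linarith [mem_closedBall.1 hζ])
      exact ih (hζ.trans hball) fun w hw ↦ hB w (hζ hw)
    rw [prod_insert hj, prod_insert hj, diffOp_mul hU hg _ _ hmem]
    refine (norm_diffOp_centralFactorial_le hU (differentiableOn_diffOp hU hg _) (hρ j) (hρ2 j)
      (hsub.trans hball) (hM j) hih (a j)).trans_eq ?_
    ring

lemma exists_pow_mul_pow_le_exp {Θ s : ℝ} (hΘ : 0 < Θ) (hs : Θ < Real.exp s) (C : ℝ) (k : ℕ) :
    ∃ K, 0 < K ∧ ∀ n : ℕ, C * ((n + 1) ^ k * Θ ^ n) ≤ K * Real.exp (s * n) := by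
  set r := Θ / Real.exp s with hr
  have hr0 : 0 < r := by positivity
  obtain ⟨K, hK⟩ := (tendsto_pow_const_mul_const_pow_of_lt_one k hr0.le
    ((div_lt_one (Real.exp_pos s)).2 hs)).bddAbove_range
  refine ⟨|C| * (|K| / r) + 1, by positivity, fun n ↦ ?_⟩
  have hbound : (n + 1 : ℝ) ^ k * r ^ n ≤ |K| / r := by
    rw [le_div_iff₀ hr0, mul_assoc, ← pow_succ]
    exact_mod_cast (hK ⟨n + 1, rfl⟩).trans (le_abs_self K)
  rw [mul_comm s, Real.exp_nat_mul]
  calc C * ((n + 1) ^ k * Θ ^ n) = C * ((n + 1) ^ k * r ^ n) * Real.exp s ^ n := by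
        rw [hr, div_pow]
        field_simp
    _ ≤ |C| * (|K| / r) * Real.exp s ^ n := by
        gcongr
        exact le_abs_self C
    _ ≤ _ := by
        gcongr
        linarith

/-- The numbers `aᵢ / n`, where the `n`-th auxiliary polynomial is the product of the central
factorials of orders `aᵢ`. -/
def weight : Fin 4 → ℕ := ![2, 3, 4, 5]

/-- The auxiliary polynomial of order `n` before normalisation. -/
noncomputable def centralProd (R : Type*) [CommRing R] (n : ℕ) : R[X] :=
  ∏ i, centralFactorial R (weight i * n)

/-- The normalising factor of the auxiliary polynomial of order `n`. -/
def factorialProd (n : ℕ) : ℕ := ∏ i, (2 * (weight i * n)).factorial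

/-- The auxiliary polynomial of order `n`; each factor `centralFactorial ℂ a / (2 * a)!` is
integer-valued. -/
noncomputable def auxPoly (n : ℕ) : ℂ[X] := C (factorialProd n : ℂ)⁻¹ * centralProd ℂ n

lemma factorialProd_pos (n : ℕ) : 0 < factorialProd n := prod_pos fun _ _ ↦ Nat.factorial_pos _

lemma factorial_mul_pow_le {ρ M : ℝ} (hρ : 0 ≤ ρ) (hM : 0 ≤ M) (c n : ℕ) :
    ((2 * (c * n) + 1).factorial * (ρ * M ^ (c * n + 1)) : ℝ) ≤
      (2 * (c * n)).factorial * ((2 * c + 1) * (ρ * M) * ((n + 1) * (M ^ c) ^ n)) := by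
  have hlin : (2 * (c * n) + 1 : ℝ) ≤ (2 * c + 1) * (n + 1) := by
    nlinarith [c.cast_nonneg (α := ℝ), n.cast_nonneg (α := ℝ)]
  rw [Nat.factorial_succ, pow_succ, pow_mul]
  push_cast
  calc _ = (2 * (c * n)).factorial *
        ((2 * (c * n) + 1 : ℝ) * ((ρ * M) * (M ^ c) ^ n)) := by ring
    _ ≤ (2 * (c * n)).factorial *
        ((2 * c + 1) * (n + 1) * ((ρ * M) * (M ^ c) ^ n)) := by gcongr
    _ = _ := by ring

lemma exists_norm_diffOp_auxPoly_le {U : Set ℂ} {g : ℂ → ℂ} {ξ : ℂ} (hU : IsOpen U)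
    (hg : DifferentiableOn ℂ g U) {ρ M : Fin 4 → ℝ} (hρ : ∀ i, 0 < ρ i)
    (hρ2 : ∀ i, ρ i < 2 * Real.pi) (hM0 : ∀ i, 0 < M i)
    (hM : ∀ i, 1 ≤ M i * (2 - 2 * Real.cos (ρ i))) (hball : closedBall ξ (∑ i, ρ i) ⊆ U) {s : ℝ}
    (hs : ∏ i, M i ^ weight i < Real.exp s) :
    ∃ K, 0 < K ∧ ∀ n : ℕ, ‖diffOp g ξ (auxPoly n)‖ ≤ K * Real.exp (s * n) := by
  obtain ⟨B, hB⟩ := (isCompact_closedBall ξ (∑ i, ρ i)).exists_bound_of_continuousOn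
    (hg.continuousOn.mono hball)
  have hB0 : 0 ≤ B :=
    (norm_nonneg _).trans (hB ξ (mem_closedBall_self (sum_nonneg fun i _ ↦ (hρ i).le)))
  obtain ⟨K, hK, h⟩ := exists_pow_mul_pow_le_exp (prod_pos fun i _ ↦ pow_pos (hM0 i) _) hs
    (B * ∏ i, ((2 * weight i + 1) * (ρ i * M i))) 4
  refine ⟨K, hK, fun n ↦ le_trans ?_ (h n)⟩
  have hfac : (0 : ℝ) < factorialProd n := by exact_mod_cast factorialProd_pos n
  rw [auxPoly, diffOp_C_mul, norm_mul, norm_inv, Complex.norm_natCast, inv_mul_le_iff₀ hfac]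
  refine (norm_diffOp_prod_centralFactorial_le hU hg univ _ hρ hρ2 hM hball hB).trans ?_
  calc _ ≤ B * ∏ i, ((2 * (weight i * n)).factorial *
        ((2 * weight i + 1) * (ρ i * M i) * ((n + 1) * (M i ^ weight i) ^ n))) :=
        mul_le_mul_of_nonneg_left (prod_le_prod
          (fun i _ ↦ by have := hρ i; have := hM0 i; positivity)
          fun i _ ↦ factorial_mul_pow_le (hρ i).le (hM0 i).le (weight i) n) hB0
    _ = _ := by
        simp only [prod_mul_distrib, prod_pow, prod_const, card_univ, Fintype.card_fin,
          factorialProd, Nat.cast_prod]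
        ring

end AuxiliaryPolynomial

section CosineBounds

lemma cos_le_quartic {x : ℝ} (hx : |x| ≤ 1) :
    Real.cos x ≤ 1 - x ^ 2 / 2 + x ^ 4 * (5 / 96) := by
  have h := (abs_le.1 (Real.cos_bound hx)).2
  rw [Even.pow_abs (by decide)] at h
  linarith

lemma cos_two_pow_mul_le {x c : ℝ} (hx : 0 ≤ x) (hc : Real.cos x ≤ c) (n : ℕ)
    (hn : 2 ^ n * x ≤ Real.pi) : Real.cos (2 ^ n * x) ≤ (fun c ↦ 2 * c ^ 2 - 1)^[n] c := by
  induction n with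
  | zero => simpa using hc
  | succ n ih =>
    have hx' : 0 ≤ 2 ^ n * x := by positivity
    rw [pow_succ', mul_assoc] at hn
    have hcos : 0 ≤ Real.cos (2 ^ n * x) :=
      Real.cos_nonneg_of_neg_pi_div_two_le_of_le (by linarith) (by linarith)
    rw [pow_succ', mul_assoc, Real.cos_two_mul, Function.iterate_succ_apply']
    gcongr
    exact ih (by linarith)

end CosineBounds

section CothKernel

open Polynomial Metric Topology

/-- The logarithm `ln ((√13 - 1) / (√13 + 1))`, so that the number to be studied is
`√13 * logRatio`. -/
noncomputable def logRatio : ℝ := Real.log ((Real.sqrt 13 - 1) / (Real.sqrt 13 + 1))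

lemma sqrt_thirteen_gt : 3.6055 < Real.sqrt 13 := Real.lt_sqrt_of_sq_lt (by norm_num)

lemma exp_logRatio : Real.exp logRatio = (7 - Real.sqrt 13) / 6 := by
  have hlo := sqrt_thirteen_gt
  have hsq : Real.sqrt 13 * Real.sqrt 13 = 13 := Real.mul_self_sqrt (by norm_num)
  rw [logRatio, Real.exp_log (div_pos (by linarith) (by linarith)),
    div_eq_div_iff (by linarith) (by norm_num)]
  linarith

lemma logRatio_lt : logRatio < -0.5695 := by
  have hexp : Real.exp 0.5695 ≤ 1.7675 := by
    refine (Real.exp_bound' (n := 8) (by norm_num) (by norm_num) (by norm_num)).trans ?_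
    norm_num [Finset.sum_range_succ, Nat.factorial]
  rw [← Real.exp_lt_exp, exp_logRatio, Real.exp_neg]
  refine lt_of_lt_of_le ?_ (inv_anti₀ (Real.exp_pos _) hexp)
  have hlo := sqrt_thirteen_gt
  norm_num at hlo ⊢
  linarith

/-- The function `1/2 + ∑_{k ≥ 1} exp (k ξ)`, in closed form. The value at `ξ` of
`F(d/dξ) cothKernel` is `F(0)/2 + ∑_{k ≥ 1} F(k) exp (k ξ)`. -/
noncomputable def cothKernel (ξ : ℂ) : ℂ := (1 / 2) * (1 + Complex.exp ξ) / (1 - Complex.exp ξ)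

/-- The half-plane of convergence of the series defining `cothKernel`. -/
def negHalfPlane : Set ℂ := {ξ | ξ.re < 0}

lemma isOpen_negHalfPlane : IsOpen negHalfPlane := isOpen_lt Complex.continuous_re continuous_const

lemma one_sub_exp_ne_zero {ξ : ℂ} (hξ : ξ ∈ negHalfPlane) : 1 - Complex.exp ξ ≠ 0 := by
  intro h
  have hnorm : ‖Complex.exp ξ‖ = 1 := by rw [← sub_eq_zero.1 h, norm_one]
  rw [Complex.norm_exp, Real.exp_eq_one_iff] at hnorm
  exact (show ξ.re < 0 from hξ).ne hnorm

lemma differentiableOn_cothKernel : DifferentiableOn ℂ cothKernel negHalfPlane :=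
  DifferentiableOn.div (Differentiable.differentiableOn (by fun_prop))
    (Differentiable.differentiableOn (by fun_prop)) fun _ ↦ one_sub_exp_ne_zero

lemma logRatio_mem_negHalfPlane : (logRatio : ℂ) ∈ negHalfPlane := by
  rw [negHalfPlane, Set.mem_ofPred_eq, Complex.ofReal_re]
  linarith [logRatio_lt]

lemma closedBall_subset_negHalfPlane {x r : ℝ} (h : x + r < 0) :
    closedBall (x : ℂ) r ⊆ negHalfPlane := by
  intro ξ hξ
  have hre := (Complex.re_le_norm (ξ - x)).trans (mem_closedBall_iff_norm.1 hξ)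
  rw [Complex.sub_re, Complex.ofReal_re] at hre
  rw [negHalfPlane, Set.mem_ofPred_eq]
  linarith

/-- The entire function `(exp ξ - 1) / ξ`. -/
noncomputable def expSlope : ℂ → ℂ := dslope Complex.exp 0

lemma exp_sub_one_eq (ξ : ℂ) : Complex.exp ξ - 1 = ξ * expSlope ξ := by
  simpa [expSlope] using (sub_smul_dslope Complex.exp 0 ξ).symm

lemma differentiable_expSlope : Differentiable ℂ expSlope := by
  rw [← differentiableOn_univ]
  exact (Complex.differentiableOn_dslope Filter.univ_mem).2
    Complex.differentiable_exp.differentiableOn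

lemma isOpen_support_expSlope : IsOpen expSlope.support :=
  isOpen_ne_fun differentiable_expSlope.continuous continuous_const

lemma closedBall_subset_support_expSlope {x r : ℝ}
    (h : r ^ 2 < x ^ 2 + (2 * Real.pi) ^ 2) : closedBall (x : ℂ) r ⊆ expSlope.support := by
  intro ξ hξ hzero
  have hexp := exp_sub_one_eq ξ
  rw [hzero, mul_zero, sub_eq_zero, Complex.exp_eq_one_iff] at hexp
  obtain ⟨k, rfl⟩ := hexp
  have hk : k ≠ 0 := by
    rintro rfl
    rw [expSlope, Int.cast_zero, zero_mul, dslope_same, Complex.deriv_exp,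
      Complex.exp_zero] at hzero
    exact one_ne_zero hzero
  have hk1 : (1 : ℝ) ≤ (k : ℝ) ^ 2 := by
    have : 0 < k ^ 2 := by positivity
    exact_mod_cast this
  have hnorm : ‖(k * (2 * Real.pi * Complex.I) : ℂ) - x‖ ^ 2 =
      x ^ 2 + k ^ 2 * (2 * Real.pi) ^ 2 := by
    rw [Complex.sq_norm, Complex.normSq_apply]
    simp
    ring
  have hle := pow_le_pow_left₀ (norm_nonneg _) (mem_closedBall_iff_norm.1 hξ) 2
  nlinarith [sq_nonneg (2 * Real.pi)]

/-- The function `ξ * cothKernel ξ`, extended holomorphically across `ξ = 0`. -/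
noncomputable def regCothKernel (ξ : ℂ) : ℂ := (-(1 / 2)) * (1 + Complex.exp ξ) / expSlope ξ

lemma differentiableOn_regCothKernel : DifferentiableOn ℂ regCothKernel expSlope.support :=
  DifferentiableOn.div (Differentiable.differentiableOn (by fun_prop))
    differentiable_expSlope.differentiableOn fun _ hξ ↦ hξ

lemma regCothKernel_eq {ξ : ℂ} (hξ : ξ ∈ negHalfPlane) : regCothKernel ξ = ξ * cothKernel ξ := by
  have hne := one_sub_exp_ne_zero hξ
  have hfactor : 1 - Complex.exp ξ = -(ξ * expSlope ξ) := by
    rw [← exp_sub_one_eq]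
    ring
  rw [hfactor, neg_ne_zero, mul_ne_zero_iff] at hne
  obtain ⟨hξ0, hslope⟩ := hne
  rw [regCothKernel, cothKernel, hfactor]
  field_simp

lemma diffOp_regCothKernel {ξ : ℂ} (hξ : ξ ∈ negHalfPlane) (F : ℂ[X]) :
    diffOp regCothKernel ξ F =
      ξ * diffOp cothKernel ξ F + diffOp cothKernel ξ (derivative F) := by
  rw [← diffOp_id_mul isOpen_negHalfPlane differentiableOn_cothKernel F hξ]
  refine diffOp_congr ?_ F
  filter_upwards [isOpen_negHalfPlane.mem_nhds hξ] with ζ hζ using regCothKernel_eq hζ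

lemma diffOp_id_mul_regCothKernel {ξ : ℂ} (hξ : ξ ∈ negHalfPlane) (F : ℂ[X]) :
    diffOp (fun ζ ↦ ζ * regCothKernel ζ) ξ F = ξ ^ 2 * diffOp cothKernel ξ F +
      2 * ξ * diffOp cothKernel ξ (derivative F) +
      diffOp cothKernel ξ (derivative (derivative F)) := by
  have hreg : DifferentiableOn ℂ regCothKernel negHalfPlane :=
    (differentiableOn_id.mul differentiableOn_cothKernel).congr fun _ ↦ regCothKernel_eq
  rw [diffOp_id_mul isOpen_negHalfPlane hreg F hξ, diffOp_regCothKernel hξ,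
    diffOp_regCothKernel hξ]
  ring

lemma exists_norm_diffOp_cothKernel_le :
    ∃ K, 0 < K ∧
      ∀ n : ℕ, ‖diffOp cothKernel logRatio (auxPoly n)‖ ≤ K * Real.exp (53.2 * n) := by
  have hpi := Real.pi_gt_three
  have hcos {ρ M : ℝ} (hρ : |ρ| ≤ 1) (hM : 0 ≤ M)
      (h : 1 ≤ M * (2 - 2 * (1 - ρ ^ 2 / 2 + ρ ^ 4 * (5 / 96)))) :
      1 ≤ M * (2 - 2 * Real.cos ρ) :=
    h.trans (by gcongr; exact cos_le_quartic hρ)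
  have hexp : (1.4918 : ℝ) ≤ Real.exp 0.4 := by
    refine le_trans ?_ (Real.sum_le_exp_of_nonneg (by norm_num) 7)
    norm_num [Finset.sum_range_succ, Nat.factorial]
  refine exists_norm_diffOp_auxPoly_le isOpen_negHalfPlane differentiableOn_cothKernel
    (ρ := ![0.0815, 0.1221, 0.1627, 0.2032]) (M := ![150.656, 67.181, 37.882, 24.324])
    ?_ ?_ ?_ ?_ (closedBall_subset_negHalfPlane ?_) ?_
  · norm_num [Fin.forall_fin_succ]
  · simp only [Fin.forall_fin_succ, Matrix.cons_val_zero, Matrix.cons_val_succ]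
    refine ⟨?_, ?_, ?_, ?_, nofun⟩ <;> norm_num <;> linarith
  · norm_num [Fin.forall_fin_succ]
  · simp only [Fin.forall_fin_succ, Matrix.cons_val_zero, Matrix.cons_val_succ]
    refine ⟨hcos ?_ ?_ ?_, hcos ?_ ?_ ?_, hcos ?_ ?_ ?_, hcos ?_ ?_ ?_, nofun⟩ <;>
      norm_num [abs_le]
  · simp only [Fin.sum_univ_four, Matrix.cons_val]
    linarith [logRatio_lt]
  · rw [show (53.2 : ℝ) = (133 : ℕ) * 0.4 by norm_num, Real.exp_nat_mul]
    refine lt_of_lt_of_le ?_ (pow_le_pow_left₀ (by norm_num) hexp 133)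
    simp only [weight, Fin.prod_univ_four, Matrix.cons_val]
    norm_num

lemma exists_norm_diffOp_le_of_differentiableOn_support_expSlope {g : ℂ → ℂ}
    (hg : DifferentiableOn ℂ g expSlope.support) :
    ∃ K, 0 < K ∧ ∀ n : ℕ, ‖diffOp g logRatio (auxPoly n)‖ ≤ K * Real.exp ((-10.5) * n) := by
  have hpi := Real.pi_gt_d4
  have hcos {ρ M : ℝ} (hρ : 0 ≤ ρ) (hρ2 : ρ ≤ 2) (hM : 0 ≤ M)
      (h : 1 ≤ M * (2 - 2 * (fun c ↦ 2 * c ^ 2 - 1)^[4]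
        (1 - (ρ / 16) ^ 2 / 2 + (ρ / 16) ^ 4 * (5 / 96)))) :
      1 ≤ M * (2 - 2 * Real.cos ρ) := by
    have hquartic := cos_le_quartic (abs_le.2 ⟨by linarith, by linarith⟩ : |ρ / 16| ≤ 1)
    have hdouble := cos_two_pow_mul_le (by positivity) hquartic 4 (by linarith)
    rw [show 2 ^ 4 * (ρ / 16) = ρ by ring] at hdouble
    exact h.trans (by gcongr)
  have hexp : Real.exp 0.5 ≤ 1.6488 := by
    refine (Real.exp_bound' (n := 7) (by norm_num) (by norm_num) (by norm_num)).trans ?_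
    norm_num [Finset.sum_range_succ, Nat.factorial]
  refine exists_norm_diffOp_auxPoly_le isOpen_support_expSlope hg
    (ρ := ![1.091, 1.477, 1.763, 1.976]) (M := ![0.92876, 0.55175, 0.41989, 0.35871])
    ?_ ?_ ?_ ?_ (closedBall_subset_support_expSlope ?_) ?_
  · norm_num [Fin.forall_fin_succ]
  · simp only [Fin.forall_fin_succ, Matrix.cons_val_zero, Matrix.cons_val_succ]
    refine ⟨?_, ?_, ?_, ?_, nofun⟩ <;> norm_num <;> linarith
  · norm_num [Fin.forall_fin_succ]
  · simp only [Fin.forall_fin_succ, Matrix.cons_val_zero, Matrix.cons_val_succ]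
    refine ⟨hcos ?_ ?_ ?_ ?_, hcos ?_ ?_ ?_ ?_, hcos ?_ ?_ ?_ ?_, hcos ?_ ?_ ?_ ?_, nofun⟩ <;>
      norm_num
  · simp only [Fin.sum_univ_four, Matrix.cons_val]
    nlinarith [logRatio_lt]
  · rw [show (-10.5 : ℝ) = -((21 : ℕ) * 0.5) by norm_num, Real.exp_neg, Real.exp_nat_mul]
    refine lt_of_lt_of_le ?_
      (inv_anti₀ (by positivity) (pow_le_pow_left₀ (by positivity) hexp 21))
    simp only [weight, Fin.prod_univ_four, Matrix.cons_val]
    norm_num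

end CothKernel

section SecondDifference

open Polynomial Finset

/-- The second central difference `F(x + 1) - 2 F(x) + F(x - 1)`. -/
noncomputable def secondDiff {R : Type*} [CommRing R] (F : R[X]) : R[X] :=
  F.comp (X + C 1) - 2 * F + F.comp (X + C (-1))

lemma secondDiff_eval {R : Type*} [CommRing R] (F : R[X]) (x : R) :
    (secondDiff F).eval x = F.eval (x + 1) - 2 * F.eval x + F.eval (x - 1) := by
  simp [secondDiff, eval_comp, sub_eq_add_neg]

lemma degree_comp_X_add_C_sub_lt {R : Type*} [CommRing R] [IsDomain R] {F : R[X]} (hF : F ≠ 0)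
    (c : R) : (F.comp (X + C c) - F).degree < F.degree := by
  have hdeg : (F.comp (X + C c)).degree = F.degree := by rw [← taylor_apply, degree_taylor]
  have hne : F.comp (X + C c) ≠ 0 := by
    rwa [← degree_ne_bot, hdeg, degree_ne_bot]
  rw [← hdeg]
  refine degree_sub_lt_left hdeg hne ?_
  rw [leadingCoeff_comp (by rw [natDegree_X_add_C]; exact one_ne_zero), leadingCoeff_X_add_C,
    one_pow, mul_one]

lemma degree_secondDiff_lt {R : Type*} [CommRing R] [IsDomain R] {F : R[X]} (hF : F ≠ 0) :
    (secondDiff F).degree < F.degree := by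
  have hsum : secondDiff F = (F.comp (X + C 1) - F) + (F.comp (X + C (-1)) - F) := by
    rw [secondDiff]
    ring
  rw [hsum]
  exact (degree_add_le _ _).trans_lt
    (max_lt (degree_comp_X_add_C_sub_lt hF 1) (degree_comp_X_add_C_sub_lt hF (-1)))

lemma exists_iterate_secondDiff_eq_zero {R : Type*} [CommRing R] [IsDomain R] (F : R[X]) :
    ∃ N, secondDiff^[N] F = 0 := by
  induction h : F.degree using WellFoundedLT.induction generalizing F with
  | ind d ih =>
    subst h
    rcases eq_or_ne F 0 with hF | hF
    · exact ⟨0, hF⟩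
    · obtain ⟨N, hN⟩ := ih _ (degree_secondDiff_lt hF) _ rfl
      exact ⟨N + 1, hN⟩

lemma iterate_secondDiff_eval_intCast_eq_zero {R : Type*} [CommRing R] {F : R[X]} {m : ℤ}
    (hF : ∀ k : ℤ, |k| ≤ m → F.eval (k : R) = 0) (j : ℕ) :
    ∀ k : ℤ, |k| + j ≤ m → (secondDiff^[j] F).eval (k : R) = 0 := by
  induction j with
  | zero => simpa using hF
  | succ j ih =>
    intro k hk
    push_cast at hk
    have hadd := ih (k + 1) (by linarith [abs_add_le k 1, abs_one (α := ℤ)])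
    have hsub := ih (k - 1) (by linarith [abs_sub k 1, abs_one (α := ℤ)])
    push_cast at hadd hsub
    rw [Function.iterate_succ_apply', secondDiff_eval, hadd, ih k (by linarith), hsub]
    ring

/-- Polynomials taking integer values at the integers. -/
def IsIntegerValued (F : ℂ[X]) : Prop := ∀ k : ℤ, ∃ m : ℤ, F.eval (k : ℂ) = m

lemma IsIntegerValued.iterate_secondDiff {F : ℂ[X]} (hF : IsIntegerValued F) (j : ℕ) :
    IsIntegerValued (secondDiff^[j] F) := by
  induction j with
  | zero => exact hF
  | succ j ih =>
    intro k
    obtain ⟨a, ha⟩ := ih (k + 1)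
    obtain ⟨b, hb⟩ := ih k
    obtain ⟨c, hc⟩ := ih (k - 1)
    refine ⟨a - 2 * b + c, ?_⟩
    push_cast at ha hc ⊢
    rw [Function.iterate_succ_apply', secondDiff_eval, ha, hb, hc]

lemma iterate_secondDiff_eval_neg {R : Type*} [CommRing R] {F : R[X]} {ε : R}
    (hF : ∀ x, F.eval (-x) = ε * F.eval x) (j : ℕ) :
    ∀ x, (secondDiff^[j] F).eval (-x) = ε * (secondDiff^[j] F).eval x := by
  induction j with
  | zero => exact hF
  | succ j ih =>
    intro x
    rw [Function.iterate_succ_apply', secondDiff_eval, secondDiff_eval, ih,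
      show -x + 1 = -(x - 1) by ring, show -x - 1 = -(x + 1) by ring, ih, ih]
    ring

end SecondDifference

section Arithmetic

open Polynomial Finset

lemma exp_mul_diffOp_cothKernel_comp {ξ : ℂ} (hξ : ξ ∈ negHalfPlane) (F : ℂ[X]) :
    Complex.exp ξ * diffOp cothKernel ξ (F.comp (X + C 1)) =
      diffOp cothKernel ξ F - F.eval 0 / 2 - Complex.exp ξ * F.eval 1 / 2 := by
  have hexp := diffOp_exp_mul isOpen_negHalfPlane differentiableOn_cothKernel 1 F hξ
  rw [one_mul] at hexp
  rw [← hexp]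
  refine diffOp_eq_of_hasDerivAt isOpen_negHalfPlane
    (DifferentiableOn.mul (by fun_prop) differentiableOn_cothKernel)
    (Φ := fun F ξ ↦ diffOp cothKernel ξ F - F.eval 0 / 2 - Complex.exp ξ * F.eval 1 / 2)
    ?_ ?_ ?_ F _ hξ
  · intro a ξ hξ
    have hne := one_sub_exp_ne_zero hξ
    simp only [diffOp_C, eval_C, Pi.mul_apply, cothKernel, one_mul]
    field_simp
    ring
  · intro p q ξ _
    simp only [map_add, eval_add]
    ring
  · intro p ξ hξ
    refine (((hasDerivAt_diffOp isOpen_negHalfPlane differentiableOn_cothKernel hξ p).sub_const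
      (p.eval 0 / 2)).sub
        (((Complex.hasDerivAt_exp ξ).mul_const (p.eval 1)).div_const 2)).congr_deriv ?_
    simp

lemma diffOp_cothKernel_logRatio (F : ℂ[X]) :
    diffOp cothKernel logRatio F = 3 * diffOp cothKernel logRatio (secondDiff F) +
      (Real.sqrt 13 / 2 * F.eval 0 + 3 / 2 * (F.eval 1 - F.eval (-1))) := by
  have hshift := exp_mul_diffOp_cothKernel_comp logRatio_mem_negHalfPlane F
  have hshift' := exp_mul_diffOp_cothKernel_comp logRatio_mem_negHalfPlane (F.comp (X + C (-1)))
  have hcomp : (F.comp (X + C (-1))).comp (X + C 1) = F := by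
    rw [comp_assoc]
    simp
  have hexp : Complex.exp logRatio = (7 - Real.sqrt 13) / 6 := by
    rw [← Complex.ofReal_exp, exp_logRatio]
    push_cast
    rfl
  have hsq : (Real.sqrt 13 : ℂ) * Real.sqrt 13 = 13 := by
    rw [← Complex.ofReal_mul, Real.mul_self_sqrt (by norm_num), Complex.ofReal_ofNat]
  rw [hcomp] at hshift'
  simp only [eval_comp, eval_add, eval_X, eval_C, zero_add, add_neg_cancel] at hshift'
  rw [hexp] at hshift hshift'
  rw [secondDiff, map_add, map_sub, ← C_ofNat, diffOp_C_mul]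
  set s : ℂ := (Real.sqrt 13 : ℂ)
  have hinv : (7 + s) / 6 * ((7 - s) / 6) = 1 := by linear_combination (-1 / 36) * hsq
  linear_combination 3 * hshift' + (-3 * ((7 + s) / 6)) * hshift +
    (3 * diffOp cothKernel logRatio (F.comp (X + C 1)) + 3 / 2 * F.eval 1) * hinv

lemma diffOp_cothKernel_logRatio_eq_sum (F : ℂ[X]) (N : ℕ) :
    diffOp cothKernel logRatio F = 3 ^ N * diffOp cothKernel logRatio (secondDiff^[N] F) +
      ∑ j ∈ range N, 3 ^ j * (Real.sqrt 13 / 2 * (secondDiff^[j] F).eval 0 +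
        3 / 2 * ((secondDiff^[j] F).eval 1 - (secondDiff^[j] F).eval (-1))) := by
  induction N with
  | zero => simp
  | succ N ih =>
    rw [ih, diffOp_cothKernel_logRatio (secondDiff^[N] F), sum_range_succ,
      Function.iterate_succ_apply']
    ring

lemma diffOp_cothKernel_logRatio_of_eval_eq_zero {m : ℕ} {F : ℂ[X]}
    (hF : ∀ k : ℤ, |k| ≤ m → F.eval (k : ℂ) = 0) :
    diffOp cothKernel logRatio F = 3 ^ m * diffOp cothKernel logRatio (secondDiff^[m] F) := by
  rw [diffOp_cothKernel_logRatio_eq_sum F m, add_eq_left]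
  refine sum_eq_zero fun j hj ↦ ?_
  have hzero (k : ℤ) (hk : |k| ≤ 1) : (secondDiff^[j] F).eval (k : ℂ) = 0 :=
    iterate_secondDiff_eval_intCast_eq_zero hF j k (by have := mem_range.1 hj; lia)
  have h0 := hzero 0 (by simp)
  have h1 := hzero 1 (by simp)
  have h2 := hzero (-1) (by simp)
  push_cast at h0 h1 h2
  rw [h0, h1, h2]
  ring

lemma exists_two_mul_diffOp_of_even {F : ℂ[X]} (hi : IsIntegerValued F)
    (hF : ∀ z, F.eval (-z) = F.eval z) :
    ∃ a : ℤ, 2 * diffOp cothKernel logRatio F = Real.sqrt 13 * a := by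
  obtain ⟨N, hN⟩ := exists_iterate_secondDiff_eq_zero F
  choose a ha using fun j ↦ hi.iterate_secondDiff j 0
  have heven (j : ℕ) := iterate_secondDiff_eval_neg (F := F) (ε := (1 : ℂ)) (by simpa using hF) j 1
  refine ⟨∑ j ∈ range N, 3 ^ j * a j, ?_⟩
  rw [diffOp_cothKernel_logRatio_eq_sum F N, hN, map_zero, mul_zero, zero_add]
  push_cast at ha ⊢
  rw [mul_sum, mul_sum]
  refine sum_congr rfl fun j _ ↦ ?_
  rw [heven, ha]
  ring

lemma exists_two_mul_diffOp_of_odd {F : ℂ[X]} (hi : IsIntegerValued F)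
    (hF : ∀ z, F.eval (-z) = -F.eval z) :
    ∃ a : ℤ, 2 * diffOp cothKernel logRatio F = a := by
  obtain ⟨N, hN⟩ := exists_iterate_secondDiff_eq_zero F
  choose a ha using fun j ↦ hi.iterate_secondDiff j 1
  have hodd (j : ℕ) := iterate_secondDiff_eval_neg (F := F) (ε := (-1 : ℂ)) (by simpa using hF) j
  refine ⟨∑ j ∈ range N, 3 ^ j * (6 * a j), ?_⟩
  rw [diffOp_cothKernel_logRatio_eq_sum F N, hN, map_zero, mul_zero, zero_add]
  push_cast at ha ⊢
  rw [mul_sum]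
  refine sum_congr rfl fun j _ ↦ ?_
  have hzero : (secondDiff^[j] F).eval 0 = 0 := by
    have h0 := hodd j 0
    rw [neg_zero] at h0
    linear_combination h0 / 2
  rw [hodd, ha, hzero]
  ring

lemma exists_two_mul_diffOp_of_even_of_eval_eq_zero {m : ℕ} {F : ℂ[X]} (hi : IsIntegerValued F)
    (hF : ∀ z, F.eval (-z) = F.eval z) (hzero : ∀ k : ℤ, |k| ≤ m → F.eval (k : ℂ) = 0) :
    ∃ a : ℤ, 2 * diffOp cothKernel logRatio F = Real.sqrt 13 * (3 ^ m * a) := by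
  obtain ⟨a, ha⟩ := exists_two_mul_diffOp_of_even (hi.iterate_secondDiff m)
    (by simpa using iterate_secondDiff_eval_neg (F := F) (ε := (1 : ℂ)) (by simpa using hF) m)
  refine ⟨a, ?_⟩
  rw [diffOp_cothKernel_logRatio_of_eval_eq_zero hzero]
  linear_combination 3 ^ m * ha

lemma exists_two_mul_diffOp_of_odd_of_eval_eq_zero {m : ℕ} {F : ℂ[X]} (hi : IsIntegerValued F)
    (hF : ∀ z, F.eval (-z) = -F.eval z) (hzero : ∀ k : ℤ, |k| ≤ m → F.eval (k : ℂ) = 0) :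
    ∃ a : ℤ, 2 * diffOp cothKernel logRatio F = 3 ^ m * a := by
  obtain ⟨a, ha⟩ := exists_two_mul_diffOp_of_odd (hi.iterate_secondDiff m)
    (by simpa using iterate_secondDiff_eval_neg (F := F) (ε := (-1 : ℂ)) (by simpa using hF) m)
  refine ⟨a, ?_⟩
  rw [diffOp_cothKernel_logRatio_of_eval_eq_zero hzero]
  linear_combination 3 ^ m * ha

end Arithmetic

section TaylorCoefficients

open Polynomial Finset

lemma sum_Ico_ite_pow_dvd_le (p : ℕ) (c : ℤ) (b : ℕ) :
    ∑ e ∈ Ico 1 b, (if (p : ℤ) ^ e ∣ c then 1 else 0) ≤ b - 1 := by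
  calc _ ≤ ∑ e ∈ Ico 1 b, 1 := sum_le_sum fun e _ ↦ ite_le_one le_rfl zero_le_one
    _ = b - 1 := by rw [sum_const, smul_eq_mul, mul_one, Nat.card_Ico]

lemma pow_sum_ite_pow_dvd_dvd (p : ℕ) (c : ℤ) (b : ℕ) :
    (p : ℤ) ^ (∑ e ∈ Ico 1 b, if (p : ℤ) ^ e ∣ c then 1 else 0) ∣ c := by
  induction b with
  | zero => simp
  | succ b ih =>
    rcases Nat.eq_zero_or_pos b with rfl | (hb : 1 ≤ b)
    · simp
    rw [sum_Ico_succ_top hb]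
    split_ifs with h
    · have := sum_Ico_ite_pow_dvd_le p c b
      exact (pow_dvd_pow _ (by omega)).trans h
    · rwa [add_zero]

lemma pow_sum_countP_dvd_prod (p : ℕ) (b : ℕ) (T : Multiset ℤ) :
    (p : ℤ) ^ (∑ e ∈ Ico 1 b, T.countP ((p : ℤ) ^ e ∣ ·)) ∣ T.prod := by
  induction T using Multiset.induction_on with
  | empty => simp
  | cons c T ih =>
    simp only [Multiset.prod_cons, Multiset.countP_cons, sum_add_distrib, pow_add]
    rw [mul_comm c]
    exact mul_dvd_mul ih (pow_sum_ite_pow_dvd_dvd p c b)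

lemma countP_sub_le_countP_of_le {α : Type*} (q : α → Prop) [DecidablePred q] {S T : Multiset α}
    (h : S ≤ T) : T.countP q - (T.card - S.card) ≤ S.countP q := by
  obtain ⟨R, rfl⟩ := Multiset.le_iff_exists_add.1 h
  have := R.countP_le_card q
  rw [Multiset.countP_add, Multiset.card_add]
  omega

lemma pow_sum_countP_sub_dvd_coeff_prod_X_add_C (p b : ℕ) {T : Multiset ℤ} {i d : ℕ}
    (hid : i ≤ d) (hd : d ≤ T.card) :
    (p : ℤ) ^ (∑ e ∈ Ico 1 b, (T.countP ((p : ℤ) ^ e ∣ ·) - d)) ∣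
      (T.map fun c ↦ X + C c).prod.coeff i := by
  rw [Multiset.prod_X_add_C_coeff _ (hid.trans hd), Multiset.esymm]
  refine Multiset.dvd_sum fun x hx ↦ ?_
  obtain ⟨S, hS, rfl⟩ := Multiset.mem_map.1 hx
  obtain ⟨hST, hcard⟩ := Multiset.mem_powersetCard.1 hS
  refine (pow_dvd_pow _ (sum_le_sum fun e _ ↦ ?_)).trans (pow_sum_countP_dvd_prod p b S)
  have := countP_sub_le_countP_of_le ((p : ℤ) ^ e ∣ ·) hST
  omega

lemma eval_derivative_derivative_eq {R : Type*} [CommRing R] (F : R[X]) (k : R) :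
    F.derivative.derivative.eval k = 2 * (taylor k F).coeff 2 := by
  have h : derivative (derivative F) = 2 * hasseDeriv 2 F := by
    simpa using congrArg (fun f ↦ f F) (factorial_smul_hasseDeriv (R := R) (k := 2)).symm
  rw [taylor_coeff, h, eval_mul, eval_ofNat]

lemma map_centralFactorial {R S : Type*} [CommRing R] [CommRing S] (f : R →+* S) (a : ℕ) :
    (centralFactorial R a).map f = centralFactorial S a := by
  simp [centralFactorial, Polynomial.map_prod]

lemma map_centralProd {R S : Type*} [CommRing R] [CommRing S] (f : R →+* S) (n : ℕ) :
    (centralProd R n).map f = centralProd S n := by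
  simp [centralProd, Polynomial.map_prod, map_centralFactorial]

lemma taylor_centralFactorial (k : ℤ) (a : ℕ) :
    taylor k (centralFactorial ℤ a) = ∏ c ∈ Icc (k - a) (k + a), (X + C c) := by
  induction a with
  | zero => simp [centralFactorial_zero]
  | succ a ih =>
    have hIcc : Icc (k - (a + 1 : ℕ)) (k + (a + 1 : ℕ)) =
        insert (k - (a + 1)) (insert (k + (a + 1)) (Icc (k - a) (k + a))) := by
      ext x
      simp only [mem_Icc, mem_insert]
      push_cast
      omega
    rw [centralFactorial_succ, taylor_mul, ih, hIcc, prod_insert, prod_insert]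
    · simp only [taylor_apply, sub_comp, pow_comp, X_comp, C_comp]
      simp only [C_add, C_sub, C_pow]
      ring
    · simp only [mem_Icc]
      omega
    · simp only [mem_Icc, mem_insert]
      omega

/-- The constants `c` of the linear factors `X + c` of the translate by `k` of
`centralProd ℤ n`. -/
noncomputable def translatedConstants (n : ℕ) (k : ℤ) : Multiset ℤ :=
  ∑ i, (Icc (k - (weight i * n : ℕ)) (k + (weight i * n : ℕ))).val

lemma taylor_centralProd (n : ℕ) (k : ℤ) :
    taylor k (centralProd ℤ n) = ((translatedConstants n k).map fun c ↦ X + C c).prod := by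
  simp only [centralProd, translatedConstants, Fin.prod_univ_four, Fin.sum_univ_four, taylor_mul,
    taylor_centralFactorial, Multiset.map_add, Multiset.prod_add]
  rfl

lemma two_le_card_translatedConstants (n : ℕ) (k : ℤ) : 2 ≤ (translatedConstants n k).card := by
  simp only [translatedConstants, Fin.sum_univ_four, Multiset.card_add, card_val, Int.card_Icc]
  omega

end TaylorCoefficients

section WindowCounting

open Finset

/-- The number of integers in the window `[y - s, y + s]`. -/
noncomputable def windowCount (y s : ℝ) : ℕ := #(Icc ⌈y - s⌉ ⌊y + s⌋)

lemma le_windowCount {y s : ℝ} {j₁ j₂ : ℤ} (h₁ : y - s ≤ j₁) (h₂ : j₂ ≤ y + s) :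
    j₂ - j₁ + 1 ≤ windowCount y s := by
  have h₁ := Int.ceil_le.2 h₁
  have h₂ := Int.le_floor.2 h₂
  rw [windowCount, Int.card_Icc]
  omega

lemma floor_two_mul_le_windowCount (y s : ℝ) : ⌊2 * s⌋₊ ≤ windowCount y s := by
  rcases lt_or_ge s 0 with hs | hs
  · rw [Nat.floor_of_nonpos (by linarith)]
    exact Nat.zero_le _
  have hfloor := Nat.floor_le (show 0 ≤ 2 * s by linarith)
  have hj := le_windowCount (y := y) (s := s) (j₁ := ⌊y + s⌋ - ⌊2 * s⌋₊ + 1) (j₂ := ⌊y + s⌋)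
    (by push_cast; linarith [Int.lt_floor_add_one (y + s)]) (Int.floor_le _)
  omega

lemma countP_dvd_Icc_eq_windowCount {q : ℕ} (hq : 0 < q) (k : ℤ) (a : ℕ) :
    (Icc (k - a) (k + a)).val.countP ((q : ℤ) ∣ ·) = windowCount (k / q) (a / q) := by
  have hq' : (0 : ℝ) < q := by exact_mod_cast hq
  have hq'' : (q : ℤ) ≠ 0 := by exact_mod_cast hq.ne'
  rw [windowCount, Multiset.countP_eq_card_filter, ← filter_val, card_val]
  symm
  refine card_nbij (q * ·) (fun j hj ↦ ?_) (fun x _ y _ h ↦ mul_left_cancel₀ hq'' h) ?_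
  · simp only [coe_Icc, Set.mem_Icc, Int.ceil_le, Int.le_floor, ← sub_div, ← add_div] at hj
    rw [div_le_iff₀ hq', le_div_iff₀ hq', mul_comm] at hj
    simp only [coe_filter, mem_Icc, dvd_mul_right, and_true, Set.mem_ofPred_eq]
    exact_mod_cast hj
  · intro c hc
    simp only [coe_filter, mem_Icc, Set.mem_ofPred_eq] at hc
    obtain ⟨⟨h₁, h₂⟩, j, rfl⟩ := hc
    refine ⟨j, ?_, rfl⟩
    simp only [coe_Icc, Set.mem_Icc, Int.ceil_le, Int.le_floor, ← sub_div, ← add_div]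
    rw [div_le_iff₀ hq', le_div_iff₀ hq', mul_comm]
    exact ⟨by exact_mod_cast h₁, by exact_mod_cast h₂⟩

lemma countP_dvd_translatedConstants {q : ℕ} (hq : 0 < q) (n : ℕ) (k : ℤ) :
    (translatedConstants n k).countP ((q : ℤ) ∣ ·) =
      ∑ i, windowCount (k / q) (weight i * (n / q)) := by
  simp only [translatedConstants, Fin.sum_univ_four, Multiset.countP_add,
    countP_dvd_Icc_eq_windowCount hq]
  simp only [Nat.cast_mul, mul_div_assoc]

/-- Two window radii whose lengths `2 * s` and `2 * t` cannot both be met with the least possible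
number of integers by windows with a common centre. -/
def IsComplementary (s t : ℝ) : Prop :=
  Int.fract s < 1 / 2 ∧ 1 ≤ Int.fract s + Int.fract t

lemma exists_int_add_abs_le_half (y : ℝ) : ∃ m : ℤ, ∃ z : ℝ, y = m + z ∧ |z| ≤ 1 / 2 :=
  ⟨round y, y - round y, by ring, abs_sub_round y⟩

lemma floor_two_mul_of_fract_lt {s : ℝ} (hs : Int.fract s < 1 / 2) : ⌊2 * s⌋ = 2 * ⌊s⌋ := by
  rw [Int.floor_eq_iff]
  push_cast
  constructor <;> linarith [Int.fract_add_floor s, Int.fract_nonneg s]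

lemma floor_two_mul_of_le_fract {s : ℝ} (hs : 1 / 2 ≤ Int.fract s) :
    ⌊2 * s⌋ = 2 * ⌊s⌋ + 1 := by
  rw [Int.floor_eq_iff]
  push_cast
  constructor <;> linarith [Int.fract_add_floor s, Int.fract_lt_one s]

lemma IsComplementary.lt_windowCount_add {s t : ℝ} (h : IsComplementary s t) (hs : 0 ≤ s)
    (ht : 0 ≤ t) (y : ℝ) :
    ⌊2 * s⌋₊ + ⌊2 * t⌋₊ + 1 ≤ windowCount y s + windowCount y t := by
  obtain ⟨h₁, h₂⟩ := h
  zify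
  rw [Int.natCast_floor_eq_floor (by linarith), Int.natCast_floor_eq_floor (by linarith),
    floor_two_mul_of_fract_lt h₁, floor_two_mul_of_le_fract (by linarith)]
  have hs' := Int.fract_add_floor s
  have ht' := Int.fract_add_floor t
  have := Int.fract_nonneg s
  have := Int.fract_nonneg t
  obtain ⟨m, z, rfl, hz⟩ := exists_int_add_abs_le_half y
  obtain ⟨hz₁, hz₂⟩ := abs_le.1 hz
  rcases le_or_gt |z| (Int.fract s) with hzs | hzs
  · obtain ⟨hzs₁, hzs₂⟩ := abs_le.1 hzs
    have hws := le_windowCount (y := m + z) (s := s) (j₁ := m - ⌊s⌋) (j₂ := m + ⌊s⌋)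
      (by push_cast; linarith) (by push_cast; linarith)
    have hwt := le_windowCount (y := m + z) (s := t) (j₁ := m - ⌊t⌋) (j₂ := m + ⌊t⌋)
      (by push_cast; linarith) (by push_cast; linarith)
    omega
  have hws := (Nat.cast_le (α := ℤ)).2 (floor_two_mul_le_windowCount (m + z) s)
  rw [Int.natCast_floor_eq_floor (by linarith), floor_two_mul_of_fract_lt h₁] at hws
  rcases le_total 0 z with hz0 | hz0
  · rw [abs_of_nonneg hz0] at hzs
    have hwt := le_windowCount (y := m + z) (s := t) (j₁ := m - ⌊t⌋) (j₂ := m + ⌊t⌋ + 1)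
      (by push_cast; linarith) (by push_cast; linarith)
    omega
  · rw [abs_of_nonpos hz0] at hzs
    have hwt := le_windowCount (y := m + z) (s := t) (j₁ := m - ⌊t⌋ - 1) (j₂ := m + ⌊t⌋)
      (by push_cast; linarith) (by push_cast; linarith)
    omega

end WindowCounting

section Savings

open Finset

/-- The intervals of fractional parts of `n / p` on which every translate of `centralProd ℤ n`
carries more factors divisible by `p` than `factorialProd n`: one more on the first two, and two
more on the last seven, which lie inside the first two. -/
noncomputable def savingInterval : Fin 2 ⊕ Fin 7 → ℝ × ℝ :=
  Sum.elim ![(1 / 9, 1 / 2), (5 / 9, 9 / 10)]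
    ![(1 / 7, 1 / 6), (2 / 9, 1 / 4), (2 / 7, 3 / 10), (3 / 7, 1 / 2), (4 / 7, 3 / 5),
      (5 / 7, 3 / 4), (6 / 7, 7 / 8)]

/-- The number of translates of the intervals `savingInterval` by `0`, `1`, `2` that contain `x`. -/
noncomputable def saving (x : ℝ) : ℕ :=
  #{q : Fin 3 × (Fin 2 ⊕ Fin 7) |
    x ∈ Set.Ico (q.1 + (savingInterval q.2).1) (q.1 + (savingInterval q.2).2)}

lemma weight_eq (i : Fin 4) : weight i = i + 2 := by
  fin_cases i <;> rfl

lemma isComplementary_of_fract_mem_Ico {x r₁ r₂ : ℝ} (i j : Fin 4) (u w : ℤ)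
    (hr : u ≤ weight i * r₁ ∧ weight i * r₂ ≤ u + 1 / 2 ∧ weight j * r₂ ≤ w + 1 ∧
      u + w + 1 ≤ weight i * r₁ + weight j * r₁)
    (hx : Int.fract x ∈ Set.Ico r₁ r₂) : IsComplementary (weight i * x) (weight j * x) := by
  obtain ⟨h₁, h₂, h₃, h₄⟩ := hr
  have hpos (l : Fin 4) : (0 : ℝ) < weight l := by
    rw [weight_eq]
    positivity
  have hlow (l : Fin 4) := mul_le_mul_of_nonneg_left hx.1 (hpos l).le
  have hupp (l : Fin 4) := mul_lt_mul_of_pos_left hx.2 (hpos l)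
  have hfract (l : Fin 4) (v : ℤ) (hv : v ≤ weight l * Int.fract x)
      (hv' : weight l * Int.fract x < v + 1) :
      Int.fract (weight l * x) = weight l * Int.fract x - v := by
    rw [Int.fract_eq_iff]
    exact ⟨by linarith, by linarith, weight l * ⌊x⌋ + v, by push_cast; rw [Int.fract]; ring⟩
  rw [IsComplementary, hfract i u (by linarith [hlow i]) (by linarith [hupp i]),
    hfract j w (by linarith [hupp i, hlow i, hlow j]) (by linarith [hupp j])]
  exact ⟨by linarith [hupp i], by linarith [hlow i, hlow j]⟩

lemma exists_isComplementary {x : ℝ} (hx : ∃ l : Fin 2,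
      Int.fract x ∈ Set.Ico (savingInterval (.inl l)).1 (savingInterval (.inl l)).2) :
    ∃ i j, i ≠ j ∧ IsComplementary (weight i * x) (weight j * x) := by
  have hpair {r₁ r₂ : ℝ} (i j : Fin 4) (u w : ℤ)
      (hr : u ≤ weight i * r₁ ∧ weight i * r₂ ≤ u + 1 / 2 ∧ weight j * r₂ ≤ w + 1 ∧
        u + w + 1 ≤ weight i * r₁ + weight j * r₁) (hij : i ≠ j)
      (hx : r₁ ≤ Int.fract x ∧ Int.fract x < r₂) :
      ∃ i j, i ≠ j ∧ IsComplementary (weight i * x) (weight j * x) :=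
    ⟨i, j, hij, isComplementary_of_fract_mem_Ico i j u w hr hx⟩
  simp only [savingInterval, Fin.exists_fin_succ, Sum.elim_inl, Matrix.cons_val_zero,
    Matrix.cons_val_succ, Set.mem_Ico, IsEmpty.exists_iff, or_false] at hx
  have hsplit := lt_or_ge (Int.fract x)
  rcases hx with ⟨h₀, h₁⟩ | ⟨h₀, h₁⟩
  · rcases hsplit (1 / 8) with c₁ | c₁
    · exact hpair 2 3 0 0 (by norm_num [weight_eq]) (by decide) ⟨h₀, c₁⟩
    rcases hsplit (1 / 6) with c₂ | c₂
    · exact hpair 1 3 0 0 (by norm_num [weight_eq]) (by decide) ⟨c₁, c₂⟩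
    rcases hsplit (1 / 4) with c₃ | c₃
    · exact hpair 0 2 0 0 (by norm_num [weight_eq]) (by decide) ⟨c₂, c₃⟩
    rcases hsplit (3 / 10) with c₄ | c₄
    · exact hpair 3 1 1 0 (by norm_num [weight_eq]) (by decide) ⟨c₃, c₄⟩
    rcases hsplit (1 / 3) with c₅ | c₅
    · exact hpair 2 1 1 0 (by norm_num [weight_eq]) (by decide) ⟨c₄, c₅⟩
    rcases hsplit (3 / 8) with c₆ | c₆
    · exact hpair 2 0 1 0 (by norm_num [weight_eq]) (by decide) ⟨c₅, c₆⟩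
    rcases hsplit (2 / 5) with c₇ | c₇
    · exact hpair 1 3 1 1 (by norm_num [weight_eq]) (by decide) ⟨c₆, c₇⟩
    · exact hpair 1 0 1 0 (by norm_num [weight_eq]) (by decide) ⟨c₇, h₁⟩
  · rcases hsplit (3 / 5) with c₁ | c₁
    · exact hpair 2 3 2 2 (by norm_num [weight_eq]) (by decide) ⟨h₀, c₁⟩
    rcases hsplit (2 / 3) with c₂ | c₂
    · exact hpair 0 1 1 1 (by norm_num [weight_eq]) (by decide) ⟨c₁, c₂⟩
    rcases hsplit (3 / 4) with c₃ | c₃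
    · exact hpair 0 2 1 2 (by norm_num [weight_eq]) (by decide) ⟨c₂, c₃⟩
    rcases hsplit (4 / 5) with c₄ | c₄
    · exact hpair 1 3 2 3 (by norm_num [weight_eq]) (by decide) ⟨c₃, c₄⟩
    rcases hsplit (5 / 6) with c₅ | c₅
    · exact hpair 1 0 2 1 (by norm_num [weight_eq]) (by decide) ⟨c₄, c₅⟩
    rcases hsplit (7 / 8) with c₆ | c₆
    · exact hpair 2 0 3 1 (by norm_num [weight_eq]) (by decide) ⟨c₅, c₆⟩
    · exact hpair 3 1 4 2 (by norm_num [weight_eq]) (by decide) ⟨c₆, h₁⟩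

lemma exists_perm_isComplementary {x : ℝ} (hx : ∃ l : Fin 7,
      Int.fract x ∈ Set.Ico (savingInterval (.inr l)).1 (savingInterval (.inr l)).2) :
    ∃ σ : Equiv.Perm (Fin 4), IsComplementary (weight (σ 0) * x) (weight (σ 1) * x) ∧
      IsComplementary (weight (σ 2) * x) (weight (σ 3) * x) := by
  have hpair {r₁ r₂ : ℝ} (i j k l : Fin 4) (u v w z : ℤ)
      (h₁ : u ≤ weight i * r₁ ∧ weight i * r₂ ≤ u + 1 / 2 ∧ weight j * r₂ ≤ v + 1 ∧
        u + v + 1 ≤ weight i * r₁ + weight j * r₁)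
      (h₂ : w ≤ weight k * r₁ ∧ weight k * r₂ ≤ w + 1 / 2 ∧ weight l * r₂ ≤ z + 1 ∧
        w + z + 1 ≤ weight k * r₁ + weight l * r₁)
      (hσ : Function.Bijective ![i, j, k, l]) (hx : r₁ ≤ Int.fract x ∧ Int.fract x < r₂) :
      ∃ σ : Equiv.Perm (Fin 4), IsComplementary (weight (σ 0) * x) (weight (σ 1) * x) ∧
        IsComplementary (weight (σ 2) * x) (weight (σ 3) * x) :=
    ⟨.ofBijective _ hσ, isComplementary_of_fract_mem_Ico i j u v h₁ hx,
      isComplementary_of_fract_mem_Ico k l w z h₂ hx⟩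
  simp only [savingInterval, Fin.exists_fin_succ, Sum.elim_inr, Matrix.cons_val_zero,
    Matrix.cons_val_succ, Set.mem_Ico, IsEmpty.exists_iff, or_false] at hx
  rcases hx with hx | hx | hx | hx | hx | hx | hx
  · exact hpair 0 3 1 2 0 0 0 0 (by norm_num [weight_eq]) (by norm_num [weight_eq])
      (by decide) hx
  · exact hpair 0 1 3 2 0 0 1 0 (by norm_num [weight_eq]) (by norm_num [weight_eq])
      (by decide) hx
  · exact hpair 3 0 2 1 1 0 1 0 (by norm_num [weight_eq]) (by norm_num [weight_eq])
      (by decide) hx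
  · exact hpair 3 0 1 2 2 0 1 1 (by norm_num [weight_eq]) (by norm_num [weight_eq])
      (by decide) hx
  · exact hpair 0 3 2 1 1 2 2 1 (by norm_num [weight_eq]) (by norm_num [weight_eq])
      (by decide) hx
  · exact hpair 0 3 1 2 1 3 2 2 (by norm_num [weight_eq]) (by norm_num [weight_eq])
      (by decide) hx
  · exact hpair 3 0 2 1 4 1 3 2 (by norm_num [weight_eq]) (by norm_num [weight_eq])
      (by decide) hx

lemma one_div_nine_le_savingInterval (j : Fin 2 ⊕ Fin 7) :
    1 / 9 ≤ (savingInterval j).1 := by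
  rcases j with j | j <;> fin_cases j <;> norm_num [savingInterval]

lemma savingInterval_fst_le_snd (j : Fin 2 ⊕ Fin 7) :
    (savingInterval j).1 ≤ (savingInterval j).2 := by
  rcases j with j | j <;> fin_cases j <;> norm_num [savingInterval]

lemma savingInterval_le_one (j : Fin 2 ⊕ Fin 7) : (savingInterval j).2 ≤ 1 := by
  rcases j with j | j <;> fin_cases j <;> norm_num [savingInterval]

lemma card_filter_mem_Ico_le_one {m : ℕ} {I : Fin m → ℝ × ℝ}
    (hI : ∀ a b, a < b → (I a).2 ≤ (I b).1) (x : ℝ) :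
    #{a | x ∈ Set.Ico (I a).1 (I a).2} ≤ 1 := by
  refine card_le_one.2 fun a ha b hb ↦ ?_
  simp only [mem_filter, mem_univ, true_and, Set.mem_Ico] at ha hb
  by_contra hne
  rcases lt_or_gt_of_ne hne with hab | hab
  · linarith [hI a b hab]
  · linarith [hI b a hab]

lemma card_filter_mem_savingInterval_inl_le_one (x : ℝ) :
    #{l | x ∈ Set.Ico (savingInterval (.inl l)).1 (savingInterval (.inl l)).2} ≤ 1 := by
  refine card_filter_mem_Ico_le_one (I := fun l ↦ savingInterval (.inl l)) (fun a b hab ↦ ?_) x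
  fin_cases a <;> fin_cases b <;> first | (revert hab; decide) | norm_num [savingInterval]

lemma card_filter_mem_savingInterval_inr_le_one (x : ℝ) :
    #{l | x ∈ Set.Ico (savingInterval (.inr l)).1 (savingInterval (.inr l)).2} ≤ 1 := by
  refine card_filter_mem_Ico_le_one (I := fun l ↦ savingInterval (.inr l)) (fun a b hab ↦ ?_) x
  fin_cases a <;> fin_cases b <;> first | (revert hab; decide) | norm_num [savingInterval]

lemma fract_mem_Ico_of_mem_Ico_add {x l u : ℝ} {t : ℕ} (hl : 0 ≤ l) (hu : u ≤ 1)
    (hx : x ∈ Set.Ico (t + l) (t + u)) : ⌊x⌋₊ = t ∧ Int.fract x ∈ Set.Ico l u := by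
  obtain ⟨h₁, h₂⟩ := hx
  have hfract : Int.fract x = x - t :=
    Int.fract_eq_iff.2 ⟨by linarith, by linarith, t, by push_cast; ring⟩
  constructor
  · exact (Nat.floor_eq_iff (by linarith [t.cast_nonneg (α := ℝ)])).2
      ⟨by linarith, by linarith⟩
  · rw [hfract]
    exact ⟨by linarith, by linarith⟩

lemma saving_le_card_filter (x : ℝ) : saving x ≤
    #{l | Int.fract x ∈ Set.Ico (savingInterval (.inl l)).1 (savingInterval (.inl l)).2} +
    #{l | Int.fract x ∈ Set.Ico (savingInterval (.inr l)).1 (savingInterval (.inr l)).2} := by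
  have hfract {q : Fin 3 × (Fin 2 ⊕ Fin 7)}
      (hq : x ∈ Set.Ico (q.1 + (savingInterval q.2).1) (q.1 + (savingInterval q.2).2)) :=
    fract_mem_Ico_of_mem_Ico_add (t := q.1) (by linarith [one_div_nine_le_savingInterval q.2])
      (savingInterval_le_one q.2) hq
  calc saving x
    _ ≤ #{j | Int.fract x ∈ Set.Ico (savingInterval j).1 (savingInterval j).2} := by
      refine card_le_card_of_injOn Prod.snd (fun q hq ↦ ?_) fun q hq r hr h ↦ ?_
      · simp only [coe_filter, mem_univ, true_and, Set.mem_ofPred_eq] at hq ⊢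
        exact (hfract hq).2
      · simp only [coe_filter, mem_univ, true_and, Set.mem_ofPred_eq] at hq hr
        exact Prod.ext (Fin.ext ((hfract hq).1.symm.trans (hfract hr).1)) h
    _ = _ := by simp only [card_filter, Fintype.sum_sum_type]

lemma saving_le_two (x : ℝ) : saving x ≤ 2 :=
  (saving_le_card_filter x).trans <| add_le_add
    (card_filter_mem_savingInterval_inl_le_one _) (card_filter_mem_savingInterval_inr_le_one _)

lemma saving_eq_zero {x : ℝ} (hx : x < 1 / 9) : saving x = 0 := by
  refine card_eq_zero.2 (filter_eq_empty_iff.2 fun q _ hq ↦ ?_)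
  linarith [hq.1, one_div_nine_le_savingInterval q.2, Nat.cast_nonneg (α := ℝ) (q.1 : ℕ)]

lemma saving_div_eq_zero {n p : ℕ} (hp : 0 < p) (hnp : 9 * n < p) : saving (n / p) = 0 := by
  refine saving_eq_zero ?_
  rw [div_lt_div_iff₀ (by exact_mod_cast hp) (by norm_num), one_mul, mul_comm]
  exact_mod_cast hnp

lemma sum_floor_add_saving_le_sum_windowCount {x : ℝ} (hx : 0 ≤ x) (y : ℝ) :
    (∑ i, ⌊2 * (weight i * x)⌋₊) + saving x ≤ ∑ i, windowCount y (weight i * x) := by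
  obtain ⟨e, he⟩ : ∃ e : Fin 4 → ℕ,
      ∀ i, windowCount y (weight i * x) = ⌊2 * (weight i * x)⌋₊ + e i :=
    ⟨_, fun i ↦ (Nat.add_sub_cancel' (floor_two_mul_le_windowCount y _)).symm⟩
  have hpos (i j : Fin 4) (h : IsComplementary (weight i * x) (weight j * x)) : 1 ≤ e i + e j := by
    have := h.lt_windowCount_add (by positivity) (by positivity) y
    rw [he, he] at this
    omega
  simp only [he, sum_add_distrib, add_le_add_iff_left]
  refine (saving_le_card_filter x).trans ?_
  have hl := card_filter_mem_savingInterval_inl_le_one (Int.fract x)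
  have hr := card_filter_mem_savingInterval_inr_le_one (Int.fract x)
  by_cases hZ : ∃ l : Fin 7,
      Int.fract x ∈ Set.Ico (savingInterval (.inr l)).1 (savingInterval (.inr l)).2
  · obtain ⟨σ, h₀₁, h₂₃⟩ := exists_perm_isComplementary hZ
    rw [← Equiv.sum_comp σ, Fin.sum_univ_four]
    linarith [hpos _ _ h₀₁, hpos _ _ h₂₃]
  rw [card_eq_zero.2 (filter_eq_empty_iff.2 fun l _ hl ↦ hZ ⟨l, hl⟩), add_zero]
  by_cases hO : ∃ l : Fin 2,
      Int.fract x ∈ Set.Ico (savingInterval (.inl l)).1 (savingInterval (.inl l)).2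
  · obtain ⟨i, j, hij, h⟩ := exists_isComplementary hO
    exact hl.trans ((hpos i j h).trans
      (add_le_sum (fun _ _ ↦ Nat.zero_le _) (mem_univ i) (mem_univ j) hij))
  · rw [card_eq_zero.2 (filter_eq_empty_iff.2 fun l _ hl ↦ hO ⟨l, hl⟩)]
    exact Nat.zero_le _

end Savings

section CommonDenominator

open Finset Polynomial

lemma sum_div_add_saving_le_countP {q : ℕ} (hq : 0 < q) (n : ℕ) (k : ℤ) :
    (∑ i, 2 * (weight i * n) / q) + saving (n / q) ≤
      (translatedConstants n k).countP ((q : ℤ) ∣ ·) := by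
  rw [countP_dvd_translatedConstants hq]
  convert sum_floor_add_saving_le_sum_windowCount (x := n / q) (by positivity) (k / q) using 3
  rw [← Nat.floor_div_eq_div (K := ℝ)]
  push_cast
  congr 1
  ring

/-- The exponent of the prime `p` in `commonDenom n`. -/
noncomputable def denomExp (n p : ℕ) : ℕ :=
  ((if p ≤ 9 * n then 2 else 1) - saving (n / p)) + 2 * (Nat.log p (10 * n) - 1)

/-- A multiple of the denominators of the first three Taylor coefficients of `auxPoly n` at the
integers. -/
noncomputable def commonDenom (n : ℕ) : ℕ := ∏ p ∈ Nat.primesLE (10 * n), p ^ denomExp n p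

lemma commonDenom_pos (n : ℕ) : 0 < commonDenom n :=
  prod_pos fun _ hp ↦ pow_pos (Nat.prime_of_mem_primesLE hp).pos _

lemma sum_div_le_countP_sub_two_add {n p : ℕ} (hp : 0 < p) (k : ℤ) :
    ∑ i, 2 * (weight i * n) / p ≤ ((translatedConstants n k).countP ((p : ℤ) ∣ ·) - 2) +
      ((if p ≤ 9 * n then 2 else 1) - saving (n / p)) := by
  have hcount := sum_div_add_saving_le_countP hp n k
  have hsaving := saving_le_two (n / p)
  split_ifs with hpn
  · omega
  have hzero (i : Fin 4) (hi : i < 3) : 2 * (weight i * n) / p = 0 := by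
    refine Nat.div_eq_of_lt ?_
    rw [weight_eq]
    nlinarith [show (i : ℕ) < 3 from hi]
  have hlast : 2 * (weight 3 * n) / p ≤ 1 := by
    rw [weight_eq, ← Nat.lt_succ_iff, Nat.div_lt_iff_lt_mul hp]
    norm_num
    omega
  rw [saving_div_eq_zero hp (not_le.1 hpn), Fin.sum_univ_four, hzero 0 (by decide),
    hzero 1 (by decide), hzero 2 (by decide)]
  omega

lemma le_sum_div_of_pow_dvd_factorialProd {n p j : ℕ} (hp : p.Prime)
    (h : p ^ j ∣ factorialProd n) :
    j ≤ ∑ e ∈ Ico 1 (Nat.log p (10 * n) + 1), ∑ i, 2 * (weight i * n) / p ^ e := by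
  have hweight (i : Fin 4) : 2 * (weight i * n) ≤ 10 * n := by
    rw [weight_eq, ← mul_assoc]
    gcongr
    omega
  calc j
    _ ≤ (factorialProd n).factorization p :=
      (hp.pow_dvd_iff_le_factorization (factorialProd_pos n).ne').1 h
    _ = ∑ i, ((2 * (weight i * n)).factorial).factorization p := by
      rw [factorialProd, Nat.factorization_prod fun _ _ ↦ Nat.factorial_ne_zero _,
        Finsupp.finsetSum_apply]
    _ = _ := by
      rw [sum_comm]
      exact sum_congr rfl fun i _ ↦ Nat.factorization_factorial hp
        (Nat.lt_succ_of_le (Nat.log_mono_right (hweight i)))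

lemma sum_sum_div_le_add_denomExp {n p : ℕ} (hp : p.Prime) (hpn : p ≤ 10 * n) (k : ℤ) :
    ∑ e ∈ Ico 1 (Nat.log p (10 * n) + 1), ∑ i, 2 * (weight i * n) / p ^ e ≤
      denomExp n p + ∑ e ∈ Ico 1 (Nat.log p (10 * n) + 1),
        ((translatedConstants n k).countP ((p : ℤ) ^ e ∣ ·) - 2) := by
  have hlog : 0 < Nat.log p (10 * n) := Nat.log_pos hp.one_lt hpn
  have hfirst := sum_div_le_countP_sub_two_add (n := n) hp.pos k
  have htail : ∑ e ∈ Ico 2 (Nat.log p (10 * n) + 1), ∑ i, 2 * (weight i * n) / p ^ e ≤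
      ∑ e ∈ Ico 2 (Nat.log p (10 * n) + 1),
        (((translatedConstants n k).countP ((p : ℤ) ^ e ∣ ·) - 2) + 2) := by
    refine sum_le_sum fun e _ ↦ ?_
    have := sum_div_add_saving_le_countP (pow_pos hp.pos e) n k
    push_cast at this
    omega
  rw [sum_add_distrib, sum_const, Nat.card_Ico, smul_eq_mul] at htail
  have hsplit (f : ℕ → ℕ) : ∑ e ∈ Ico 1 (Nat.log p (10 * n) + 1), f e =
      f 1 + ∑ e ∈ Ico 2 (Nat.log p (10 * n) + 1), f e :=
    sum_eq_sum_Ico_succ_bot (by omega) f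
  rw [hsplit, hsplit, denomExp]
  simp only [pow_one]
  omega

lemma factorialProd_dvd_commonDenom_mul_coeff (n : ℕ) (k : ℤ) {i : ℕ} (hi : i ≤ 2) :
    (factorialProd n : ℤ) ∣ commonDenom n * (taylor k (centralProd ℤ n)).coeff i := by
  rw [Int.natCast_dvd, Int.natAbs_mul, Int.natAbs_natCast, Nat.dvd_iff_prime_pow_dvd_dvd]
  intro p j hp hj
  have hj := le_sum_div_of_pow_dvd_factorialProd hp hj
  by_cases hpn : p ≤ 10 * n
  · have hcoeff := pow_sum_countP_sub_dvd_coeff_prod_X_add_C p (Nat.log p (10 * n) + 1) hi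
      (two_le_card_translatedConstants n k)
    rw [← taylor_centralProd, ← Int.natCast_pow, Int.natCast_dvd] at hcoeff
    refine dvd_trans ?_ (mul_dvd_mul (dvd_prod_of_mem (fun p ↦ p ^ denomExp n p)
      (Nat.mem_primesLE.2 ⟨hpn, hp⟩)) hcoeff)
    rw [← pow_add]
    exact pow_dvd_pow p (hj.trans (sum_sum_div_le_add_denomExp hp hpn k))
  · rw [Nat.log_of_lt (by omega)] at hj
    simp_all

end CommonDenominator

section DenominatorGrowth

open Finset Filter Topology

open Chebyshev (theta psi)

lemma sum_primesLE_ite_le_log {x : ℝ} {N : ℕ} (hx : x ≤ N) :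
    ∑ p ∈ Nat.primesLE N, (if (p : ℝ) ≤ x then Real.log p else 0) = theta x := by
  rw [Chebyshev.theta_eq_sum_primesLE, ← sum_filter]
  refine sum_congr (ext fun p ↦ ?_) fun _ _ ↦ rfl
  simp only [mem_filter, Nat.mem_primesLE]
  constructor
  · rintro ⟨⟨-, hp⟩, hpx⟩
    exact ⟨Nat.le_floor hpx, hp⟩
  · rintro ⟨hpx, hp⟩
    have hpx := (Nat.le_floor_iff' hp.ne_zero).1 hpx
    exact ⟨⟨by exact_mod_cast hpx.trans hx, hp⟩, hpx⟩

lemma sum_primesLE_ite_div_mem_Ico_log {c d x : ℝ} {N : ℕ} (hc : 0 < c) (hcd : c ≤ d)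
    (hx : 0 ≤ x) (hN : x / c ≤ N) :
    ∑ p ∈ Nat.primesLE N, (if x / p ∈ Set.Ico c d then Real.log p else 0) =
      theta (x / c) - theta (x / d) := by
  have hdc : x / d ≤ x / c := by gcongr
  rw [← sum_primesLE_ite_le_log hN, ← sum_primesLE_ite_le_log (hdc.trans hN), ← sum_sub_distrib]
  refine sum_congr rfl fun p hp ↦ ?_
  have hp : (0 : ℝ) < p := by exact_mod_cast (Nat.prime_of_mem_primesLE hp).pos
  have hmem : x / p ∈ Set.Ico c d ↔ p ≤ x / c ∧ ¬ p ≤ x / d := by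
    rw [Set.mem_Ico, le_div_comm₀ hc hp, not_le, div_lt_comm₀ hp (hc.trans_le hcd)]
  by_cases h₁ : p ≤ x / d
  · simp [hmem, h₁, h₁.trans hdc]
  · by_cases h₂ : p ≤ x / c <;> simp [hmem, h₁, h₂]

lemma one_div_nine_le_natCast_add_savingInterval (t : ℕ) (j : Fin 2 ⊕ Fin 7) :
    1 / 9 ≤ t + (savingInterval j).1 := by
  linarith [one_div_nine_le_savingInterval j, t.cast_nonneg (α := ℝ)]

lemma sum_primesLE_saving_mul_log (n : ℕ) :
    ∑ p ∈ Nat.primesLE (10 * n), saving (n / p) * Real.log p =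
      ∑ q : Fin 3 × (Fin 2 ⊕ Fin 7), (theta (n / (q.1 + (savingInterval q.2).1)) -
        theta (n / (q.1 + (savingInterval q.2).2))) := by
  simp only [saving, card_filter, Nat.cast_sum, Nat.cast_ite, Nat.cast_one, Nat.cast_zero, sum_mul,
    ite_mul, one_mul, zero_mul]
  rw [sum_comm]
  refine sum_congr rfl fun q _ ↦ ?_
  have hl := one_div_nine_le_natCast_add_savingInterval q.1 q.2
  refine sum_primesLE_ite_div_mem_Ico_log (by linarith)
    (by linarith [savingInterval_fst_le_snd q.2]) n.cast_nonneg ?_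
  rw [div_le_iff₀ (by linarith)]
  push_cast
  nlinarith [n.cast_nonneg (α := ℝ)]

lemma denomExp_mul_log {n p : ℕ} (hp : p ∈ Nat.primesLE (10 * n)) :
    denomExp n p * Real.log p = Real.log p + (if (p : ℝ) ≤ (9 * n : ℕ) then Real.log p else 0) -
      saving (n / p) * Real.log p + 2 * (Nat.log p (10 * n) * Real.log p - Real.log p) := by
  obtain ⟨hpn, hp⟩ := Nat.mem_primesLE.1 hp
  have hle : saving (n / p) ≤ if p ≤ 9 * n then 2 else 1 := by
    split_ifs with h
    · exact saving_le_two _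
    · rw [saving_div_eq_zero hp.pos (not_le.1 h)]
      exact zero_le_one
  rw [denomExp, Nat.cast_add, Nat.cast_sub hle, Nat.cast_mul,
    Nat.cast_sub (Nat.log_pos hp.one_lt hpn)]
  simp only [Nat.cast_le]
  split_ifs <;> push_cast <;> ring

lemma log_commonDenom (n : ℕ) : Real.log (commonDenom n) =
    theta (10 * n) + theta (9 * n) -
      ∑ q : Fin 3 × (Fin 2 ⊕ Fin 7), (theta (n / (q.1 + (savingInterval q.2).1)) -
        theta (n / (q.1 + (savingInterval q.2).2))) + 2 * (psi (10 * n) - theta (10 * n)) := by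
  have hpow (p : ℕ) (hp : p ∈ Nat.primesLE (10 * n)) : (p : ℝ) ^ denomExp n p ≠ 0 :=
    pow_ne_zero _ (by exact_mod_cast (Nat.prime_of_mem_primesLE hp).ne_zero)
  have h₁ := Chebyshev.theta_eq_sum_primesLE_log (10 * n)
  have h₂ := sum_primesLE_ite_le_log (x := (9 * n : ℕ)) (N := 10 * n)
    (by exact_mod_cast Nat.mul_le_mul_right n (by norm_num))
  have h₃ := Chebyshev.psi_eq_sum_mul_log_prime (10 * n)
  rw [commonDenom, Nat.cast_prod]
  simp only [Nat.cast_pow]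
  rw [Real.log_prod hpow]
  simp only [Real.log_pow]
  rw [sum_congr rfl fun p hp ↦ denomExp_mul_log hp, sum_add_distrib, sum_sub_distrib,
    sum_add_distrib, sum_primesLE_saving_mul_log, ← mul_sum,
    sum_sub_distrib (g := fun p : ℕ ↦ Real.log p), h₂, ← h₁, ← h₃]
  push_cast
  rfl

lemma tendsto_theta_mul_div {c : ℝ} (hc : 0 < c) :
    Tendsto (fun n : ℕ ↦ theta (c * n) / n) atTop (𝓝 c) := by
  have h := (tendsto_theta_div_self.comp
    ((tendsto_natCast_atTop_atTop (R := ℝ)).const_mul_atTop hc)).const_mul c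
  rw [mul_one] at h
  refine h.congr fun n ↦ ?_
  simp only [Function.comp_apply]
  field_simp

lemma tendsto_log_commonDenom_div : Tendsto (fun n : ℕ ↦ Real.log (commonDenom n) / n) atTop
    (𝓝 (19 - ∑ q : Fin 3 × (Fin 2 ⊕ Fin 7),
      (((q.1 : ℝ) + (savingInterval q.2).1)⁻¹ - (q.1 + (savingInterval q.2).2)⁻¹))) := by
  have hinv {c : ℝ} (hc : 0 < c) : Tendsto (fun n : ℕ ↦ theta (n / c) / n) atTop (𝓝 c⁻¹) :=
    (tendsto_theta_mul_div (inv_pos.2 hc)).congr fun n ↦ by rw [inv_mul_eq_div]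
  have hsaving (q : Fin 3 × (Fin 2 ⊕ Fin 7)) :
      Tendsto (fun n : ℕ ↦ (theta (n / (q.1 + (savingInterval q.2).1)) -
        theta (n / (q.1 + (savingInterval q.2).2))) / n) atTop
        (𝓝 (((q.1 : ℝ) + (savingInterval q.2).1)⁻¹ - (q.1 + (savingInterval q.2).2)⁻¹)) := by
    have hl := one_div_nine_le_natCast_add_savingInterval q.1 q.2
    simp only [sub_div]
    exact (hinv (by linarith)).sub (hinv (by linarith [savingInterval_fst_le_snd q.2]))
  have hpsi : Tendsto (fun n : ℕ ↦ (psi (10 * n) - theta (10 * n)) / n) atTop (𝓝 0) := by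
    have h := (tendsto_psi_sub_theta_div_self.comp ((tendsto_natCast_atTop_atTop
      (R := ℝ)).const_mul_atTop (show (0 : ℝ) < 10 by norm_num))).const_mul 10
    rw [mul_zero] at h
    refine h.congr fun n ↦ ?_
    simp only [Function.comp_apply]
    field_simp
  have h := (((tendsto_theta_mul_div (c := 10) (by norm_num)).add
    (tendsto_theta_mul_div (c := 9) (by norm_num))).sub
    (tendsto_finsetSum univ fun q _ ↦ hsaving q)).add (hpsi.const_mul 2)
  norm_num only [mul_zero, add_zero] at h
  refine h.congr fun n ↦ ?_
  rw [log_commonDenom]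
  simp only [← sum_div]
  ring

lemma sum_savingInterval_gt : 10.4 < ∑ q : Fin 3 × (Fin 2 ⊕ Fin 7),
    (((q.1 : ℝ) + (savingInterval q.2).1)⁻¹ - (q.1 + (savingInterval q.2).2)⁻¹) := by
  simp only [Fintype.sum_prod_type, Fintype.sum_sum_type, Fin.sum_univ_two, Fin.sum_univ_three,
    Fin.sum_univ_seven, savingInterval, Sum.elim_inl, Sum.elim_inr, Matrix.cons_val]
  norm_num

lemma log_three_gt : 1.09 < Real.log 3 := by
  have h : Real.log (2 ^ 19) < Real.log (3 ^ 12) := Real.log_lt_log (by norm_num) (by norm_num)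
  rw [Real.log_pow, Real.log_pow] at h
  norm_num at h ⊢
  linarith [Real.log_two_gt_d9]

lemma exists_commonDenom_div_le : ∃ K > 0, ∀ n : ℕ,
    (commonDenom n : ℝ) / 3 ^ (3 * n) ≤ K * Real.exp (5.33 * n) := by
  have hO : (fun n ↦ (commonDenom n : ℝ) / 3 ^ (3 * n)) =O[atTop]
      fun n : ℕ ↦ Real.exp (5.33 * n) := by
    have hlt := tendsto_log_commonDenom_div.eventually
      (eventually_lt_nhds (show _ < (8.6 : ℝ) by linarith [sum_savingInterval_gt]))
    refine .of_norm_eventuallyLE ?_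
    filter_upwards [hlt, eventually_gt_atTop 0] with n hn hn0
    have hn0 : (0 : ℝ) < n := by exact_mod_cast hn0
    rw [div_lt_iff₀ hn0] at hn
    have hD : (0 : ℝ) < commonDenom n := by exact_mod_cast commonDenom_pos n
    rw [Real.norm_of_nonneg (by positivity), div_le_iff₀ (by positivity),
      ← Real.exp_log hD, ← Real.exp_log (show (0 : ℝ) < 3 ^ (3 * n) by positivity), ← Real.exp_add,
      Real.exp_le_exp, Real.log_pow]
    push_cast
    nlinarith [log_three_gt]
  obtain ⟨K, hK, h⟩ := Asymptotics.bound_of_isBigO_nat_atTop hO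
  refine ⟨K, hK, fun n ↦ ?_⟩
  simpa only [Real.norm_of_nonneg (Real.exp_pos _).le, norm_div, norm_pow, Real.norm_natCast,
    Real.norm_ofNat] using h (Real.exp_ne_zero (5.33 * n))

end DenominatorGrowth

section Integrality

open Polynomial

lemma centralFactorial_eval_intCast_eq_zero {R : Type*} [CommRing R] {a : ℕ} {k : ℤ}
    (h : |k| ≤ a) : (centralFactorial R a).eval (k : R) = 0 := by
  induction a with
  | zero =>
    have hk : k = 0 := by simpa using h
    simp [centralFactorial_zero, hk]
  | succ a ih =>
    rw [centralFactorial_succ, eval_mul]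
    rcases le_or_gt |k| a with hle | hlt
    · rw [ih hle, zero_mul]
    · have hk : |k| = a + 1 := by
        push_cast at h
        lia
      have hsq : k ^ 2 = (a + 1) ^ 2 := by rw [← sq_abs, hk]
      replace hsq : (k : R) ^ 2 = (a + 1) ^ 2 := by exact_mod_cast congrArg (Int.cast (R := R)) hsq
      simp [hsq]

lemma centralFactorial_comp_neg_X {R : Type*} [CommRing R] (a : ℕ) :
    (centralFactorial R a).comp (-X) = -centralFactorial R a := by
  induction a with
  | zero => simp [centralFactorial_zero]
  | succ a ih => simp [centralFactorial_succ, mul_comp, ih]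

lemma auxPoly_comp_neg_X (n : ℕ) : (auxPoly n).comp (-X) = auxPoly n := by
  simp [auxPoly, centralProd, Fin.prod_univ_four, centralFactorial_comp_neg_X]

lemma derivative_comp_neg_X {R : Type*} [CommRing R] (F : R[X]) :
    F.derivative.comp (-X) = -(F.comp (-X)).derivative := by
  simp [derivative_comp]

lemma eval_derivatives_eq_zero_of_X_sub_C_pow_three_dvd {R : Type*} [CommRing R] {x : R}
    {F : R[X]} (h : (X - C x) ^ 3 ∣ F) :
    F.eval x = 0 ∧ F.derivative.eval x = 0 ∧ F.derivative.derivative.eval x = 0 := by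
  obtain ⟨G, rfl⟩ := h
  simp [derivative_mul, derivative_pow]

lemma X_sub_C_pow_three_dvd_auxPoly {n : ℕ} {k : ℤ} (h : |k| ≤ (3 * n : ℕ)) :
    (X - C (k : ℂ)) ^ 3 ∣ auxPoly n := by
  have hdvd (a : ℕ) (ha : 3 * n ≤ a) : X - C (k : ℂ) ∣ centralFactorial ℂ a :=
    dvd_iff_isRoot.2 (centralFactorial_eval_intCast_eq_zero (h.trans (by exact_mod_cast ha)))
  have hprod := mul_dvd_mul (mul_dvd_mul (hdvd (3 * n) le_rfl) (hdvd (4 * n) (by lia)))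
    (hdvd (5 * n) (by lia))
  rw [auxPoly, centralProd, Fin.prod_univ_four]
  refine Dvd.dvd.mul_left ?_ _
  convert hprod.mul_left (centralFactorial ℂ (2 * n)) using 1
  · ring
  · norm_num [weight_eq]
    ring

lemma isIntegerValued_C_mul_map {D N : ℕ} (hN : N ≠ 0) {G : ℤ[X]}
    (h : ∀ k : ℤ, (N : ℤ) ∣ D * G.eval k) :
    IsIntegerValued (C (D : ℂ) * (C (N : ℂ)⁻¹ * G.map (Int.castRingHom ℂ))) := by
  intro k
  obtain ⟨m, hm⟩ := h k
  refine ⟨m, ?_⟩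
  have heval : (G.map (Int.castRingHom ℂ)).eval (k : ℂ) = (G.eval k : ℤ) :=
    eval_intCast_map (Int.castRingHom ℂ) G k
  have hm' : (D : ℂ) * (G.eval k : ℤ) = N * m := by exact_mod_cast hm
  have hN' : (N : ℂ) ≠ 0 := by exact_mod_cast hN
  rw [eval_mul, eval_mul, eval_C, eval_C, heval]
  field_simp
  exact hm'

lemma auxPoly_eq_C_mul_map (n : ℕ) :
    auxPoly n = C (factorialProd n : ℂ)⁻¹ * (centralProd ℤ n).map (Int.castRingHom ℂ) := by
  rw [map_centralProd, auxPoly]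

lemma isIntegerValued_commonDenom_mul_auxPoly (n : ℕ) :
    IsIntegerValued (C (commonDenom n : ℂ) * auxPoly n) := by
  rw [auxPoly_eq_C_mul_map]
  refine isIntegerValued_C_mul_map (factorialProd_pos n).ne' fun k ↦ ?_
  rw [← taylor_coeff_zero]
  exact factorialProd_dvd_commonDenom_mul_coeff n k (by norm_num)

lemma isIntegerValued_commonDenom_mul_derivative_auxPoly (n : ℕ) :
    IsIntegerValued (C (commonDenom n : ℂ) * (auxPoly n).derivative) := by
  rw [auxPoly_eq_C_mul_map, derivative_C_mul, derivative_map]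
  refine isIntegerValued_C_mul_map (factorialProd_pos n).ne' fun k ↦ ?_
  rw [← taylor_coeff_one]
  exact factorialProd_dvd_commonDenom_mul_coeff n k (by norm_num)

lemma isIntegerValued_commonDenom_mul_derivative_derivative_auxPoly (n : ℕ) :
    IsIntegerValued (C (commonDenom n : ℂ) * (auxPoly n).derivative.derivative) := by
  rw [auxPoly_eq_C_mul_map, derivative_C_mul, derivative_C_mul, derivative_map, derivative_map]
  refine isIntegerValued_C_mul_map (factorialProd_pos n).ne' fun k ↦ ?_
  rw [eval_derivative_derivative_eq, mul_left_comm]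
  exact (factorialProd_dvd_commonDenom_mul_coeff n k le_rfl).mul_left 2

lemma exists_int_commonDenom_mul_diffOp (n : ℕ) : ∃ a b c : ℤ,
    2 * (commonDenom n * diffOp cothKernel logRatio (auxPoly n)) =
      Real.sqrt 13 * (3 ^ (3 * n) * a) ∧
    2 * (commonDenom n * diffOp cothKernel logRatio (auxPoly n).derivative) =
      3 ^ (3 * n) * b ∧
    2 * (commonDenom n * diffOp cothKernel logRatio (auxPoly n).derivative.derivative) =
      Real.sqrt 13 * (3 ^ (3 * n) * c) := by
  have heval (F : ℂ[X]) (z : ℂ) : F.eval (-z) = (F.comp (-X)).eval z := by simp [eval_comp]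
  have hvanish (k : ℤ) (hk : |k| ≤ (3 * n : ℕ)) :=
    eval_derivatives_eq_zero_of_X_sub_C_pow_three_dvd (X_sub_C_pow_three_dvd_auxPoly hk)
  obtain ⟨a, ha⟩ := exists_two_mul_diffOp_of_even_of_eval_eq_zero (m := 3 * n)
    (isIntegerValued_commonDenom_mul_auxPoly n)
    (fun z ↦ by rw [heval, mul_comp, C_comp, auxPoly_comp_neg_X])
    fun k hk ↦ by rw [eval_mul, (hvanish k hk).1, mul_zero]
  obtain ⟨b, hb⟩ := exists_two_mul_diffOp_of_odd_of_eval_eq_zero (m := 3 * n)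
    (isIntegerValued_commonDenom_mul_derivative_auxPoly n)
    (fun z ↦ by
      rw [heval, mul_comp, C_comp, derivative_comp_neg_X, auxPoly_comp_neg_X, mul_neg, eval_neg])
    fun k hk ↦ by rw [eval_mul, (hvanish k hk).2.1, mul_zero]
  obtain ⟨c, hc⟩ := exists_two_mul_diffOp_of_even_of_eval_eq_zero (m := 3 * n)
    (isIntegerValued_commonDenom_mul_derivative_derivative_auxPoly n)
    (fun z ↦ by
      rw [heval, mul_comp, C_comp, derivative_comp_neg_X, derivative_comp_neg_X,
        auxPoly_comp_neg_X, derivative_neg, neg_neg])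
    fun k hk ↦ by rw [eval_mul, (hvanish k hk).2.2, mul_zero]
  rw [diffOp_C_mul] at ha hb hc
  exact ⟨a, b, c, ha, hb, hc⟩

end Integrality

section ExponentialSum

open Polynomial

lemma summable_eval_mul_pow {z : ℂ} (hz : ‖z‖ < 1) (F : ℂ[X]) :
    Summable fun k : ℕ ↦ F.eval (k : ℂ) * z ^ k := by
  induction F using Polynomial.induction_on' with
  | add F G hF hG => simpa only [eval_add, add_mul] using hF.add hG
  | monomial i a =>
    simpa only [eval_monomial, mul_assoc] using
      (summable_pow_mul_geometric_of_norm_lt_one i hz).mul_left a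

lemma hasSum_eval_mul_exp_pow {ξ : ℂ} (hξ : ξ ∈ negHalfPlane) (F : ℂ[X]) :
    HasSum (fun k : ℕ ↦ F.eval (k : ℂ) * Complex.exp ξ ^ k)
      (diffOp cothKernel ξ F + F.eval 0 / 2) := by
  induction h : F.degree using WellFoundedLT.induction generalizing F with
  | ind d ih =>
    subst h
    rcases eq_or_ne F 0 with rfl | hF
    · simp [hasSum_zero]
    have hz : ‖Complex.exp ξ‖ < 1 := by rwa [Complex.norm_exp, Real.exp_lt_one_iff]
    have hsum := (summable_eval_mul_pow hz F).hasSum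
    have hshift := (hasSum_nat_add_iff' 1).2 hsum
    have hdiff := (ih _ (degree_comp_X_add_C_sub_lt hF 1) _ rfl).mul_left (Complex.exp ξ)
    have heq := hdiff.unique ((hshift.sub (hsum.mul_left (Complex.exp ξ))).congr_fun fun k ↦ ?_)
    · convert hsum using 1
      have hcomp := exp_mul_diffOp_cothKernel_comp hξ F
      refine mul_left_cancel₀ (one_sub_exp_ne_zero hξ) ?_
      simp only [map_sub, eval_sub, eval_comp, eval_add, eval_X, eval_C, zero_add,
        Finset.sum_range_one, Nat.cast_zero, pow_zero, mul_one] at heq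
      linear_combination heq - hcomp
    · simp only [eval_sub, eval_comp, eval_add, eval_X, eval_C]
      push_cast
      ring

end ExponentialSum

section CentralValue

open Polynomial Finset

lemma descFactorial_add_succ (a k : ℕ) :
    (k + (a + 1)).descFactorial (2 * (a + 1) + 1) =
      (k + a + 1) * (k + a - (2 * a + 1)) * (k + a).descFactorial (2 * a + 1) := by
  rw [show 2 * (a + 1) + 1 = 2 * a + 1 + 1 + 1 by ring, ← add_assoc,
    Nat.succ_descFactorial_succ, Nat.descFactorial_succ, mul_assoc]

lemma centralFactorial_eval_natCast {R : Type*} [CommRing R] (a k : ℕ) :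
    (centralFactorial R a).eval (k : R) = ((k + a).descFactorial (2 * a + 1) : ℕ) := by
  induction a with
  | zero => simp [centralFactorial_zero]
  | succ a ih =>
    rw [centralFactorial_succ, eval_mul, ih, descFactorial_add_succ, mul_comm]
    rcases le_or_gt k a with hk | hk
    · rw [Nat.descFactorial_of_lt (show k + a < 2 * a + 1 by lia), Nat.cast_zero, mul_zero,
        mul_zero, Nat.cast_zero]
    · have hsub : k + a - (2 * a + 1) = k - (a + 1) := by lia
      rw [hsub]
      push_cast [Nat.cast_sub (Nat.succ_le_of_lt hk)]
      simp only [eval_sub, eval_pow, eval_X, eval_C]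
      ring

/-- The value at `k` of the central factorial polynomial of index `a`, divided by `(2 * a)!`. -/
def centralValue (a k : ℕ) : ℕ := (2 * a + 1) * (k + a).choose (2 * a + 1)

lemma factorial_mul_centralValue (a k : ℕ) :
    (2 * a).factorial * centralValue a k = (k + a).descFactorial (2 * a + 1) := by
  rw [Nat.descFactorial_eq_factorial_mul_choose, Nat.factorial_succ, centralValue]
  ring

lemma centralValue_pos {a k : ℕ} (h : a < k) : 0 < centralValue a k :=
  Nat.mul_pos (Nat.succ_pos _) (Nat.choose_pos (by lia))

lemma centralValue_succ_mul_le (a k : ℕ) :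
    (2 * a + 1) * (2 * a + 2) * centralValue (a + 1) k ≤ centralValue a k * k ^ 2 := by
  have hfact := factorial_mul_centralValue (a + 1) k
  rw [descFactorial_add_succ, ← factorial_mul_centralValue,
    show 2 * (a + 1) = 2 * a + 1 + 1 by ring, Nat.factorial_succ, Nat.factorial_succ] at hfact
  have hle : (k + a + 1) * (k + a - (2 * a + 1)) ≤ k ^ 2 := by
    rcases le_or_gt k a with hk | hk
    · simp [show k + a - (2 * a + 1) = 0 by lia]
    · obtain ⟨m, rfl⟩ := Nat.exists_eq_add_of_lt hk
      rw [show a + m + 1 + a - (2 * a + 1) = m by lia]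
      nlinarith
  refine Nat.le_of_mul_le_mul_left ?_ (2 * a).factorial_pos
  calc (2 * a).factorial * ((2 * a + 1) * (2 * a + 2) * centralValue (a + 1) k)
      = (2 * a).factorial * centralValue a k * ((k + a + 1) * (k + a - (2 * a + 1))) := by
        linear_combination hfact
    _ ≤ (2 * a).factorial * centralValue a k * k ^ 2 := Nat.mul_le_mul_left _ hle
    _ = (2 * a).factorial * (centralValue a k * k ^ 2) := mul_assoc _ _ _

lemma centralValue_add_le {a k M : ℕ} (h : k ≤ M * (2 * a + 1)) (m : ℕ) :
    centralValue (a + m) k ≤ centralValue a k * M ^ (2 * m) := by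
  induction m with
  | zero => simp
  | succ m ih =>
    set b := a + m
    have hk : k ^ 2 ≤ M ^ 2 * ((2 * b + 1) * (2 * b + 2)) := by
      have hkb : k ≤ M * (2 * b + 1) := h.trans (by gcongr; lia)
      nlinarith [Nat.pow_le_pow_left hkb 2, Nat.zero_le (M ^ 2 * (2 * b + 1))]
    have hstep : centralValue (b + 1) k ≤ centralValue b k * M ^ 2 := by
      refine Nat.le_of_mul_le_mul_left ?_ (show 0 < (2 * b + 1) * (2 * b + 2) by positivity)
      refine (centralValue_succ_mul_le b k).trans ((Nat.mul_le_mul_left _ hk).trans_eq ?_)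
      ring
    calc centralValue (b + 1) k ≤ centralValue b k * M ^ 2 := hstep
      _ ≤ centralValue a k * M ^ (2 * m) * M ^ 2 := Nat.mul_le_mul_right _ ih
      _ = centralValue a k * M ^ (2 * (m + 1)) := by ring

lemma factorial_mul_centralValue_le (a k : ℕ) :
    (2 * a).factorial * centralValue a k ≤ k ^ (2 * a + 1) := by
  induction a with
  | zero => simp [centralValue]
  | succ a ih =>
    calc (2 * (a + 1)).factorial * centralValue (a + 1) k
        = (2 * a).factorial * ((2 * a + 1) * (2 * a + 2) * centralValue (a + 1) k) := by
          rw [show 2 * (a + 1) = 2 * a + 1 + 1 by ring, Nat.factorial_succ, Nat.factorial_succ]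
          ring
      _ ≤ (2 * a).factorial * (centralValue a k * k ^ 2) :=
          Nat.mul_le_mul_left _ (centralValue_succ_mul_le a k)
      _ ≤ k ^ (2 * a + 1) * k ^ 2 := by
          rw [← mul_assoc]
          exact Nat.mul_le_mul_right _ ih
      _ = k ^ (2 * (a + 1) + 1) := by ring

lemma centralValue_le_exp {r : ℝ} (hr : 0 < r) (a k : ℕ) :
    (centralValue a k : ℝ) ≤ k * (r⁻¹ ^ (2 * a) * Real.exp (r * k)) := by
  have hfact : ((2 * a).factorial : ℝ) * centralValue a k ≤ k ^ (2 * a + 1) := by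
    exact_mod_cast factorial_mul_centralValue_le a k
  have hexp := Real.pow_div_factorial_le_exp (r * k) (by positivity) (2 * a)
  calc (centralValue a k : ℝ) ≤ k ^ (2 * a + 1) / (2 * a).factorial := by
        rwa [le_div_iff₀' (by positivity)]
    _ = k * (r⁻¹ ^ (2 * a) * ((r * k) ^ (2 * a) / (2 * a).factorial)) := by
        rw [mul_div_assoc', ← mul_pow, inv_mul_cancel_left₀ hr.ne']
        ring
    _ ≤ k * (r⁻¹ ^ (2 * a) * Real.exp (r * k)) := by gcongr

/-- The value of the auxiliary polynomial `auxPoly n` at `k`. -/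
def auxValue (n k : ℕ) : ℕ := ∏ i, centralValue (weight i * n) k

lemma auxPoly_eval_natCast (n k : ℕ) : (auxPoly n).eval (k : ℂ) = auxValue n k := by
  have hfact : (centralProd ℂ n).eval (k : ℂ) = factorialProd n * auxValue n k := by
    rw [centralProd, eval_prod, factorialProd, auxValue, ← Nat.cast_mul, ← prod_mul_distrib,
      Nat.cast_prod]
    exact prod_congr rfl fun i _ ↦ by
      rw [centralFactorial_eval_natCast, factorial_mul_centralValue]
  have hne : (factorialProd n : ℂ) ≠ 0 := by exact_mod_cast (factorialProd_pos n).ne'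
  rw [auxPoly, eval_mul, eval_C, hfact, inv_mul_cancel_left₀ hne]

/-- The series to which the operator of `cothKernel` sends the auxiliary polynomial; up to
arithmetic factors it is the common leading coefficient of the linear forms. -/
noncomputable def auxSeries (n : ℕ) : ℝ := ∑' k : ℕ, auxValue n k * Real.exp logRatio ^ k

lemma hasSum_auxValue_ofReal (n : ℕ) :
    HasSum (fun k : ℕ ↦ ((auxValue n k * Real.exp logRatio ^ k : ℝ) : ℂ))
      (diffOp cothKernel logRatio (auxPoly n)) := by
  have hzero : (auxPoly n).eval 0 = 0 := by
    have hle : |(0 : ℤ)| ≤ (3 * n : ℕ) := by simp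
    simpa using (eval_derivatives_eq_zero_of_X_sub_C_pow_three_dvd
      (X_sub_C_pow_three_dvd_auxPoly hle)).1
  simpa [hzero, auxPoly_eval_natCast] using
    hasSum_eval_mul_exp_pow logRatio_mem_negHalfPlane (auxPoly n)

lemma hasSum_auxSeries (n : ℕ) :
    HasSum (fun k : ℕ ↦ auxValue n k * Real.exp logRatio ^ k) (auxSeries n) :=
  (Complex.summable_ofReal.1 (hasSum_auxValue_ofReal n).summable).hasSum

lemma diffOp_cothKernel_auxPoly (n : ℕ) :
    diffOp cothKernel logRatio (auxPoly n) = auxSeries n := by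
  rw [← (hasSum_auxValue_ofReal n).tsum_eq, auxSeries, Complex.ofReal_tsum]

end CentralValue

section SeriesGrowth

open Finset

lemma neg_two_lt_logRatio : -2 < logRatio := by
  have hsqrt : Real.sqrt 13 < 4 := (Real.sqrt_lt' (by norm_num)).2 (by norm_num)
  have hexp : Real.exp (-2) ≤ 1 / 3 := by
    rw [Real.exp_neg, ← one_div]
    exact one_div_le_one_div_of_le (by norm_num) (by linarith [Real.add_one_le_exp 2])
  rw [← Real.exp_lt_exp, exp_logRatio]
  linarith

lemma exp_neg_le_auxSeries (n : ℕ) : Real.exp (-10 * (n + 1)) ≤ auxSeries n := by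
  have hpos : 1 ≤ auxValue n (5 * n + 1) := prod_pos fun i _ ↦ centralValue_pos <| by
    rw [weight_eq]
    have hi : (i : ℕ) + 2 ≤ 5 := by lia
    exact Nat.lt_succ_of_le (Nat.mul_le_mul_right n hi)
  calc Real.exp (-10 * (n + 1)) ≤ Real.exp logRatio ^ (5 * n + 1) := by
        rw [← Real.exp_nat_mul, Real.exp_le_exp]
        push_cast
        nlinarith [neg_two_lt_logRatio]
    _ ≤ auxValue n (5 * n + 1) * Real.exp logRatio ^ (5 * n + 1) :=
        le_mul_of_one_le_left (by positivity) (by exact_mod_cast hpos)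
    _ ≤ auxSeries n := le_hasSum (hasSum_auxSeries n) _ fun k _ ↦ by positivity

lemma auxSeries_pos (n : ℕ) : 0 < auxSeries n := (Real.exp_pos _).trans_le (exp_neg_le_auxSeries n)

lemma auxValue_succ_le {n k : ℕ} (h : k ≤ 1000 * (n + 1)) :
    auxValue (n + 1) k ≤ 1000 ^ 28 * auxValue n k := by
  have hpow : ∏ i, 1000 ^ (2 * weight i) = 1000 ^ 28 := by
    rw [prod_pow_eq_pow_sum, Fin.sum_univ_four]
    norm_num [weight_eq]
  calc auxValue (n + 1) k ≤ ∏ i, centralValue (weight i * n) k * 1000 ^ (2 * weight i) :=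
        prod_le_prod' fun i _ ↦ by
          rw [mul_add_one]
          refine centralValue_add_le (h.trans (Nat.mul_le_mul_left _ ?_)) _
          rw [weight_eq]
          nlinarith
    _ = 1000 ^ 28 * auxValue n k := by rw [prod_mul_distrib, hpow, mul_comm, auxValue]

lemma ten_lt_exp : 10 < Real.exp 2.5 := by
  have hpow : (10 : ℝ) ^ 2 < Real.exp 1 ^ 5 :=
    lt_trans (by norm_num) (pow_lt_pow_left₀ Real.exp_one_gt_d9 (by norm_num) (by norm_num))
  rw [← Real.exp_nat_mul, show ((5 : ℕ) : ℝ) * 1 = (2 : ℕ) * 2.5 by norm_num,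
    Real.exp_nat_mul] at hpow
  exact lt_of_pow_lt_pow_left₀ 2 (Real.exp_pos _).le hpow

lemma auxValue_le_exp (n k : ℕ) :
    (auxValue n k : ℝ) ≤ k ^ 4 * (Real.exp (70 * n) * Real.exp (0.4 * k)) := by
  calc (auxValue n k : ℝ)
      ≤ ∏ i, (k : ℝ) * (0.1⁻¹ ^ (2 * (weight i * n)) * Real.exp (0.1 * k)) := by
        rw [auxValue, Nat.cast_prod]
        exact prod_le_prod (fun i _ ↦ by positivity) fun i _ ↦ centralValue_le_exp (by norm_num) _ _
    _ = k ^ 4 * (10 ^ (28 * n) * Real.exp (0.1 * k) ^ 4) := by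
        rw [Fin.prod_univ_four]
        norm_num [weight_eq]
        ring
    _ ≤ k ^ 4 * (Real.exp 2.5 ^ (28 * n) * Real.exp (0.1 * k) ^ 4) := by
        gcongr
        exact ten_lt_exp.le
    _ = k ^ 4 * (Real.exp (70 * n) * Real.exp (0.4 * k)) := by
        rw [← Real.exp_nat_mul, ← Real.exp_nat_mul]
        push_cast
        ring_nf

lemma exists_auxValue_mul_exp_le : ∃ K > 0, ∀ n k : ℕ, auxValue n k * Real.exp logRatio ^ k ≤
    K * (Real.exp (70 * n) * Real.exp (-0.1 * k)) := by
  refine ⟨24 / 0.06 ^ 4, by norm_num, fun n k ↦ ?_⟩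
  have hk : (k : ℝ) ^ 4 ≤ 24 / 0.06 ^ 4 * Real.exp (0.06 * k) := by
    have hexp := Real.pow_div_factorial_le_exp (0.06 * k) (by positivity) 4
    norm_num [Nat.factorial] at hexp ⊢
    linarith
  have hlog : Real.exp logRatio ^ k ≤ Real.exp (-0.5695 * k) := by
    rw [← Real.exp_nat_mul, Real.exp_le_exp, mul_comm]
    gcongr
    exact logRatio_lt.le
  calc auxValue n k * Real.exp logRatio ^ k
      ≤ 24 / 0.06 ^ 4 * Real.exp (0.06 * k) * (Real.exp (70 * n) * Real.exp (0.4 * k)) *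
          Real.exp (-0.5695 * k) := by
        refine mul_le_mul ((auxValue_le_exp n k).trans ?_) hlog (by positivity) (by positivity)
        gcongr
    _ = 24 / 0.06 ^ 4 * (Real.exp (70 * n) * Real.exp (-0.1095 * k)) := by
        rw [show -0.1095 * (k : ℝ) = 0.06 * k + 0.4 * k + -0.5695 * k by ring, Real.exp_add,
          Real.exp_add]
        ring
    _ ≤ 24 / 0.06 ^ 4 * (Real.exp (70 * n) * Real.exp (-0.1 * k)) := by
        gcongr
        norm_num

lemma exists_auxSeries_succ_le : ∃ K > 0, ∀ n, auxSeries (n + 1) ≤ K * auxSeries n := by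
  obtain ⟨K, hK, htail⟩ := exists_auxValue_mul_exp_le
  have hgeom := (Real.summable_exp_nat_mul_iff.2 (show (-0.01 : ℝ) < 0 by norm_num)).hasSum
  set T := ∑' k : ℕ, Real.exp (k * -0.01)
  have : 0 ≤ T := tsum_nonneg fun k ↦ (Real.exp_pos _).le
  refine ⟨1000 ^ 28 + K * T, by positivity, fun n ↦ ?_⟩
  have hq := auxSeries_pos n
  have hmajorant := ((hasSum_auxSeries n).mul_left (1000 ^ 28)).add
    (hgeom.mul_left (K * auxSeries n))
  refine (hasSum_le (fun k ↦ ?_) (hasSum_auxSeries (n + 1)) hmajorant).trans_eq (by ring)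
  rcases le_or_gt k (1000 * (n + 1)) with hk | hk
  · have hvalue : (auxValue (n + 1) k : ℝ) ≤ 1000 ^ 28 * auxValue n k := by
      exact_mod_cast auxValue_succ_le hk
    rw [← mul_assoc]
    exact le_add_of_le_of_nonneg (by gcongr) (by positivity)
  · have hexp : Real.exp (70 * (n + 1 : ℕ)) * Real.exp (-0.1 * k) ≤
        Real.exp (-10 * (n + 1)) * Real.exp (k * -0.01) := by
      rw [← Real.exp_add, ← Real.exp_add, Real.exp_le_exp]
      have hk' : 1000 * ((n : ℝ) + 1) ≤ k := by exact_mod_cast hk.le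
      push_cast
      linarith
    refine le_add_of_nonneg_of_le (by positivity) ((htail (n + 1) k).trans ?_)
    rw [mul_assoc]
    refine mul_le_mul_of_nonneg_left (hexp.trans ?_) hK.le
    gcongr
    exact exp_neg_le_auxSeries n

lemma exists_auxSeries_le_exp : ∃ K > 0, ∀ n : ℕ, auxSeries n ≤ K * Real.exp (53.2 * n) := by
  obtain ⟨K, hK, hle⟩ := exists_norm_diffOp_cothKernel_le
  refine ⟨K, hK, fun n ↦ ?_⟩
  simpa only [diffOp_cothKernel_auxPoly, Complex.norm_real, Real.norm_eq_abs,
    abs_of_pos (auxSeries_pos n)] using hle n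

end SeriesGrowth

section QuadraticForms

open Filter

lemma abs_mul_quadratic_dichotomy {α H ε : ℝ} {a b c d A B C : ℤ} (hA : |(A : ℝ)| ≤ H)
    (hB : |(B : ℝ)| ≤ H) (h₁ : |α * a + b| ≤ ε) (h₂ : |α ^ 2 * a + 2 * α * b + d * c| ≤ ε)
    (hε : (2 * |α| + 2) * H * ε ≤ 1 / 2) :
    |a * (A * α ^ 2 + B * α + C)| ≤ (2 * |α| + 2) * H * ε ∨
      1 / 2 ≤ |a * (A * α ^ 2 + B * α + C)| := by
  set N : ℤ := d * c * A - b * B + a * C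
  set e₁ := α * a + b
  set e₂ := α ^ 2 * a + 2 * α * b + d * c
  set r := A * (2 * α * e₁ - e₂) + B * e₁
  have hH : 0 ≤ H := (abs_nonneg _).trans hA
  have hN : a * (A * α ^ 2 + B * α + C) = N + r := by
    simp only [N, r, e₁, e₂]
    push_cast
    ring
  have hr : |r| ≤ (2 * |α| + 2) * H * ε := by
    calc |r| ≤ |(A : ℝ)| * |2 * α * e₁ - e₂| + |(B : ℝ)| * |e₁| := by
          rw [← abs_mul, ← abs_mul]
          exact abs_add_le _ _
      _ ≤ |(A : ℝ)| * (2 * |α| * |e₁| + |e₂|) + |(B : ℝ)| * |e₁| := by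
          gcongr
          exact (abs_sub _ _).trans_eq (by rw [abs_mul, abs_mul, abs_two])
      _ ≤ H * (2 * |α| * ε + ε) + H * ε := by gcongr
      _ = (2 * |α| + 2) * H * ε := by ring
  rw [hN]
  rcases eq_or_ne N 0 with h0 | h0
  · left
    rwa [h0, Int.cast_zero, zero_add]
  · right
    have hone : (1 : ℝ) ≤ |(N : ℝ)| := by exact_mod_cast Int.one_le_abs h0
    have htri := abs_sub_abs_le_abs_sub (N : ℝ) (-r)
    rw [abs_neg, sub_neg_eq_add] at htri
    linarith

lemma mul_abs_quadratic_dichotomy {α s t D E H : ℝ} {a b c d A B C : ℤ} (hs : 0 ≤ s) (ht : 0 < t)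
    (hD : 0 < D) (htD : 1 ≤ t * D) (ha : 0 ≤ a) (hA : |(A : ℝ)| ≤ H) (hB : |(B : ℝ)| ≤ H)
    (h₁ : t * |α * a + b| ≤ E) (h₂ : t * |α ^ 2 * a + 2 * α * b + d * c| ≤ E)
    (hE : (2 * |α| + 2) * H * (E * D) ≤ 1 / 2) :
    s * t * a * |A * α ^ 2 + B * α + C| ≤ s * ((2 * |α| + 2) * H * E) ∨
      s / (2 * D) ≤ s * t * a * |A * α ^ 2 + B * α + C| := by
  have hH : 0 ≤ H := (abs_nonneg _).trans hA
  have hE₀ : 0 ≤ E := (by positivity : 0 ≤ t * |α * a + b|).trans h₁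
  have htD' : 1 / t ≤ D := (div_le_iff₀' ht).2 htD
  have hε : (2 * |α| + 2) * H * (E / t) ≤ 1 / 2 := by
    refine le_trans ?_ hE
    rw [div_eq_mul_one_div E]
    gcongr
  have hmul : s * t * a * |A * α ^ 2 + B * α + C| =
      s * (t * |a * (A * α ^ 2 + B * α + C)|) := by
    rw [abs_mul, abs_of_nonneg (Int.cast_nonneg ha)]
    ring
  rw [hmul]
  refine (abs_mul_quadratic_dichotomy (C := C) hA hB ((le_div_iff₀' ht).2 h₁)
    ((le_div_iff₀' ht).2 h₂) hε).imp (fun h ↦ ?_) (fun h ↦ ?_)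
  · rw [← mul_div_assoc, le_div_iff₀' ht] at h
    gcongr
  · calc s / (2 * D) = s * (1 / D * (1 / 2)) := by ring
      _ ≤ s * (t * |a * (A * α ^ 2 + B * α + C)|) := by
        gcongr
        exact (div_le_iff₀ hD).2 htD

variable {q : ℕ → ℝ} {γ δ σ τ K₁ K₂ K₃ L Q R : ℝ}

lemma exists_natCast_mul_exp_neg_lt (hγτ : γ < τ) (M : ℝ) (hL : 0 < L) (N : ℝ) (hδτ : δ < τ) :
    ∃ n : ℕ, N ≤ Real.exp ((τ - δ) * n) ∧ M * Real.exp (-τ * n) < L * Real.exp (-γ * n) := by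
  have htendsto {r : ℝ} (hr : 0 < r) : Tendsto (fun n : ℕ ↦ Real.exp (r * n)) atTop atTop :=
    Real.tendsto_exp_atTop.comp (tendsto_natCast_atTop_atTop.const_mul_atTop hr)
  obtain ⟨n, hN, hM⟩ := (((htendsto (sub_pos.2 hδτ)).eventually_ge_atTop N).and
    ((htendsto (sub_pos.2 hγτ)).eventually_gt_atTop (M / L))).exists
  refine ⟨n, hN, ?_⟩
  rw [div_lt_iff₀' hL] at hM
  calc M * Real.exp (-τ * n) < L * Real.exp ((τ - γ) * n) * Real.exp (-τ * n) := by gcongr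
    _ = L * Real.exp (-γ * n) := by
      rw [mul_assoc, ← Real.exp_add]
      ring_nf

lemma exp_mul_add_one_le_of_mul_exp_le (hK₃ : 0 < K₃) {M x : ℝ}
    (h : K₃ * Real.exp (-δ * (x + 1)) ≤ M * Real.exp (-τ * x)) :
    Real.exp ((τ - δ) * (x + 1)) ≤ M * Real.exp τ / K₃ := by
  rw [le_div_iff₀' hK₃]
  calc K₃ * Real.exp ((τ - δ) * (x + 1))
      = K₃ * Real.exp (-δ * (x + 1)) * Real.exp (τ * (x + 1)) := by
        rw [mul_assoc, ← Real.exp_add]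
        ring_nf
    _ ≤ M * Real.exp (-τ * x) * Real.exp (τ * (x + 1)) := by gcongr
    _ = M * Real.exp τ := by
        rw [mul_assoc, ← Real.exp_add]
        ring_nf

lemma exists_nat_exp_le_of_dichotomy (hδτ : δ < τ) (hγτ : γ < τ) (hL : 0 < L) (hK₁ : 0 ≤ K₁)
    (hK₂ : 0 ≤ K₂) (hK₃ : 0 < K₃) (hR : 0 ≤ R) (hlow : ∀ n : ℕ, L * Real.exp (-γ * n) ≤ q n)
    (hsucc : ∀ n, q (n + 1) ≤ R * q n) {H p : ℝ} (hH : 1 ≤ H) (hp : 0 < p)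
    (h : ∀ n : ℕ, K₁ * H ≤ Real.exp ((τ - δ) * n) →
      q n * p ≤ K₂ * H * Real.exp (-τ * n) ∨ K₃ * Real.exp (-δ * n) ≤ q n * p) :
    ∃ n : ℕ, Real.exp ((τ - δ) * n) ≤
      (1 + K₁ * Real.exp (τ - δ) + R * K₂ * Real.exp τ / K₃) * H ∧
        K₃ * Real.exp (-δ * n) ≤ q n * p := by
  classical
  have hex : ∃ n : ℕ, K₁ * H ≤ Real.exp ((τ - δ) * n) ∧ K₃ * Real.exp (-δ * n) ≤ q n * p := by
    obtain ⟨n, hn, hlt⟩ :=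
      exists_natCast_mul_exp_neg_lt hγτ (K₂ * H) (mul_pos hL hp) (K₁ * H) hδτ
    refine ⟨n, hn, (h n hn).resolve_left (hlt.trans_le ?_).not_ge⟩
    rw [mul_right_comm]
    gcongr
    exact hlow n
  obtain ⟨-, hfind⟩ := Nat.find_spec hex
  refine ⟨Nat.find hex, ?_, hfind⟩
  have h₁ : 0 ≤ K₁ * Real.exp (τ - δ) * H := by positivity
  have h₂ : 0 ≤ R * K₂ * Real.exp τ / K₃ * H := by positivity
  rcases hm : Nat.find hex with _ | m
  · rw [Nat.cast_zero, mul_zero, Real.exp_zero]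
    linarith
  have hmin := Nat.find_min hex (m := m) (by lia)
  rw [not_and] at hmin
  rw [hm, Nat.cast_succ] at hfind
  rw [Nat.cast_succ]
  rcases lt_or_ge (Real.exp ((τ - δ) * m)) (K₁ * H) with hlt | hge
  · calc Real.exp ((τ - δ) * (m + 1)) = Real.exp (τ - δ) * Real.exp ((τ - δ) * m) := by
          rw [← Real.exp_add]
          ring_nf
      _ ≤ Real.exp (τ - δ) * (K₁ * H) := by gcongr
      _ ≤ (1 + K₁ * Real.exp (τ - δ) + R * K₂ * Real.exp τ / K₃) * H := by linarith
  · have hle : K₃ * Real.exp (-δ * (m + 1)) ≤ R * (K₂ * H) * Real.exp (-τ * m) := by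
      refine hfind.trans ((mul_le_mul_of_nonneg_right (hsucc m) hp.le).trans ?_)
      rw [mul_assoc, mul_assoc]
      exact mul_le_mul_of_nonneg_left ((h m hge).resolve_right (hmin hge)) hR
    calc Real.exp ((τ - δ) * (m + 1)) ≤ R * (K₂ * H) * Real.exp τ / K₃ :=
          exp_mul_add_one_le_of_mul_exp_le hK₃ hle
      _ = R * K₂ * Real.exp τ / K₃ * H := by ring
      _ ≤ (1 + K₁ * Real.exp (τ - δ) + R * K₂ * Real.exp τ / K₃) * H := by linarith

lemma exists_mul_rpow_le_of_dichotomy (hδτ : δ < τ) (hγτ : γ < τ) (hσδ : 0 ≤ σ + δ) (hL : 0 < L)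
    (hK₁ : 0 ≤ K₁) (hK₂ : 0 ≤ K₂) (hK₃ : 0 < K₃) (hQ : 0 < Q) (hR : 0 ≤ R)
    (hlow : ∀ n : ℕ, L * Real.exp (-γ * n) ≤ q n) (hupp : ∀ n : ℕ, q n ≤ Q * Real.exp (σ * n))
    (hsucc : ∀ n, q (n + 1) ≤ R * q n) :
    ∃ c > 0, ∀ H p : ℝ, 1 ≤ H → 0 < p →
      (∀ n : ℕ, K₁ * H ≤ Real.exp ((τ - δ) * n) →
        q n * p ≤ K₂ * H * Real.exp (-τ * n) ∨ K₃ * Real.exp (-δ * n) ≤ q n * p) →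
      c * H ^ (-((σ + δ) / (τ - δ))) ≤ p := by
  set ω := (σ + δ) / (τ - δ)
  set G := 1 + K₁ * Real.exp (τ - δ) + R * K₂ * Real.exp τ / K₃
  have hω : 0 ≤ ω := div_nonneg hσδ (sub_pos.2 hδτ).le
  have hG : 0 < G := by positivity
  refine ⟨K₃ / Q * G ^ (-ω), by positivity, fun H p hH hp h ↦ ?_⟩
  obtain ⟨n, hnG, hn⟩ :=
    exists_nat_exp_le_of_dichotomy hδτ hγτ hL hK₁ hK₂ hK₃ hR hlow hsucc hH hp h
  have hpow : (G * H) ^ (-ω) ≤ Real.exp (-δ * n) / Real.exp (σ * n) :=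
    calc (G * H) ^ (-ω) ≤ Real.exp ((τ - δ) * n) ^ (-ω) :=
          Real.rpow_le_rpow_of_nonpos (Real.exp_pos _) hnG (neg_nonpos.2 hω)
      _ = Real.exp (-δ * n - σ * n) := by
          rw [← Real.exp_mul]
          congr 1
          linear_combination (-(n : ℝ)) * div_mul_cancel₀ (σ + δ) (sub_pos.2 hδτ).ne'
      _ = Real.exp (-δ * n) / Real.exp (σ * n) := Real.exp_sub _ _
  calc K₃ / Q * G ^ (-ω) * H ^ (-ω) = K₃ / Q * (G * H) ^ (-ω) := by
        rw [mul_assoc, Real.mul_rpow hG.le (zero_le_one.trans hH)]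
    _ ≤ K₃ / Q * (Real.exp (-δ * n) / Real.exp (σ * n)) := by gcongr
    _ = K₃ * Real.exp (-δ * n) / (Q * Real.exp (σ * n)) := by ring
    _ ≤ p := by
        rw [div_le_iff₀' (by positivity)]
        exact hn.trans (by gcongr; exact hupp n)

end QuadraticForms

section LinearForms

open Polynomial

/-- The number `√13 · log ((√13 - 1) / (√13 + 1))`, i.e. `α₆`. -/
noncomputable def alpha : ℝ := Real.sqrt 13 * logRatio

/-- The common factor by which the approximating linear forms in `1`, `alpha`, `alpha ^ 2` differ
from forms with integer coefficients. -/
noncomputable def arithmeticScale (n : ℕ) : ℝ := 3 ^ (3 * n) / (2 * commonDenom n)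

lemma arithmeticScale_pos (n : ℕ) : 0 < arithmeticScale n := by
  have hD : (0 : ℝ) < commonDenom n := mod_cast commonDenom_pos n
  unfold arithmeticScale
  positivity

lemma exists_one_le_arithmeticScale_mul :
    ∃ K > 0, ∀ n : ℕ, 1 ≤ arithmeticScale n * (K * Real.exp (5.33 * n)) := by
  obtain ⟨K, hK, h⟩ := exists_commonDenom_div_le
  refine ⟨2 * K, by positivity, fun n ↦ ?_⟩
  have hD : (0 : ℝ) < commonDenom n := mod_cast commonDenom_pos n
  have hle := (div_le_iff₀ (by positivity)).1 (h n)
  rw [arithmeticScale, div_mul_eq_mul_div, le_div_iff₀ (by positivity)]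
  linarith

lemma exists_int_diffOp_cothKernel_eq (n : ℕ) : ∃ a b c : ℤ,
    diffOp cothKernel logRatio (auxPoly n) = Real.sqrt 13 * arithmeticScale n * a ∧
      diffOp cothKernel logRatio (derivative (auxPoly n)) = arithmeticScale n * b ∧
      diffOp cothKernel logRatio (derivative (derivative (auxPoly n))) =
        Real.sqrt 13 * arithmeticScale n * c := by
  obtain ⟨a, b, c, ha, hb, hc⟩ := exists_int_commonDenom_mul_diffOp n
  have hD : (commonDenom n : ℂ) ≠ 0 := mod_cast (commonDenom_pos n).ne'
  have hscale : (arithmeticScale n : ℂ) = 3 ^ (3 * n) / (2 * commonDenom n) := by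
    simp [arithmeticScale]
  refine ⟨a, b, c, ?_, ?_, ?_⟩ <;> rw [hscale] <;> field_simp
  · linear_combination ha
  · linear_combination hb
  · linear_combination hc

lemma exists_norm_diffOp_regCothKernel_le : ∃ K > 0, ∀ n : ℕ,
    ‖diffOp regCothKernel logRatio (auxPoly n)‖ ≤ K * Real.exp (-10.5 * n) ∧
      ‖diffOp (fun ζ ↦ ζ * regCothKernel ζ) logRatio (auxPoly n)‖ ≤ K * Real.exp (-10.5 * n) := by
  obtain ⟨K₁, hK₁, h₁⟩ := exists_norm_diffOp_le_of_differentiableOn_support_expSlope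
    differentiableOn_regCothKernel
  obtain ⟨K₂, hK₂, h₂⟩ := exists_norm_diffOp_le_of_differentiableOn_support_expSlope
    (differentiableOn_id.mul differentiableOn_regCothKernel)
  refine ⟨K₁ + K₂, by positivity, fun n ↦ ⟨(h₁ n).trans ?_, (h₂ n).trans ?_⟩⟩ <;>
    gcongr <;> linarith

lemma exists_linear_forms : ∃ K > 0, ∀ n : ℕ, ∃ a b c : ℤ,
    auxSeries n = Real.sqrt 13 * arithmeticScale n * a ∧
      arithmeticScale n * |alpha * a + b| ≤ K * Real.exp (-10.5 * n) ∧
      arithmeticScale n * |alpha ^ 2 * a + 2 * alpha * b + 13 * c| ≤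
        4 * K * Real.exp (-10.5 * n) := by
  obtain ⟨K, hK, hbound⟩ := exists_norm_diffOp_regCothKernel_le
  refine ⟨K, hK, fun n ↦ ?_⟩
  obtain ⟨a, b, c, ha, hb, hc⟩ := exists_int_diffOp_cothKernel_eq n
  obtain ⟨hlin, hquad⟩ := hbound n
  have hscale := abs_of_pos (arithmeticScale_pos n)
  have hsqrt : Real.sqrt 13 ≤ 4 := Real.sqrt_le_iff.2 ⟨by norm_num, by norm_num⟩
  have hsq : (Real.sqrt 13 : ℂ) ^ 2 = 13 := mod_cast Real.sq_sqrt (by norm_num : (0 : ℝ) ≤ 13)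
  have hlin_eq : diffOp regCothKernel logRatio (auxPoly n) =
      (arithmeticScale n * (alpha * a + b) : ℝ) := by
    rw [diffOp_regCothKernel logRatio_mem_negHalfPlane, ha, hb, alpha]
    push_cast
    ring
  have hquad_eq : Real.sqrt 13 * diffOp (fun ζ ↦ ζ * regCothKernel ζ) logRatio (auxPoly n) =
      (arithmeticScale n * (alpha ^ 2 * a + 2 * alpha * b + 13 * c) : ℝ) := by
    rw [diffOp_id_mul_regCothKernel logRatio_mem_negHalfPlane, ha, hb, hc, alpha]
    push_cast
    linear_combination arithmeticScale n * c * hsq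
  refine ⟨a, b, c, mod_cast (diffOp_cothKernel_auxPoly n).symm.trans ha, ?_, ?_⟩
  · rwa [hlin_eq, Complex.norm_real, Real.norm_eq_abs, abs_mul, hscale] at hlin
  · rw [← hscale, ← abs_mul, ← Real.norm_eq_abs, ← Complex.norm_real, ← hquad_eq, norm_mul,
      Complex.norm_real, Real.norm_of_nonneg (Real.sqrt_nonneg _), mul_assoc]
    gcongr

lemma exists_auxSeries_mul_abs_quadratic_dichotomy : ∃ K₁ > 0, ∃ K₂ > 0, ∃ K₃ > 0,
    ∀ (A B C : ℤ) (H : ℝ), |(A : ℝ)| ≤ H → |(B : ℝ)| ≤ H →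
      ∀ n : ℕ, K₁ * H ≤ Real.exp ((10.5 - 5.33) * n) →
        auxSeries n * |A * alpha ^ 2 + B * alpha + C| ≤ K₂ * H * Real.exp (-10.5 * n) ∨
          K₃ * Real.exp (-5.33 * n) ≤ auxSeries n * |A * alpha ^ 2 + B * alpha + C| := by
  obtain ⟨K, hK, hforms⟩ := exists_linear_forms
  obtain ⟨L, hL, hscale⟩ := exists_one_le_arithmeticScale_mul
  set M := (2 * |alpha| + 2) * (4 * K)
  have hs : 0 < Real.sqrt 13 := by positivity
  refine ⟨2 * M * L, by positivity, Real.sqrt 13 * M, by positivity, Real.sqrt 13 / (2 * L),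
    by positivity, fun A B C H hA hB n hn ↦ ?_⟩
  obtain ⟨a, b, c, hq, hlin, hquad⟩ := hforms n
  have ht := arithmeticScale_pos n
  have ha : 0 ≤ a := by
    have hpos := auxSeries_pos n
    rw [hq] at hpos
    exact_mod_cast (pos_of_mul_pos_right hpos (by positivity)).le
  have hE : (2 * |alpha| + 2) * H *
      (4 * K * Real.exp (-10.5 * n) * (L * Real.exp (5.33 * n))) ≤ 1 / 2 := by
    have hexp : Real.exp (-10.5 * n) * Real.exp (5.33 * n) * Real.exp ((10.5 - 5.33) * n) = 1 := by
      rw [← Real.exp_add, ← Real.exp_add, Real.exp_eq_one_iff]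
      ring
    have := mul_le_mul_of_nonneg_left hn
      (by positivity : 0 ≤ Real.exp (-10.5 * n) * Real.exp (5.33 * n) / 2)
    linarith
  rw [hq]
  refine (mul_abs_quadratic_dichotomy (C := C) (d := 13) hs.le ht (by positivity) (hscale n) ha
    hA hB (hlin.trans ?_) (mod_cast hquad) hE).imp (fun h ↦ ?_) (fun h ↦ ?_)
  · gcongr
    linarith
  · exact h.trans_eq (by ring)
  · refine Eq.trans_le ?_ h
    rw [neg_mul, Real.exp_neg]
    ring

lemma exists_mul_rpow_le_abs_quadratic_alpha : ∃ c > 0, ∀ (A B C : ℤ) (H : ℝ), 1 ≤ H →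
    |(A : ℝ)| ≤ H → |(B : ℝ)| ≤ H → A * alpha ^ 2 + B * alpha + C ≠ 0 →
      c * H ^ (-((53.2 + 5.33) / (10.5 - 5.33)) : ℝ) ≤ |A * alpha ^ 2 + B * alpha + C| := by
  obtain ⟨K₁, hK₁, K₂, hK₂, K₃, hK₃, hdich⟩ := exists_auxSeries_mul_abs_quadratic_dichotomy
  obtain ⟨R, hR, hsucc⟩ := exists_auxSeries_succ_le
  obtain ⟨Q, hQ, hupp⟩ := exists_auxSeries_le_exp
  have hlow (n : ℕ) : Real.exp (-10) * Real.exp (-10 * n) ≤ auxSeries n := by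
    rw [← Real.exp_add]
    exact (Real.exp_le_exp.2 (by linarith)).trans (exp_neg_le_auxSeries n)
  obtain ⟨c, hc, h⟩ := exists_mul_rpow_le_of_dichotomy (γ := 10) (δ := 5.33) (σ := 53.2)
    (τ := 10.5) (by norm_num) (by norm_num) (by norm_num) (Real.exp_pos _) hK₁.le hK₂.le hK₃ hQ
    hR.le hlow hupp hsucc
  exact ⟨c, hc, fun A B C H hH hA hB h₀ ↦ h H _ hH (abs_pos.2 h₀) (hdich A B C H hA hB)⟩

end LinearForms

section Height

open Polynomial

lemma abs_coeff_le_polyHeight (P : ℤ[X]) (i : ℕ) : |(P.coeff i : ℝ)| ≤ polyHeight P := by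
  by_cases hi : i ∈ P.support
  · have hle := Finset.le_sup (f := fun i ↦ (P.coeff i).natAbs) hi
    rw [← Int.cast_abs, Int.abs_eq_natAbs]
    exact_mod_cast hle
  · simp [notMem_support_iff.1 hi]

lemma polyHeight_pos {P : ℤ[X]} (hP : P ≠ 0) : 0 < polyHeight P := by
  have hcoeff : (1 : ℝ) ≤ |(P.leadingCoeff : ℝ)| :=
    mod_cast Int.one_le_abs (leadingCoeff_ne_zero.2 hP)
  exact_mod_cast zero_lt_one.trans_le (hcoeff.trans (abs_coeff_le_polyHeight P _))

lemma finite_setOf_aeval_eq_zero_of_polyHeight_le (d M : ℕ) :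
    {β : ℝ | ∃ P : ℤ[X], P ≠ 0 ∧ P.natDegree ≤ d ∧ polyHeight P ≤ M ∧ aeval β P = 0}.Finite := by
  classical
  refine (bUnion_roots_finite (Int.castRingHom ℝ) d (Set.finite_Icc (-(M : ℤ)) M)).subset ?_
  rintro β ⟨P, hP, hdeg, hheight, hβ⟩
  have hmap : P.map (Int.castRingHom ℝ) ≠ 0 :=
    (Polynomial.map_ne_zero_iff Int.cast_injective).2 hP
  refine Set.mem_iUnion₂.2 ⟨P, ⟨hdeg, fun i ↦ abs_le.1 ?_⟩, ?_⟩
  · exact_mod_cast (abs_coeff_le_polyHeight P i).trans (Nat.cast_le.2 hheight)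
  · simpa [hmap, aeval_def, eval_map] using hβ

lemma finite_setOf_exists_irreducible_common_root (α : ℝ) :
    {β : ℝ | ∃ P : ℤ[X], Irreducible P ∧ aeval β P = 0 ∧ aeval α P = 0}.Finite := by
  refine ((minpoly ℚ α).rootSet_finite ℝ).subset ?_
  rintro β ⟨P, hP, hβ, hα⟩
  have hdeg : P.natDegree ≠ 0 := fun h ↦ by
    rw [eq_C_of_natDegree_eq_zero h] at hα hP
    simp_all
  have hirr :=
    ((hP.isPrimitive hdeg).irreducible_iff_irreducible_map_fraction_map (K := ℚ)).1 hP
  have hmin := minpoly.eq_of_irreducible hirr ((aeval_map_algebraMap ℚ α P).trans hα)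
  refine mem_rootSet.2 ⟨?_, ?_⟩
  · rw [← hmin]
    exact mul_ne_zero hirr.ne_zero (by simpa using hirr.ne_zero)
  · rw [← hmin, map_mul, aeval_map_algebraMap, hβ, zero_mul]

lemma aeval_eq_of_natDegree_le_two {P : ℤ[X]} (hP : P.natDegree ≤ 2) (x : ℝ) :
    aeval x P = P.coeff 2 * x ^ 2 + P.coeff 1 * x + P.coeff 0 := by
  rw [aeval_eq_sum_range' (Nat.lt_succ_of_le hP)]
  simp only [Finset.sum_range_succ, Finset.sum_range_zero, zsmul_eq_mul]
  ring

lemma abs_aeval_le_polyHeight_mul {P : ℤ[X]} (hP : P.natDegree ≤ 2) {α β : ℝ}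
    (hβ : aeval β P = 0) (hαβ : |α - β| ≤ 1) :
    |aeval α P| ≤ |α - β| * (polyHeight P * (2 * |α| + 2)) := by
  have hfactor : aeval α P = (α - β) * (P.coeff 2 * (2 * α - (α - β)) + P.coeff 1) := by
    rw [← sub_zero (aeval α P), ← hβ, aeval_eq_of_natDegree_le_two hP,
      aeval_eq_of_natDegree_le_two hP]
    ring
  have hsum : |2 * α - (α - β)| ≤ 2 * |α| + 1 := by
    refine (abs_sub _ _).trans ?_
    rw [abs_mul, abs_two]
    gcongr
  rw [hfactor, abs_mul]
  gcongr
  calc |(P.coeff 2 * (2 * α - (α - β)) + P.coeff 1 : ℝ)|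
      ≤ |(P.coeff 2 : ℝ)| * |2 * α - (α - β)| + |(P.coeff 1 : ℝ)| :=
        (abs_add_le _ _).trans_eq (by rw [abs_mul])
    _ ≤ polyHeight P * (2 * |α| + 1) + polyHeight P := by
        gcongr <;> exact abs_coeff_le_polyHeight P _
    _ = polyHeight P * (2 * |α| + 2) := by ring

end Height

section NonQuadraticity

open Polynomial

lemma le_rpow_of_mul_rpow_neg_le {c ω κ M h : ℝ} (hc : 0 < c) (hκ : ω + 1 < κ) (hh : 0 < h)
    (hle : c * h ^ (-ω) ≤ h ^ (-κ) * (h * M)) : h ≤ (M / c) ^ (κ - (ω + 1))⁻¹ := by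
  have hpow : h ^ (κ - (ω + 1)) ≤ M / c := by
    rw [le_div_iff₀' hc]
    calc c * h ^ (κ - (ω + 1)) = c * h ^ (-ω) * h ^ (κ - 1) := by
          rw [mul_assoc, ← Real.rpow_add hh]
          ring_nf
      _ ≤ h ^ (-κ) * (h * M) * h ^ (κ - 1) := by gcongr
      _ = h ^ (-κ + 1 + (κ - 1)) * M := by
          rw [Real.rpow_add hh, Real.rpow_add hh, Real.rpow_one]
          ring
      _ = M := by rw [show -κ + 1 + (κ - 1) = 0 by ring, Real.rpow_zero, one_mul]
  rwa [Real.le_rpow_inv_iff_of_pos hh.le ((Real.rpow_nonneg hh.le _).trans hpow) (sub_pos.2 hκ)]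

lemma finite_setOf_abs_sub_lt_rpow_polyHeight {α c ω κ : ℝ} (hc : 0 < c) (hω : 0 ≤ ω)
    (hlow : ∀ (A B C : ℤ) (H : ℝ), 1 ≤ H → |(A : ℝ)| ≤ H → |(B : ℝ)| ≤ H →
      A * α ^ 2 + B * α + C ≠ 0 → c * H ^ (-ω) ≤ |A * α ^ 2 + B * α + C|) (hκ : ω + 1 < κ) :
    {β : ℝ | ∃ P : ℤ[X], Irreducible P ∧ P.natDegree ≤ 2 ∧ aeval β P = 0 ∧
      |α - β| < (polyHeight P : ℝ) ^ (-κ)}.Finite := by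
  refine ((finite_setOf_exists_irreducible_common_root α).union
    (finite_setOf_aeval_eq_zero_of_polyHeight_le 2
      ⌈((2 * |α| + 2) / c) ^ (κ - (ω + 1))⁻¹⌉₊)).subset ?_
  rintro β ⟨P, hP, hdeg, hβ, hlt⟩
  by_cases hα : aeval α P = 0
  · exact Or.inl ⟨P, hP, hβ, hα⟩
  refine Or.inr ⟨P, hP.ne_zero, hdeg, ?_, hβ⟩
  have hheight : (1 : ℝ) ≤ polyHeight P := mod_cast polyHeight_pos hP.ne_zero
  have hclose : |α - β| ≤ 1 :=
    hlt.le.trans (Real.rpow_le_one_of_one_le_of_nonpos hheight (by linarith))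
  have hupp := abs_aeval_le_polyHeight_mul hdeg hβ hclose
  rw [aeval_eq_of_natDegree_le_two hdeg] at hα hupp
  have hsandwich := (hlow _ _ _ _ hheight (abs_coeff_le_polyHeight P 2)
    (abs_coeff_le_polyHeight P 1) hα).trans
      (hupp.trans (mul_le_mul_of_nonneg_right hlt.le (by positivity)))
  exact_mod_cast (le_rpow_of_mul_rpow_neg_le hc hκ (zero_lt_one.trans_le hheight)
    hsandwich).trans (Nat.le_ceil _)

end NonQuadraticity

theorem non_quadraticity_measure_alpha_9_general :
    ∀ κ : ℝ, κ > 12.322 →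
      {β : ℝ | ∃ P : Polynomial ℤ, Irreducible P ∧ P.natDegree ≤ 2 ∧
          Polynomial.aeval β P = 0 ∧
          |Real.sqrt 13 * Real.log ((Real.sqrt 13 - 1) / (Real.sqrt 13 + 1)) - β| <
            ((polyHeight P : ℕ) : ℝ) ^ (-κ)}.Finite := by
  intro κ hκ
  obtain ⟨c, hc, hlow⟩ := exists_mul_rpow_le_abs_quadratic_alpha
  exact finite_setOf_abs_sub_lt_rpow_polyHeight hc (by norm_num) hlow
    (lt_of_lt_of_le (by norm_num) hκ.le)

theorem non_quadraticity_measure_alpha_9 :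
    ∀ κ : ℝ, κ > 12.4085 →
      {β : ℝ | ∃ P : Polynomial ℤ, Irreducible P ∧ P.natDegree ≤ 2 ∧
          Polynomial.aeval β P = 0 ∧
          |Real.sqrt 13 * Real.log ((Real.sqrt 13 - 1) / (Real.sqrt 13 + 1)) - β| <
            ((polyHeight P : ℕ) : ℝ) ^ (-κ)}.Finite := by
  exact fun κ hκ ↦ non_quadraticity_measure_alpha_9_general κ (lt_trans (by norm_num) hκ)
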